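/- Let G be an abelian group, k a commutative G-ring, n a natural number, and δ ∈ k invertible. Then there is an isomorphism of graded k-modules Tor_*^{GTL_n(δ)}(𝟙,𝟙) ≅ Tor_*^{k[G^n]}(k,k) = H_*(G^n; k). -/

import Mathlib

open scoped TensorProduct

noncomputable section

/-! ### Bar-complex homology of an augmented algebra

For a `k`-algebra `A` with augmentation `ε : A →ₐ[k] k` (the algebra map corresponding to
the trivial module `𝟙 = k`), we form the (unnormalized) bar complex `C_q = A^{⊗ q}`
(tensors over `k`), with the usual differential
`d(a₁⊗…⊗a_q) = ε(a₁)(a₂⊗…) + Σ (-1)^i (…a_i a_{i+1}…) + (-1)^q ε(a_q)(a₁⊗…)`,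
whose homology is `Tor_*^A(𝟙,𝟙)`. -/

/-- The modules `A^{⊗ q}` of the bar complex. -/
def barC (k : Type) [CommRing k] (A : Type) [Ring A] [Algebra k A] : ℕ → ModuleCat k
  | 0 => ModuleCat.of k k
  | (q + 1) => ModuleCat.of k (A ⊗[k] (barC k A q))

variable (k : Type) [CommRing k] (A : Type) [Ring A] [Algebra k A] (ε : A →ₐ[k] k)

/-- Left multiplication of `A` on the leftmost bar factor (via `ε` in degree `0`). -/
def barAct : ∀ q : ℕ, A →ₗ[k] ((barC k A q : Type) →ₗ[k] (barC k A q : Type))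
  | 0 => (LinearMap.lsmul k k).comp ε.toLinearMap
  | (q + 1) =>
    show A →ₗ[k] ((A ⊗[k] (barC k A q : Type)) →ₗ[k] (A ⊗[k] (barC k A q : Type))) from
    { toFun := fun a => TensorProduct.map (LinearMap.mulLeft k a) LinearMap.id
      map_add' := by
        intro a b
        refine TensorProduct.ext' fun x y => ?_
        simp [add_mul, TensorProduct.add_tmul]
      map_smul' := by
        intro c a
        refine TensorProduct.ext' fun x y => ?_
        simp [TensorProduct.smul_tmul', smul_mul_assoc] }

/-- All terms of the bar differential except the first face. -/
def barB : ∀ q : ℕ, ((A ⊗[k] (barC k A q : Type)) →ₗ[k] (barC k A q : Type))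
  | 0 => - TensorProduct.lift ((LinearMap.lsmul k (barC k A 0 : Type)).comp ε.toLinearMap)
  | (q + 1) =>
    show (A ⊗[k] (A ⊗[k] (barC k A q : Type))) →ₗ[k] (A ⊗[k] (barC k A q : Type)) from
    TensorProduct.lift (LinearMap.mk₂ k
      (fun (a : A) (x : A ⊗[k] (barC k A q : Type)) =>
        -((show A →ₗ[k] ((A ⊗[k] (barC k A q : Type)) →ₗ[k] (A ⊗[k] (barC k A q : Type))) from
            barAct k A ε (q + 1)) a x) - a ⊗ₜ[k] (barB q x))
      (by intro a b x
          generalize (show A →ₗ[k] ((A ⊗[k] (barC k A q : Type)) →ₗ[k] (A ⊗[k] (barC k A q : Type))) from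
            barAct k A ε (q + 1)) = F
          simp only [map_add, LinearMap.add_apply, TensorProduct.add_tmul]
          try abel)
      (by intro c a x
          generalize (show A →ₗ[k] ((A ⊗[k] (barC k A q : Type)) →ₗ[k] (A ⊗[k] (barC k A q : Type))) from
            barAct k A ε (q + 1)) = F
          simp only [map_smul, LinearMap.smul_apply, smul_sub, smul_neg,
            TensorProduct.smul_tmul'])
      (by intro a x y
          simp only [map_add, LinearMap.map_add, TensorProduct.tmul_add]
          try abel)
      (by intro c a x
          simp only [map_smul, LinearMap.map_smul, TensorProduct.tmul_smul, smul_sub, smul_neg]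
          try abel))

/-- The bar differential `C_{q+1} = A ⊗ C_q → C_q`. -/
def bard (q : ℕ) : (A ⊗[k] (barC k A q : Type)) →ₗ[k] (barC k A q : Type) :=
  TensorProduct.lift ((LinearMap.lsmul k (barC k A q : Type)).comp ε.toLinearMap)
  + barB k A ε q

/-- Cycles of the bar complex. -/
def barCycles : ∀ q : ℕ, Submodule k (barC k A q : Type)
  | 0 => ⊤
  | (q + 1) =>
    show Submodule k (barC k A (q + 1) : Type) from LinearMap.ker (bard k A ε q)

/-- `Tor_q^A(𝟙, 𝟙)`, the homology of the algebra `A` with augmentation (trivial module) `ε`,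
computed by the bar complex. -/
def barTor (q : ℕ) : Type :=
  (barCycles k A ε q) ⧸
    (Submodule.comap (barCycles k A ε q).subtype (LinearMap.range (bard k A ε q)))

instance (q : ℕ) : AddCommGroup (barTor k A ε q) :=
  inferInstanceAs (AddCommGroup ((barCycles k A ε q) ⧸
    (Submodule.comap (barCycles k A ε q).subtype (LinearMap.range (bard k A ε q)))))

instance (q : ℕ) : Module k (barTor k A ε q) :=
  inferInstanceAs (Module k ((barCycles k A ε q) ⧸
    (Submodule.comap (barCycles k A ε q).subtype (LinearMap.range (bard k A ε q)))))

/-- The augmentation of a group algebra `k[G]`, corresponding to the trivial action of `G`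
on `k`. -/
def groupAug (G : Type) [Group G] : MonoidAlgebra k G →ₐ[k] k :=
  MonoidAlgebra.lift k k G 1

/-- Group homology `H_*(G; k) = Tor_*^{k[G]}(k, k)` (with the trivial action on `k`). -/
abbrev groupTor (G : Type) [Group G] (q : ℕ) : Type :=
  barTor k (MonoidAlgebra k G) (groupAug k G) q

section GTLsection

/-! The `G`-equivariant Temperley-Lieb algebra `GTL_n(δ)`: generators `e i` (planar
cap-cup hooks) and `t g j` (labels); a middle loop with total label `g` is deleted at
the cost of the factor `(ρ g) δ = g•δ ∈ k`. -/

inductive GTLGen (n : ℕ) (G : Type) : Type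
  | e : Fin (n - 1) → GTLGen n G
  | t : G → Fin n → GTLGen n G

variable (k G : Type) [CommRing k] [CommGroup G] (ρ : G →* RingAut k) (n : ℕ) (δ : k)

abbrev GTLe (i : Fin (n - 1)) : FreeAlgebra k (GTLGen n G) := FreeAlgebra.ι k (GTLGen.e i)
abbrev GTLt (g : G) (j : Fin n) : FreeAlgebra k (GTLGen n G) := FreeAlgebra.ι k (GTLGen.t g j)

/-- The diagrammatic relations. -/
inductive GTLRel : FreeAlgebra k (GTLGen n G) → FreeAlgebra k (GTLGen n G) → Prop
  | e_sq (i : Fin (n - 1)) :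
      GTLRel (GTLe k G n i * GTLe k G n i) (δ • GTLe k G n i)
  | e_hook (i j : Fin (n - 1)) (h : (j : ℕ) = (i : ℕ) + 1 ∨ (i : ℕ) = (j : ℕ) + 1) :
      GTLRel (GTLe k G n i * GTLe k G n j * GTLe k G n i) (GTLe k G n i)
  | ee_comm (i j : Fin (n - 1)) (h : (i : ℕ) + 1 < (j : ℕ)) :
      GTLRel (GTLe k G n i * GTLe k G n j) (GTLe k G n j * GTLe k G n i)
  | t_mul (g h' : G) (j : Fin n) :
      GTLRel (GTLt k G n g j * GTLt k G n h' j) (GTLt k G n (g * h') j)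
  | t_one (j : Fin n) :
      GTLRel (GTLt k G n 1 j) (1)
  | tt_comm (g h' : G) (j l : Fin n) (h : j ≠ l) :
      GTLRel (GTLt k G n g j * GTLt k G n h' l) (GTLt k G n h' l * GTLt k G n g j)
  | et_comm (g : G) (i : Fin (n - 1)) (l : Fin n) (h : (l : ℕ) ≠ (i : ℕ) ∧ (l : ℕ) ≠ (i : ℕ) + 1) :
      GTLRel (GTLe k G n i * GTLt k G n g l) (GTLt k G n g l * GTLe k G n i)
  | cap_slide_l (g : G) (i : Fin (n - 1)) (j j' : Fin n) (h : (j : ℕ) = (i : ℕ)) (h' : (j' : ℕ) = (i : ℕ) + 1) :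
      GTLRel (GTLt k G n g j * GTLe k G n i) (GTLt k G n g j' * GTLe k G n i)
  | cap_slide_r (g : G) (i : Fin (n - 1)) (j j' : Fin n) (h : (j : ℕ) = (i : ℕ)) (h' : (j' : ℕ) = (i : ℕ) + 1) :
      GTLRel (GTLe k G n i * GTLt k G n g j) (GTLe k G n i * GTLt k G n g j')
  | loop (g : G) (i : Fin (n - 1)) (j : Fin n) (h : (j : ℕ) = (i : ℕ)) :
      GTLRel (GTLe k G n i * GTLt k G n g j * GTLe k G n i) ((ρ g δ) • GTLe k G n i)

/-- The diagram algebra: the quotient of the free algebra on the diagram generators by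
the diagrammatic relations. -/
abbrev GTLAlg : Type := RingQuot (GTLRel k G ρ n δ)

/-- The augmentation corresponding to the trivial module `𝟙`: a diagram acts by `1`
if it has `n` left-to-right connections, and by `0` otherwise. -/
noncomputable def GTLaug : GTLAlg k G ρ n δ →ₐ[k] k :=
  RingQuot.liftAlgHom k ⟨FreeAlgebra.lift k
      (fun x => match x with
        | GTLGen.e _ => (0 : k)
        | GTLGen.t _ _ => (1 : k)),
    by rintro x y h
       induction h <;>
         simp [GTLe, GTLt, FreeAlgebra.lift_ι_apply]⟩

end GTLsection

/-!
Killing the hooks defines a surjection `π` from `GTL_n(δ)` onto `k[G^n]` which is compatible with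
the augmentations. Its kernel `I` is spanned by the diagrams which have a cup on the right joining
`m` to `m + 1` for some `m`.

*Change of rings.* Suppose that `A → B` is a surjection of augmented algebras with kernel `I`, that
both algebras are flat over `k`, and that `Tor^A(𝟙, I)` vanishes. Then `Tor^A(𝟙, N) → Tor^B(𝟙, N)`
is an isomorphism for every `k`-flat `B`-module `N`: this is clear in degree `0`, an induced module
`B ⊗ N` has no higher homology over either algebra, and `0 → K → B ⊗ N → N → 0` shifts dimensions.

*Acyclicity of `I`.* Let `e` be the hook at `m`. The left ideal of the diagrams with an unlabelled
right cup at `m` contains `δ⁻¹ e` and is fixed by right multiplication with it. So it is a retract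
of `A` which lies in the kernel of the augmentation, and its homology vanishes. Arbitrary labels
only contribute a direct sum over `G`. Now add the cups one `m` at a time, by Mayer–Vietoris. A
diagram with a right cup at `m` has none at `m - 1`, so the intersection of the ideals for the cups
below `m` and the cups at `m` is the one for the cups below `m - 1` and at `m`. Right multiplication
with `δ⁻¹ e` makes the part of it with unlabelled cups at `m` a retract of the ideal for the cups
below `m - 1`, which is acyclic by induction.

*Diagrams form a basis.* The algebra is given by generators and relations, so it has to be shown
that its action on diagrams is faithful. For this it suffices that two words which act in the same
way are proportional. A word without hooks is determined by its labels. Any other word can be moved,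
by hooks on the left and on the right, into the corner `e A e` for the hook `e` at `0`, and this
corner is a quotient of the algebra on `n - 2` points, where the claim holds by induction.
-/

/-! ### The bar complex -/

section BarComplex

open CategoryTheory TensorProduct

variable {k A} {A' : Type} [Ring A'] [Algebra k A'] {A'' : Type} [Ring A''] [Algebra k A'']
  {C C' V N N' N'' : Type} [AddCommGroup C] [Module k C] [AddCommGroup C'] [Module k C']
  [AddCommGroup V] [Module k V] [AddCommGroup N] [Module k N] [AddCommGroup N'] [Module k N']
  [AddCommGroup N''] [Module k N'']

variable (C) in
/-- The first face `a ⊗ x ↦ ε a • x` of the bar complex. -/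
def augContract : A ⊗[k] C →ₗ[k] C :=
  (TensorProduct.lid k C).toLinearMap ∘ₗ ε.toLinearMap.rTensor C

@[simp]
lemma augContract_tmul (a : A) (x : C) : augContract ε C (a ⊗ₜ x) = ε a • x := by
  simp [augContract]

lemma augContract_smul (a : A) (x : A ⊗[k] C) :
    augContract ε C (a • x) = ε a • augContract ε C x := by
  induction x with
  | zero => simp
  | tmul b y => simp [smul_tmul', mul_smul]
  | add x y hx hy => simp [hx, hy]

lemma augContract_map (π : A →ₐ[k] A') {ε : A →ₐ[k] k} {ε' : A' →ₐ[k] k} (hε : ε'.comp π = ε)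
    (f : C →ₗ[k] C') (x : A ⊗[k] C) :
    augContract ε' C' (TensorProduct.map π.toLinearMap f x) = f (augContract ε C x) := by
  subst hε
  induction x with
  | zero => simp
  | tmul a y => simp
  | add x y hx hy => simp only [map_add, hx, hy]

/-- Given the alternating sum `b` of the faces `1, …, q` on `A ⊗ C`, the alternating sum of the
faces `1, …, q + 1` on `A ⊗ (A ⊗ C)`; these are the faces that do not involve the augmentation. -/
def consFaces (b : A ⊗[k] C →ₗ[k] C) : A ⊗[k] (A ⊗[k] C) →ₗ[k] A ⊗[k] C :=
  TensorProduct.lift (Algebra.lsmul k k (A ⊗[k] C)).toLinearMap - b.lTensor A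

@[simp]
lemma consFaces_tmul (b : A ⊗[k] C →ₗ[k] C) (a : A) (x : A ⊗[k] C) :
    consFaces b (a ⊗ₜ x) = a • x - a ⊗ₜ b x := by
  simp [consFaces]

lemma consFaces_smul (b : A ⊗[k] C →ₗ[k] C) (a : A) (x : A ⊗[k] (A ⊗[k] C)) :
    consFaces b (a • x) = a • consFaces b x := by
  induction x with
  | zero => simp
  | tmul c y => simp [smul_tmul', mul_smul, smul_sub]
  | add x y hx hy => simp only [smul_add, map_add, hx, hy]

lemma smul_map_tensor (π : A →ₐ[k] A') (f : C →ₗ[k] C') (a : A) (x : A ⊗[k] C) :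
    TensorProduct.map π.toLinearMap f (a • x) = π a • TensorProduct.map π.toLinearMap f x := by
  induction x with
  | zero => simp
  | tmul c y => simp [smul_tmul']
  | add x y hx hy => simp only [smul_add, map_add, hx, hy]

lemma consFaces_map (π : A →ₐ[k] A') (f : C →ₗ[k] C') {b : A ⊗[k] C →ₗ[k] C}
    {b' : A' ⊗[k] C' →ₗ[k] C'}
    (h : ∀ x, b' (TensorProduct.map π.toLinearMap f x) = f (b x)) (x : A ⊗[k] (A ⊗[k] C)) :
    consFaces b' (TensorProduct.map π.toLinearMap (TensorProduct.map π.toLinearMap f) x) =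
      TensorProduct.map π.toLinearMap f (consFaces b x) := by
  induction x with
  | zero => simp
  | tmul a y => simp [h, smul_map_tensor]
  | add x y hx hy => simp only [map_add, hx, hy]

/-- The simplicial identities among the faces `1, …, q` of the bar complex. -/
def FacesAssoc (b : A ⊗[k] C →ₗ[k] C) : Prop :=
  ∀ (a : A) (x : A ⊗[k] C), b (a • x) = b (a ⊗ₜ b x)

namespace FacesAssoc

variable {b : A ⊗[k] C →ₗ[k] C} (hb : FacesAssoc b)

include hb

lemma apply_consFaces (x : A ⊗[k] (A ⊗[k] C)) : b (consFaces b x) = 0 := by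
  induction x with
  | zero => simp
  | tmul a y => rw [consFaces_tmul, map_sub, hb, sub_self]
  | add x y hx hy => rw [map_add, map_add, hx, hy, add_zero]

lemma consFaces : FacesAssoc (consFaces b) := fun a x => by
  rw [consFaces_smul, consFaces_tmul, hb.apply_consFaces, tmul_zero, sub_zero]

lemma sub_comp_sub :
    (augContract ε C - b) ∘ₗ (augContract ε (A ⊗[k] C) - _root_.consFaces b) = 0 := by
  refine TensorProduct.ext' fun a x => ?_
  have h := hb a x
  simp only [LinearMap.comp_apply, LinearMap.sub_apply, map_sub, augContract_tmul, consFaces_tmul,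
    map_smul, augContract_smul, LinearMap.zero_apply, h]
  module

end FacesAssoc

lemma facesAssoc_lift (r : A →ₐ[k] Module.End k N) :
    FacesAssoc (TensorProduct.lift r.toLinearMap) := fun a x => by
  induction x with
  | zero => simp
  | tmul b y => simp [smul_tmul']
  | add x y hx hy => simp only [smul_add, map_add, tmul_add, hx, hy]

variable (k A) in
/-- The terms `A^{⊗ q} ⊗ N` of the bar complex with coefficients in `N`. -/
def barObj (N : Type) [AddCommGroup N] [Module k N] : ℕ → ModuleCat k
  | 0 => ModuleCat.of k N
  | q + 1 => ModuleCat.of k (A ⊗[k] barObj N q)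

/-- The alternating sum of all faces but the first on `A^{⊗ (q + 1)} ⊗ N`, for an action
`r : A →ₐ[k] Module.End k N`. Actions are kept as algebra maps, rather than as instances, so that
restriction of scalars is composition. -/
def innerFaces (r : A →ₐ[k] Module.End k N) :
    ∀ q, A ⊗[k] barObj k A N q →ₗ[k] barObj k A N q
  | 0 => TensorProduct.lift r.toLinearMap
  | q + 1 => consFaces (innerFaces r q)

lemma facesAssoc_innerFaces (r : A →ₐ[k] Module.End k N) : ∀ q, FacesAssoc (innerFaces r q)
  | 0 => facesAssoc_lift r
  | q + 1 => (facesAssoc_innerFaces r q).consFaces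

/-- The differential of the bar complex with coefficients in `N`. -/
def barDiff (r : A →ₐ[k] Module.End k N) (q : ℕ) :
    A ⊗[k] barObj k A N q →ₗ[k] barObj k A N q :=
  augContract ε _ - innerFaces r q

/-- The bar complex `… → A ⊗ A ⊗ N → A ⊗ N → N`, computing `Tor^A(k, N)` when `A` and `N` are flat
over `k`. -/
def barComplex (r : A →ₐ[k] Module.End k N) : ChainComplex (ModuleCat k) ℕ :=
  ChainComplex.of (barObj k A N) (fun q => ModuleCat.ofHom (barDiff ε r q)) fun q =>
    ModuleCat.hom_ext ((facesAssoc_innerFaces r q).sub_comp_sub ε)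

lemma barComplex_d (r : A →ₐ[k] Module.End k N) (q : ℕ) :
    (barComplex ε r).d (q + 1) q = ModuleCat.ofHom (barDiff ε r q) :=
  ChainComplex.of_d (barObj k A N) (fun q => ModuleCat.ofHom (barDiff ε r q)) q

/-- The map `A^{⊗ q} ⊗ N → A'^{⊗ q} ⊗ N'` induced by `π : A → A'` and `f : N → N'`. -/
def barObjMap (π : A →ₐ[k] A') (f : N →ₗ[k] N') : ∀ q, barObj k A N q →ₗ[k] barObj k A' N' q
  | 0 => f
  | q + 1 => TensorProduct.map π.toLinearMap (barObjMap π f q)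

lemma barObjMap_id : ∀ q, barObjMap (AlgHom.id k A) (LinearMap.id : N →ₗ[k] N) q = LinearMap.id
  | 0 => rfl
  | q + 1 => congr(TensorProduct.map LinearMap.id $(barObjMap_id q)).trans TensorProduct.map_id

lemma barObjMap_comp (π' : A' →ₐ[k] A'') (π : A →ₐ[k] A') (g : N' →ₗ[k] N'') (f : N →ₗ[k] N') :
    ∀ q, barObjMap π' g q ∘ₗ barObjMap π f q = barObjMap (π'.comp π) (g ∘ₗ f) q
  | 0 => rfl
  | q + 1 => (TensorProduct.map_comp _ _ _ _).symm.trans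
      congr(TensorProduct.map _ $(barObjMap_comp π' π g f q))

section Functoriality

variable {ε} {ε' : A' →ₐ[k] k} {r : A →ₐ[k] Module.End k N} {r' : A' →ₐ[k] Module.End k N'}
  {π : A →ₐ[k] A'} {f : N →ₗ[k] N'}

lemma lift_map_of_equivariant (hf : ∀ a x, f (r a x) = r' (π a) (f x)) (x : A ⊗[k] N) :
    TensorProduct.lift r'.toLinearMap (TensorProduct.map π.toLinearMap f x) =
      f (TensorProduct.lift r.toLinearMap x) := by
  induction x with
  | zero => simp
  | tmul a y => simp [hf]
  | add x y hx hy => simp only [map_add, hx, hy]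

lemma innerFaces_map (hf : ∀ a x, f (r a x) = r' (π a) (f x)) :
    ∀ q x, innerFaces r' q (TensorProduct.map π.toLinearMap (barObjMap π f q) x) =
      barObjMap π f q (innerFaces r q x)
  | 0, x => lift_map_of_equivariant hf x
  | q + 1, x => consFaces_map π (barObjMap π f q) (innerFaces_map hf q) x

lemma barDiff_map (hε : ε'.comp π = ε) (hf : ∀ a x, f (r a x) = r' (π a) (f x)) (q : ℕ)
    (x : A ⊗[k] barObj k A N q) :
    barDiff ε' r' q (TensorProduct.map π.toLinearMap (barObjMap π f q) x) =
      barObjMap π f q (barDiff ε r q x) := by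
  simp only [barDiff, LinearMap.sub_apply, map_sub, augContract_map π hε, innerFaces_map hf]

/-- The map of bar complexes induced by `π : A → A'` and a `π`-equivariant map `f : N → N'`. -/
def barMap (hε : ε'.comp π = ε) (hf : ∀ a x, f (r a x) = r' (π a) (f x)) :
    barComplex ε r ⟶ barComplex ε' r' :=
  ChainComplex.ofHom (fun q => ModuleCat.ofHom (barObjMap π f q)) fun q => by
    rw [barComplex_d, barComplex_d]
    exact ModuleCat.hom_ext (LinearMap.ext (barDiff_map hε hf q))

lemma barMap_id : barMap (ε' := ε) (π := AlgHom.id k A) (f := LinearMap.id) (r := r) (r' := r)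
    rfl (fun _ _ => rfl) = 𝟙 _ :=
  HomologicalComplex.Hom.ext (funext fun q => ModuleCat.hom_ext (barObjMap_id q))

lemma barMap_comp {ε'' : A'' →ₐ[k] k} {r'' : A'' →ₐ[k] Module.End k N''} {π' : A' →ₐ[k] A''}
    {g : N' →ₗ[k] N''} (hε : ε'.comp π = ε) (hf : ∀ a x, f (r a x) = r' (π a) (f x))
    (hε' : ε''.comp π' = ε') (hg : ∀ a x, g (r' a x) = r'' (π' a) (g x)) :
    barMap hε hf ≫ barMap hε' hg = barMap (π := π'.comp π) (f := g ∘ₗ f)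
      (by rw [← AlgHom.comp_assoc, hε', hε]) (fun a x => by simp [hf, hg]) :=
  HomologicalComplex.Hom.ext (funext fun q => ModuleCat.hom_ext (barObjMap_comp π' π g f q))

end Functoriality

section Exactness

variable {ε} {r : A →ₐ[k] Module.End k N}

lemma exactAt_barComplex_zero_iff :
    (barComplex ε r).ExactAt 0 ↔
      ∀ x : N, ∃ y, augContract ε N y - TensorProduct.lift r.toLinearMap y = x := by
  rw [HomologicalComplex.exactAt_iff' _ 1 0 0 (by simp) (by simp),
    ShortComplex.moduleCat_exact_iff]
  change (∀ x, (barComplex ε r).d 0 0 x = 0 → ∃ y, (barComplex ε r).d 1 0 y = x) ↔ _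
  rw [HomologicalComplex.shape _ _ _ (by simp), barComplex_d]
  exact forall_congr' fun x => forall_prop_of_true rfl

lemma exactAt_barComplex_succ_iff {q : ℕ} :
    (barComplex ε r).ExactAt (q + 1) ↔ ∀ x : A ⊗[k] barObj k A N q, barDiff ε r q x = 0 →
      ∃ y, (augContract ε (A ⊗[k] barObj k A N q) - consFaces (innerFaces r q)) y = x := by
  rw [HomologicalComplex.exactAt_iff' _ (q + 2) (q + 1) q (by simp) (by simp),
    ShortComplex.moduleCat_exact_iff]
  change (∀ x, (barComplex ε r).d (q + 1) q x = 0 →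
    ∃ y, (barComplex ε r).d (q + 1 + 1) (q + 1) y = x) ↔ _
  rw [barComplex_d, barComplex_d]
  rfl

end Exactness

section Induced

variable (A V) in
/-- The contracting homotopy `a₁ ⊗ ⋯ ⊗ a_q ⊗ (a ⊗ v) ↦ a₁ ⊗ ⋯ ⊗ a_q ⊗ a ⊗ (1 ⊗ v)` of the bar
complex of the induced module `A ⊗ V`. -/
def inducedHomotopy : ∀ q, barObj k A (A ⊗[k] V) q →ₗ[k] A ⊗[k] barObj k A (A ⊗[k] V) q
  | 0 => (TensorProduct.mk k A V 1).lTensor A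
  | q + 1 => (inducedHomotopy q).lTensor A

lemma lift_lsmul_lTensor_mk_one (x : A ⊗[k] V) :
    TensorProduct.lift (Algebra.lsmul k k (A ⊗[k] V)).toLinearMap
      ((TensorProduct.mk k A V 1).lTensor A x) = x := by
  induction x with
  | zero => simp
  | tmul a v => simp [smul_tmul']
  | add x y hx hy => simp only [map_add, hx, hy]

lemma smul_lTensor (f : C →ₗ[k] C') (a : A) (x : A ⊗[k] C) :
    f.lTensor A (a • x) = a • f.lTensor A x :=
  smul_map_tensor (AlgHom.id k A) f a x

lemma consFaces_lTensor {b : A ⊗[k] C →ₗ[k] C} {s : C →ₗ[k] A ⊗[k] C} {c : k}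
    (h : ∀ x, consFaces b (s.lTensor A x) = s (b x) - c • x) (x : A ⊗[k] (A ⊗[k] C)) :
    consFaces (consFaces b) ((s.lTensor A).lTensor A x) =
      s.lTensor A (consFaces b x) - (-c) • x := by
  induction x with
  | zero => simp
  | tmul a y =>
    simp only [LinearMap.lTensor_tmul, consFaces_tmul, h, tmul_sub, map_sub, smul_lTensor,
      tmul_smul]
    rw [neg_smul c (a ⊗ₜ[k] y)]
    abel
  | add x y hx hy => simp only [map_add, hx, hy, smul_add]; abel

lemma consFaces_lTensor_mk_one (x : A ⊗[k] (A ⊗[k] V)) :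
    consFaces (TensorProduct.lift (Algebra.lsmul k k (A ⊗[k] V)).toLinearMap)
        (((TensorProduct.mk k A V 1).lTensor A).lTensor A x) =
      (TensorProduct.mk k A V 1).lTensor A
        (TensorProduct.lift (Algebra.lsmul k k (A ⊗[k] V)).toLinearMap x) - x := by
  induction x with
  | zero => simp
  | tmul a y =>
    rw [LinearMap.lTensor_tmul, consFaces_tmul, lift_lsmul_lTensor_mk_one, lift.tmul,
      ← smul_lTensor]
    rfl
  | add x y hx hy => simp only [map_add, hx, hy]; abel

lemma consFaces_inducedHomotopy : ∀ (q : ℕ) (x : A ⊗[k] barObj k A (A ⊗[k] V) q),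
    consFaces (innerFaces (Algebra.lsmul k k (A ⊗[k] V)) q)
        ((inducedHomotopy A V q).lTensor A x) =
      inducedHomotopy A V q (innerFaces (Algebra.lsmul k k (A ⊗[k] V)) q x) - (-1 : k) ^ q • x
  | 0, x => (consFaces_lTensor_mk_one x).trans (by rw [pow_zero, one_smul]; rfl)
  | q + 1, x => by
    rw [pow_succ, mul_neg_one]
    exact consFaces_lTensor (consFaces_inducedHomotopy q) x

lemma exactAt_barComplex_induced (q : ℕ) :
    (barComplex ε (Algebra.lsmul k k (A ⊗[k] V))).ExactAt (q + 1) := by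
  refine exactAt_barComplex_succ_iff.2 fun x hx =>
    ⟨(-1 : k) ^ q • (inducedHomotopy A V q).lTensor A x, ?_⟩
  have h₁ := consFaces_inducedHomotopy q x
  have h₂ := augContract_map (AlgHom.id k A) (ε := ε) (ε' := ε) rfl (inducedHomotopy A V q) x
  rw [barDiff, LinearMap.sub_apply, sub_eq_zero] at hx
  rw [hx] at h₂
  rw [map_smul, LinearMap.sub_apply, h₁, LinearMap.lTensor_def]
  refine congr((-1 : k) ^ q • ($h₂ - _)).trans ?_
  rw [sub_sub_cancel, smul_smul, ← mul_pow]
  simp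

variable {ε}

lemma exactAt_barComplex_of_retract {r : A →ₐ[k] Module.End k N} {r' : A →ₐ[k] Module.End k N'}
    {i : N →ₗ[k] N'} {p : N' →ₗ[k] N} (hi : ∀ a x, i (r a x) = r' a (i x))
    (hp : ∀ a x, p (r' a x) = r a (p x)) (hpi : p ∘ₗ i = LinearMap.id) {q : ℕ}
    (h : (barComplex ε r').ExactAt q) : (barComplex ε r).ExactAt q := by
  let ι : barComplex ε r ⟶ barComplex ε r' := barMap (π := AlgHom.id k A) rfl hi
  let ϖ : barComplex ε r' ⟶ barComplex ε r := barMap (π := AlgHom.id k A) rfl hp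
  have hι : ι ≫ ϖ = 𝟙 _ := by
    refine (barMap_comp _ _ _ _).trans (Eq.trans ?_ barMap_id)
    simp only [hpi, AlgHom.comp_id]
  rw [HomologicalComplex.exactAt_iff_isZero_homology] at h ⊢
  have hfac : HomologicalComplex.homologyMap ι q ≫ HomologicalComplex.homologyMap ϖ q = 𝟙 _ := by
    rw [← HomologicalComplex.homologyMap_comp, hι, HomologicalComplex.homologyMap_id]
  have := mono_of_mono_fac hfac
  exact h.of_mono (HomologicalComplex.homologyMap ι q)

/-- The condition `hε` says that `i` lands in the kernel of the augmentation, so that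
`k ⊗_A N = 0`. -/
lemma barComplex_acyclic_of_retract_induced {r : A →ₐ[k] Module.End k N}
    {i : N →ₗ[k] A ⊗[k] V} {p : A ⊗[k] V →ₗ[k] N} (hi : ∀ a x, i (r a x) = a • i x)
    (hp : ∀ a x, p (a • x) = r a (p x)) (hpi : p ∘ₗ i = LinearMap.id)
    (hε : augContract ε V ∘ₗ i = 0) : (barComplex ε r).Acyclic
  | q + 1 => exactAt_barComplex_of_retract (r' := Algebra.lsmul k k (A ⊗[k] V)) hi hp hpi
      (exactAt_barComplex_induced ε q)
  | 0 => exactAt_barComplex_zero_iff.2 fun x => by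
    let y := (TensorProduct.mk k A V 1).lTensor A (i x)
    have haug : augContract ε (A ⊗[k] V) y = 0 :=
      (augContract_map (AlgHom.id k A) (ε := ε) rfl _ (i x)).trans (by
        rw [show augContract ε V (i x) = 0 from congr($hε x), map_zero])
    have hy : augContract ε N (p.lTensor A y) - TensorProduct.lift r.toLinearMap (p.lTensor A y) =
        p (augContract ε _ y - TensorProduct.lift (Algebra.lsmul k k _).toLinearMap y) := by
      rw [map_sub]
      exact congr($(augContract_map (AlgHom.id k A) rfl p y) -
        $(lift_map_of_equivariant (r := Algebra.lsmul k k _) (π := AlgHom.id k A) hp y))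
    refine ⟨-p.lTensor A y, ?_⟩
    rw [map_neg, map_neg, neg_sub_neg, ← neg_sub, hy, haug, lift_lsmul_lTensor_mk_one, zero_sub,
      map_neg, neg_neg]
    exact congr($hpi x)

end Induced

end BarComplex

section LongExactSequence

open CategoryTheory

variable {k A ε} {A' N N' N'' : Type} [Ring A'] [Algebra k A'] [AddCommGroup N] [Module k N]
  [AddCommGroup N'] [Module k N'] [AddCommGroup N''] [Module k N'']

lemma barObjMap_surjective {π : A →ₐ[k] A'} (hπ : Function.Surjective π) {f : N →ₗ[k] N'}
    (hf : Function.Surjective f) : ∀ q, Function.Surjective (barObjMap π f q)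
  | 0 => hf
  | q + 1 => TensorProduct.map_surjective hπ (barObjMap_surjective hπ hf q)

lemma barObjMap_injective [Module.Flat k A] {f : N →ₗ[k] N'} (hf : Function.Injective f) :
    ∀ q, Function.Injective (barObjMap (AlgHom.id k A) f q)
  | 0 => hf
  | q + 1 => Module.Flat.lTensor_preserves_injective_linearMap _ (barObjMap_injective hf q)

lemma barObjMap_exact {f : N →ₗ[k] N'} {g : N' →ₗ[k] N''} (hfg : Function.Exact f g)
    (hg : Function.Surjective g) :
    ∀ q, Function.Exact (barObjMap (AlgHom.id k A) f q) (barObjMap (AlgHom.id k A) g q)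
  | 0 => hfg
  | q + 1 => lTensor_exact A (barObjMap_exact hfg hg q)
      (barObjMap_surjective (π := AlgHom.id k A) Function.surjective_id hg q)

variable {r : A →ₐ[k] Module.End k N} {r' : A →ₐ[k] Module.End k N'}
  {r'' : A →ₐ[k] Module.End k N''} {f : N →ₗ[k] N'} {g : N' →ₗ[k] N''}

/-- A short exact sequence `N → N' → N''` of actions gives a sequence of bar complexes. -/
abbrev barShortComplex (ε : A →ₐ[k] k) (hf : ∀ a x, f (r a x) = r' a (f x))
    (hg : ∀ a x, g (r' a x) = r'' a (g x)) (hfg : Function.Exact f g)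
    (hs : Function.Surjective g) : ShortComplex (ChainComplex (ModuleCat k) ℕ) where
  f := barMap (ε := ε) (ε' := ε) (π := AlgHom.id k A) rfl hf
  g := barMap (π := AlgHom.id k A) rfl hg
  zero := HomologicalComplex.Hom.ext <| funext fun q => ModuleCat.hom_ext
    (barObjMap_exact (A := A) hfg hs q).linearMap_comp_eq_zero

lemma barShortComplex_shortExact [Module.Flat k A] (ε : A →ₐ[k] k)
    (hf : ∀ a x, f (r a x) = r' a (f x)) (hg : ∀ a x, g (r' a x) = r'' a (g x))
    (hi : Function.Injective f) (hfg : Function.Exact f g) (hs : Function.Surjective g) :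
    (barShortComplex ε hf hg hfg hs).ShortExact :=
  HomologicalComplex.shortExact_of_degreewise_shortExact _ fun q =>
    ModuleCat.shortComplex_shortExact _ (barObjMap_exact hfg hs q) (barObjMap_injective hi q)
      (barObjMap_surjective (π := AlgHom.id k A) Function.surjective_id hs q)

lemma barComplex_acyclic_of_shortExact [Module.Flat k A] (hf : ∀ a x, f (r a x) = r' a (f x))
    (hg : ∀ a x, g (r' a x) = r'' a (g x)) (hi : Function.Injective f)
    (hfg : Function.Exact f g) (hs : Function.Surjective g) (h : (barComplex ε r).Acyclic)
    (h' : (barComplex ε r').Acyclic) : (barComplex ε r'').Acyclic := by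
  have : QuasiIso (barShortComplex ε hf hg hfg hs).f := by
    rw [quasiIso_iff]
    exact fun q => (quasiIsoAt_iff_exactAt _ q (h q)).2 (h' q)
  exact (barShortComplex_shortExact ε hf hg hi hfg hs).acyclic_X₃ this

end LongExactSequence

section LeftIdeals

variable {k A ε} {M : Type} [AddCommGroup M] [Module k M] [Module A M] [IsScalarTower k A M]

/-- The vanishing of `Tor^A(𝟙, M)`, computed by the bar complex with coefficients in `M`. -/
abbrev TorAcyclic (ε : A →ₐ[k] k) (M : Type) [AddCommGroup M] [Module k M] [Module A M]
    [IsScalarTower k A M] : Prop :=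
  (barComplex ε (Algebra.lsmul k k M)).Acyclic

lemma TorAcyclic.prod {M' : Type} [AddCommGroup M'] [Module k M'] [Module A M']
    [IsScalarTower k A M'] [Module.Flat k A] (h : TorAcyclic ε M) (h' : TorAcyclic ε M') :
    TorAcyclic ε (M × M') :=
  (barShortComplex_shortExact ε (r := Algebra.lsmul k k M) (r' := Algebra.lsmul k k (M × M'))
    (r'' := Algebra.lsmul k k M') (f := LinearMap.inl k M M') (g := LinearMap.snd k M M')
    (fun a _ => Prod.ext rfl (smul_zero a).symm) (fun _ _ => rfl) LinearMap.inl_injective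
    Function.Exact.inl_snd Prod.snd_surjective).acyclic_X₂ h h'

lemma TorAcyclic.sup [Module.Flat k A] {I J : Submodule A M} (hI : TorAcyclic ε I)
    (hJ : TorAcyclic ε J) (h : TorAcyclic ε ↥(I ⊓ J)) : TorAcyclic ε ↥(I ⊔ J) := by
  let f : ↥(I ⊓ J) →ₗ[A] I × J := (Submodule.inclusion inf_le_left).prod
    (Submodule.inclusion inf_le_right)
  let g : I × J →ₗ[A] ↥(I ⊔ J) := (Submodule.inclusion le_sup_left).coprod
    (-Submodule.inclusion le_sup_right)
  refine barComplex_acyclic_of_shortExact (r := Algebra.lsmul k k ↥(I ⊓ J))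
    (r' := Algebra.lsmul k k (I × J)) (f := f.restrictScalars k) (g := g.restrictScalars k)
    f.map_smul g.map_smul (fun _ _ hxy => Subtype.ext congr(($hxy).1.1)) ?_ ?_ h
    (hI.prod hJ)
  · rintro ⟨x, y⟩
    have hg : g (x, y) = 0 ↔ (x : M) = y := by
      rw [← Subtype.coe_inj]
      simp [g, ← sub_eq_add_neg, sub_eq_zero]
    refine hg.trans ⟨fun hxy => ⟨⟨x, x.2, hxy ▸ y.2⟩, Prod.ext rfl (Subtype.ext hxy)⟩, ?_⟩
    rintro ⟨z, hz⟩
    exact congr(($hz).1.1).symm.trans congr(($hz).2.1)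
  · rintro ⟨z, hz⟩
    obtain ⟨x, hx, y, hy, rfl⟩ := Submodule.mem_sup.1 hz
    exact ⟨(⟨x, hx⟩, -⟨y, hy⟩), Subtype.ext (by simp [g])⟩

lemma TorAcyclic.of_mul_right {I J : Ideal A} {b : A} (hJI : J ≤ I)
    (hIb : ∀ x ∈ I, x * b ∈ J) (hJb : ∀ x ∈ J, x * b = x)
    (h : TorAcyclic ε I) : TorAcyclic ε J := fun q =>
  let p : I →ₗ[A] J := (LinearMap.toSpanSingleton A A b).restrict hIb
  exactAt_barComplex_of_retract (i := (Submodule.inclusion hJI).restrictScalars k)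
    (p := p.restrictScalars k) (fun _ _ => rfl) p.map_smul
    (LinearMap.ext fun x => Subtype.ext (hJb x x.2)) (h q)

lemma TorAcyclic.of_right_unit {J : Ideal A} {b : A} (hb : b ∈ J)
    (hJb : ∀ x ∈ J, x * b = x) (hε : ε b = 0) :
    TorAcyclic ε J := by
  let p : A →ₗ[A] J := LinearMap.toSpanSingleton A J ⟨b, hb⟩
  refine barComplex_acyclic_of_retract_induced
    (i := (TensorProduct.mk k A k).flip 1 ∘ₗ J.subtype.restrictScalars k)
    (p := p.restrictScalars k ∘ₗ (TensorProduct.rid k A).toLinearMap) (fun a x => rfl)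
    (fun a x => ?_) (LinearMap.ext fun x => Subtype.ext ?_) (LinearMap.ext fun x => ?_)
  · induction x with
    | zero => simp
    | tmul c v =>
      have h : p (a * c) = a • p c := p.map_smul a c
      simp [TensorProduct.smul_tmul', h]
    | add x y hx hy => simp only [smul_add, map_add, hx, hy]
  · simpa [p] using hJb x x.2
  · change augContract ε k ((x : A) ⊗ₜ (1 : k)) = 0
    rw [augContract_tmul, ← hJb x x.2, map_mul, hε, mul_zero, zero_smul]

end LeftIdeals

section FlatBaseChange

open CategoryTheory TensorProduct

variable {k A ε} {C C' N : Type} (V : Type) [AddCommGroup C] [Module k C] [AddCommGroup C']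
  [Module k C'] [AddCommGroup V] [Module k V] [AddCommGroup N] [Module k N]

variable (A) in
/-- The map `(A ⊗ C) ⊗ V → A ⊗ C'` induced by `θ : C ⊗ V → C'`. -/
def assocExtend (θ : C ⊗[k] V →ₗ[k] C') : (A ⊗[k] C) ⊗[k] V →ₗ[k] A ⊗[k] C' :=
  θ.lTensor A ∘ₗ (TensorProduct.assoc k A C V).toLinearMap

variable {V}

@[simp]
lemma assocExtend_tmul (θ : C ⊗[k] V →ₗ[k] C') (a : A) (x : C) (v : V) :
    assocExtend A V θ ((a ⊗ₜ x) ⊗ₜ v) = a ⊗ₜ θ (x ⊗ₜ v) := rfl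

lemma assocExtend_smul_tmul (θ : C ⊗[k] V →ₗ[k] C') (a : A) (x : A ⊗[k] C) (v : V) :
    assocExtend A V θ ((a • x) ⊗ₜ v) = a • assocExtend A V θ (x ⊗ₜ v) := by
  induction x with
  | zero => simp
  | tmul b y => simp [smul_tmul']
  | add x y hx hy => simp only [smul_add, add_tmul, map_add, hx, hy]

lemma augContract_assocExtend (θ : C ⊗[k] V →ₗ[k] C') :
    augContract ε C' ∘ₗ assocExtend A V θ = θ ∘ₗ (augContract ε C).rTensor V :=
  TensorProduct.ext_threefold fun a x v => by simp [← smul_tmul']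

lemma consFaces_assocExtend {b : A ⊗[k] C →ₗ[k] C} {b' : A ⊗[k] C' →ₗ[k] C'}
    {θ : C ⊗[k] V →ₗ[k] C'} (h : b' ∘ₗ assocExtend A V θ = θ ∘ₗ b.rTensor V) :
    consFaces b' ∘ₗ assocExtend A V (assocExtend A V θ) =
      assocExtend A V θ ∘ₗ (consFaces b).rTensor V :=
  TensorProduct.ext_threefold fun a x v => by
    have hx : b' (assocExtend A V θ (x ⊗ₜ v)) = θ (b x ⊗ₜ v) := congr($h (x ⊗ₜ v))
    simp [hx, sub_tmul, assocExtend_smul_tmul]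

variable (A N V) in
/-- The identification `(A^{⊗ q} ⊗ N) ⊗ V ≃ A^{⊗ q} ⊗ (N ⊗ V)`. -/
def barObjTensor : ∀ q, (barObj k A N q ⊗[k] V) ≃ₗ[k] barObj k A (N ⊗[k] V) q
  | 0 => LinearEquiv.refl k _
  | q + 1 => TensorProduct.assoc k A (barObj k A N q) V ≪≫ₗ (barObjTensor q).lTensor A

variable (V) in
/-- The action on `N ⊗ V` through the first factor. -/
abbrev tensorAction (r : A →ₐ[k] Module.End k N) : A →ₐ[k] Module.End k (N ⊗[k] V) :=
  (Module.End.rTensorAlgHom k N V).comp r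

lemma innerFaces_tensorAction (r : A →ₐ[k] Module.End k N) :
    ∀ q, innerFaces (tensorAction V r) q ∘ₗ assocExtend A V (barObjTensor A N V q).toLinearMap =
      (barObjTensor A N V q).toLinearMap ∘ₗ (innerFaces r q).rTensor V
  | 0 => TensorProduct.ext_threefold fun _ _ _ => rfl
  | q + 1 => consFaces_assocExtend (innerFaces_tensorAction r q)

lemma barDiff_tensorAction (r : A →ₐ[k] Module.End k N) (q : ℕ) :
    barDiff ε (tensorAction V r) q ∘ₗ assocExtend A V (barObjTensor A N V q).toLinearMap =
      (barObjTensor A N V q).toLinearMap ∘ₗ (barDiff ε r q).rTensor V := by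
  rw [barDiff, LinearMap.sub_comp, augContract_assocExtend, innerFaces_tensorAction, barDiff,
    LinearMap.rTensor_sub, LinearMap.comp_sub]

variable {r : A →ₐ[k] Module.End k N}

lemma exactAt_barComplex_tensorAction_succ [Module.Flat k V] {q : ℕ}
    (h : (barComplex ε r).ExactAt (q + 1)) :
    (barComplex ε (tensorAction V r)).ExactAt (q + 1) := by
  have hr : Function.Exact (augContract ε (A ⊗[k] barObj k A N q) - consFaces (innerFaces r q))
      (barDiff ε r q) := fun x => ⟨exactAt_barComplex_succ_iff.1 h x, by
    rintro ⟨y, rfl⟩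
    exact congr($((facesAssoc_innerFaces r q).sub_comp_sub ε) y)⟩
  refine exactAt_barComplex_succ_iff.2 fun x => ((Function.Exact.of_ladder_linearEquiv_of_exact
    (e₁ := barObjTensor A N V (q + 2)) (e₂ := barObjTensor A N V (q + 1))
    (e₃ := barObjTensor A N V q) ?_ ?_ (Module.Flat.rTensor_exact V hr)) x).1
  · exact barDiff_tensorAction r (q + 1)
  · exact barDiff_tensorAction r q

lemma barComplex_acyclic_tensorAction [Module.Flat k V] (h : (barComplex ε r).Acyclic) :
    (barComplex ε (tensorAction V r)).Acyclic
  | q + 1 => exactAt_barComplex_tensorAction_succ (h (q + 1))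
  | 0 => exactAt_barComplex_zero_iff.2 fun x => by
    have hr : Function.Surjective (barDiff ε r 0) := exactAt_barComplex_zero_iff.1 (h 0)
    obtain ⟨y, hy⟩ := LinearMap.rTensor_surjective V hr x
    exact ⟨_, congr($(barDiff_tensorAction r 0) y).trans hy⟩

end FlatBaseChange
section DirectSums

variable {k A ε} {N N' : Type} [AddCommGroup N] [Module k N] [Module A N] [IsScalarTower k A N]
  [AddCommGroup N'] [Module k N'] [Module A N'] [IsScalarTower k A N']

lemma tensorAction_lsmul_apply {V : Type} [AddCommGroup V] [Module k V] (a : A) (x : N ⊗[k] V) :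
    tensorAction V (Algebra.lsmul k k N) a x = a • x := by
  induction x with
  | zero => rw [map_zero, smul_zero]
  | tmul => rfl
  | add x y hx hy => rw [map_add, hx, hy, smul_add]

lemma TorAcyclic.of_tensorEquiv {V : Type} [AddCommGroup V] [Module k V]
    [Module.Flat k V] (f : N ⊗[k] V ≃ₗ[A] N') (h : TorAcyclic ε N) : TorAcyclic ε N' :=
  fun q => exactAt_barComplex_of_retract (i := (f.symm.restrictScalars k).toLinearMap)
    (p := (f.restrictScalars k).toLinearMap)
    (fun a x => (f.symm.map_smul a x).trans (tensorAction_lsmul_apply a _).symm)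
    (fun a x => congr(f $(tensorAction_lsmul_apply a x)).trans (f.map_smul a x))
    (LinearMap.ext f.apply_symm_apply) (barComplex_acyclic_tensorAction h q)

open scoped Classical in
lemma TorAcyclic.of_finsuppEquiv {ι : Type} (e : (ι →₀ N) ≃ₗ[A] N') (h : TorAcyclic ε N) :
    TorAcyclic ε N' :=
  .of_tensorEquiv (TensorProduct.finsuppScalarRight k A N ι ≪≫ₗ e) h

end DirectSums

/-! ### Change of rings -/

section Comparison

open CategoryTheory HomologicalComplex TensorProduct

variable {k A} {B N : Type} [Ring B] [Algebra k B] [AddCommGroup N] [Module k N]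

lemma isIso_homologyMap_of_exactAt {K L : ChainComplex (ModuleCat k) ℕ} (φ : K ⟶ L) {q : ℕ}
    (hK : K.ExactAt q) (hL : L.ExactAt q) : IsIso (homologyMap φ q) :=
  (quasiIsoAt_iff_isIso_homologyMap φ q).1 ((quasiIsoAt_iff_exactAt φ q hK).2 hL)

section InducedModule

variable [Module B N] [IsScalarTower k B N]

variable (k B N) in
/-- The action map `B ⊗ N → N`; its kernel is the syzygy in the dimension shifting argument. -/
def actionMap : B ⊗[k] N →ₗ[B] N :=
  AlgebraTensorModule.lift (LinearMap.toSpanSingleton B (N →ₗ[k] N) LinearMap.id)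

@[simp]
lemma actionMap_tmul (b : B) (x : N) : actionMap k B N (b ⊗ₜ x) = b • x := rfl

lemma actionMap_surjective : Function.Surjective (actionMap k B N) :=
  fun x => ⟨1 ⊗ₜ x, one_smul B x⟩

lemma flat_ker_actionMap [Module.Flat k B] [Module.Flat k N] :
    Module.Flat k (LinearMap.ker (actionMap k B N)) := by
  let μ : B ⊗[k] N →ₗ[k] N := (actionMap k B N).restrictScalars k
  let p : B ⊗[k] N →ₗ[k] LinearMap.ker μ :=
    (LinearMap.id - TensorProduct.mk k B N 1 ∘ₗ μ).codRestrict _ fun x => by simp [μ]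
  have hp : p ∘ₗ (LinearMap.ker μ).subtype = LinearMap.id :=
    LinearMap.ext fun x => Subtype.ext <| by
      change (x : B ⊗[k] N) - (1 : B) ⊗ₜ[k] μ x = x
      rw [show μ x = 0 from x.2, tmul_zero, sub_zero]
  exact Module.Flat.of_retract (LinearMap.ker μ).subtype p hp

end InducedModule

variable {ε} {ε' : B →ₐ[k] k} {π : A →ₐ[k] B}

lemma exactAt_barComplex_comp_induced [Module.Flat k A] [Module.Flat k N]
    (hπ : Function.Surjective π)
    (hI : TorAcyclic ε (RingHom.ker π)) (q : ℕ) :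
    (barComplex ε ((Algebra.lsmul k k (B ⊗[k] N)).comp π)).ExactAt (q + 1) := by
  let i : RingHom.ker π →ₗ[k] A := (RingHom.ker π).subtype.restrictScalars k
  have hf : ∀ (a : A) (x : RingHom.ker π ⊗[k] N),
      i.rTensor N (tensorAction N (Algebra.lsmul k k (RingHom.ker π)) a x) = a • i.rTensor N x :=
    fun a x => by
      induction x with
      | zero => simp only [map_zero, smul_zero]
      | tmul c x => exact (smul_tmul' a (c : A) x).symm
      | add x y hx hy => simp only [map_add, smul_add, hx, hy]
  have hg : ∀ (a : A) (x : A ⊗[k] N),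
      π.toLinearMap.rTensor N (a • x) = π a • π.toLinearMap.rTensor N x := fun a x => by
    induction x with
    | zero => simp only [map_zero, smul_zero]
    | tmul c x => simp [smul_tmul']
    | add x y hx hy => simp only [map_add, smul_add, hx, hy]
  have hex : Function.Exact i π.toLinearMap := fun a => ⟨fun ha => ⟨⟨a, ha⟩, rfl⟩, by
    rintro ⟨x, rfl⟩
    exact x.2⟩
  have hiπ := rTensor_exact N hex hπ
  have hs := LinearMap.rTensor_surjective N (g := π.toLinearMap) hπ
  let S := barShortComplex ε (r := tensorAction N (Algebra.lsmul k k (RingHom.ker π)))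
    (r' := Algebra.lsmul k k (A ⊗[k] N)) (r'' := (Algebra.lsmul k k (B ⊗[k] N)).comp π)
    hf hg hiπ hs
  have hS : S.ShortExact := barShortComplex_shortExact ε hf hg
    (Module.Flat.rTensor_preserves_injective_linearMap i Subtype.val_injective) hiπ hs
  have hI' := barComplex_acyclic_tensorAction (V := N) hI
  exact (exactAt_iff_isZero_homology _ _).2 <|
    (hS.homology_exact₃ (q + 1) q rfl).isZero_of_both_zeros
      (((exactAt_iff_isZero_homology S.X₂ _).1 (exactAt_barComplex_induced ε q)).eq_of_src _ _)
      (((exactAt_iff_isZero_homology S.X₁ _).1 (hI' q)).eq_of_tgt _ _)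

/-- The map from the bar complex over `A`, with coefficients restricted along `π : A → B`, to the
bar complex over `B`. -/
abbrev barRestrictMap (hε : ε'.comp π = ε) (s : B →ₐ[k] Module.End k N) :
    barComplex ε (s.comp π) ⟶ barComplex ε' s :=
  barMap (f := LinearMap.id) hε fun _ _ => rfl

lemma isIso_homologyMap_barRestrictMap_zero (hε : ε'.comp π = ε) (hπ : Function.Surjective π)
    (s : B →ₐ[k] Module.End k N) : IsIso (homologyMap (barRestrictMap hε s) 0) := by
  have hiso (j : ℕ) (hj : j = 0) : IsIso ((barRestrictMap hε s).f j) := by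
    subst hj
    exact inferInstanceAs (IsIso (𝟙 (ModuleCat.of k N)))
  have hepi (q : ℕ) : Epi ((barRestrictMap hε s).f q) :=
    (ModuleCat.epi_iff_surjective _).2 (barObjMap_surjective hπ Function.surjective_id q)
  have := hiso _ (ChainComplex.next_nat_zero)
  exact ShortComplex.isIso_homologyMap_of_epi_of_isIso_of_mono' _ (hepi _) (hiso 0 rfl)
    (inferInstanceAs (Mono ((barRestrictMap hε s).f _)))

/-- The restriction map from the short exact sequence of coefficients over `A` to that over
`B`. -/
abbrev barRestrictShortComplex (hε : ε'.comp π = ε) {N' N'' : Type} [AddCommGroup N'] [Module k N']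
    [AddCommGroup N''] [Module k N''] {s : B →ₐ[k] Module.End k N} {s' : B →ₐ[k] Module.End k N'}
    {s'' : B →ₐ[k] Module.End k N''} {f : N →ₗ[k] N'} {g : N' →ₗ[k] N''}
    (hf : ∀ b x, f (s b x) = s' b (f x)) (hg : ∀ b x, g (s' b x) = s'' b (g x))
    (hfg : Function.Exact f g) (hs : Function.Surjective g) :
    barShortComplex ε (r := s.comp π) (r' := s'.comp π) (r'' := s''.comp π) (fun a => hf (π a))
      (fun a => hg (π a)) hfg hs ⟶ barShortComplex ε' hf hg hfg hs where
  τ₁ := barRestrictMap hε s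
  τ₂ := barRestrictMap hε s'
  τ₃ := barRestrictMap hε s''
  comm₁₂ := HomologicalComplex.Hom.ext <| funext fun q => ModuleCat.hom_ext <|
    (barObjMap_comp (AlgHom.id k B) π f LinearMap.id q).trans
      (barObjMap_comp π (AlgHom.id k A) LinearMap.id f q).symm
  comm₂₃ := HomologicalComplex.Hom.ext <| funext fun q => ModuleCat.hom_ext <|
    (barObjMap_comp (AlgHom.id k B) π g LinearMap.id q).trans
      (barObjMap_comp π (AlgHom.id k A) LinearMap.id g q).symm

/-- Restriction of the sequence of bar complexes coming from `0 → K → B ⊗ N → N → 0`. -/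
abbrev barRestrictSyzygy (hε : ε'.comp π = ε) (N : Type) [AddCommGroup N] [Module k N] [Module B N]
    [IsScalarTower k B N] :=
  barRestrictShortComplex hε (N := LinearMap.ker (actionMap k B N))
    (f := (LinearMap.ker (actionMap k B N)).subtype.restrictScalars k)
    (g := (actionMap k B N).restrictScalars k) (s := Algebra.lsmul k k _)
    (s' := Algebra.lsmul k k _) (s'' := Algebra.lsmul k k N) (fun _ _ => rfl)
    (actionMap k B N).map_smul (actionMap k B N).exact_subtype_ker_map actionMap_surjective

lemma isIso_homologyMap_barRestrictMap_induced [Module.Flat k A] [Module.Flat k N]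
    (hε : ε'.comp π = ε) (hπ : Function.Surjective π) (hI : TorAcyclic ε (RingHom.ker π)) :
    ∀ q, IsIso (homologyMap (barRestrictMap hε (Algebra.lsmul k k (B ⊗[k] N))) q)
  | 0 => isIso_homologyMap_barRestrictMap_zero hε hπ _
  | q + 1 => isIso_homologyMap_of_exactAt _ (exactAt_barComplex_comp_induced hπ hI q)
      (exactAt_barComplex_induced ε' q)

variable [Module.Flat k A] [Module.Flat k B]

/- Over both algebras `B ⊗ N` is acyclic in positive degrees, over `A` because `ker π` is. -/
lemma epi_homologyMap_barRestrictMap_succ [Module B N] [IsScalarTower k B N] [Module.Flat k N]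
    (hε : ε'.comp π = ε) (hπ : Function.Surjective π)
    (hI : TorAcyclic ε (RingHom.ker π)) {q : ℕ}
    (h : IsIso (homologyMap (barRestrictSyzygy hε N).τ₁ q)) :
    Epi (homologyMap (barRestrictMap hε (Algebra.lsmul k k N)) (q + 1)) := by
  have hB := isIso_homologyMap_barRestrictMap_induced (N := N) hε hπ hI
  refine HomologySequence.epi_homologyMap_τ₃ (barRestrictSyzygy hε N)
    (barShortComplex_shortExact ε _ _ Subtype.val_injective _ _)
    (barShortComplex_shortExact ε' _ _ Subtype.val_injective _ _) (q + 1) ?_ ?_ ?_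
  · exact (hB (q + 1)).epi_of_iso
  · rintro j ⟨rfl⟩
    exact h.epi_of_iso
  · rintro j ⟨rfl⟩
    exact (hB _).mono_of_iso

theorem isIso_homologyMap_barRestrictMap (hε : ε'.comp π = ε) (hπ : Function.Surjective π)
    (hI : TorAcyclic ε (RingHom.ker π)) (q : ℕ) :
    ∀ (N : Type) [AddCommGroup N] [Module k N] [Module B N] [IsScalarTower k B N]
      [Module.Flat k N], IsIso (homologyMap (barRestrictMap hε (Algebra.lsmul k k N)) q) := by
  induction q with
  | zero => exact fun N => isIso_homologyMap_barRestrictMap_zero hε hπ _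
  | succ q ih =>
    intro N _ _ _ _ _
    have hB := isIso_homologyMap_barRestrictMap_induced (N := N) hε hπ hI
    have := flat_ker_actionMap (k := k) (B := B) (N := N)
    refine HomologySequence.isIso_homologyMap_τ₃ (barRestrictSyzygy hε N)
      (barShortComplex_shortExact ε _ _ Subtype.val_injective _ _)
      (barShortComplex_shortExact ε' _ _ Subtype.val_injective _ _) (q + 1) ?_ ?_ ?_ ?_
    · have := flat_ker_actionMap (k := k) (B := B) (N := LinearMap.ker (actionMap k B N))
      exact epi_homologyMap_barRestrictMap_succ hε hπ hI (ih _)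
    · exact hB (q + 1)
    · rintro j ⟨rfl⟩
      exact ih _
    · rintro j ⟨rfl⟩
      exact (hB _).mono_of_iso

end Comparison

section BarTor

open CategoryTheory HomologicalComplex

variable {k}

/-- The homology of a short complex as cycles modulo boundaries, transported along `e`. -/
def homologyEquivOfMapEq {X Y : Type} [AddCommGroup X] [Module k X] [AddCommGroup Y] [Module k Y]
    {Z : Submodule k X} {f : Y →ₗ[k] X} {S : ShortComplex (ModuleCat k)} (e : X ≃ₗ[k] S.X₂)
    (hZ : Z.map e.toLinearMap = LinearMap.ker S.g.hom)
    (hf : (LinearMap.range f).map e.toLinearMap = LinearMap.range S.f.hom) :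
    (Z ⧸ (LinearMap.range f).comap Z.subtype) ≃ₗ[k] S.homology := by
  have hrange : ((LinearMap.range f).comap Z.subtype).map
      (e.submoduleMap Z ≪≫ₗ LinearEquiv.ofEq _ _ hZ).toLinearMap =
        LinearMap.range S.moduleCatToCycles := by
    ext ⟨y, hy⟩
    have hS : (⟨y, hy⟩ ∈ LinearMap.range S.moduleCatToCycles) ↔ y ∈ LinearMap.range S.f.hom :=
      exists_congr fun _ => Subtype.ext_iff
    rw [hS, ← hf]
    constructor
    · rintro ⟨x, hx, hxy⟩
      exact ⟨x, hx, congr_arg Subtype.val hxy⟩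
    · rintro ⟨x, hx, rfl⟩
      obtain ⟨z, hz, hzx⟩ := hZ ▸ hy
      exact ⟨⟨x, e.injective hzx ▸ hz⟩, hx, rfl⟩
  exact Submodule.Quotient.equiv _ _ _ hrange ≪≫ₗ S.moduleCatHomologyIso.toLinearEquiv.symm

/-- The terms of the bar complex `barC` are those of `barObj` with coefficients in `k`. -/
def barCEquiv : ∀ q, barC k A q ≃ₗ[k] barObj k A k q
  | 0 => LinearEquiv.refl k k
  | q + 1 => (barCEquiv q).lTensor A

variable {A}

/-- The action of `A` on `k` through the augmentation. -/
abbrev trivialAction : A →ₐ[k] Module.End k k :=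
  (Algebra.lsmul k k k).comp ε

lemma innerFaces_barCEquiv (q : ℕ) :
    innerFaces (trivialAction ε) q ∘ₗ ((barCEquiv A q).lTensor A).toLinearMap =
      - (barCEquiv A q).toLinearMap ∘ₗ barB k A ε q := by
  induction q with
  | zero =>
    refine TensorProduct.ext' fun a (x : k) => ?_
    exact (neg_neg (ε a • x)).symm
  | succ q ih =>
    refine TensorProduct.ext' fun a (x : A ⊗[k] barC k A q) => ?_
    have hsmul : a • (barCEquiv A q).lTensor A x =
        (barCEquiv A q).lTensor A (TensorProduct.map (LinearMap.mulLeft k a) LinearMap.id x) := by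
      induction x with
      | zero => simp only [map_zero, smul_zero]
      | tmul b y => rfl
      | add x y hx hy => simp only [map_add, smul_add, hx, hy]
    have h : innerFaces (trivialAction ε) q ((barCEquiv A q).lTensor A x) =
      -barCEquiv A q (barB k A ε q x) := congr($ih x)
    change consFaces (innerFaces (trivialAction ε) q) (a ⊗ₜ (barCEquiv A q).lTensor A x) =
      -(barCEquiv A q).lTensor A
        (-TensorProduct.map (LinearMap.mulLeft k a) LinearMap.id x - a ⊗ₜ barB k A ε q x)
    rw [consFaces_tmul, hsmul, h, map_sub, map_neg, LinearEquiv.lTensor_tmul,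
      TensorProduct.tmul_neg]
    abel

lemma barDiff_barCEquiv (q : ℕ) :
    barDiff ε (trivialAction ε) q ∘ₗ ((barCEquiv A q).lTensor A).toLinearMap =
      (barCEquiv A q).toLinearMap ∘ₗ bard k A ε q := by
  have haug : augContract ε (barObj k A k q) ∘ₗ ((barCEquiv A q).lTensor A).toLinearMap =
      (barCEquiv A q).toLinearMap ∘ₗ
        TensorProduct.lift ((LinearMap.lsmul k (barC k A q)).comp ε.toLinearMap) :=
    TensorProduct.ext' fun a x => by simp
  rw [barDiff, LinearMap.sub_comp, innerFaces_barCEquiv, haug, bard, LinearMap.comp_add,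
    sub_neg_eq_add]

lemma map_range_bard (q : ℕ) :
    (LinearMap.range (bard k A ε q)).map (barCEquiv A q).toLinearMap =
      LinearMap.range (barDiff ε (trivialAction ε) q) := by
  rw [← LinearMap.range_comp, ← barDiff_barCEquiv, LinearEquiv.range_comp]

lemma map_ker_bard (q : ℕ) :
    (LinearMap.ker (bard k A ε q)).map ((barCEquiv A q).lTensor A).toLinearMap =
      LinearMap.ker (barDiff ε (trivialAction ε) q) := by
  rw [← LinearEquiv.ker_comp (barCEquiv A q) (bard k A ε q), ← barDiff_barCEquiv,
    LinearMap.ker_comp, Submodule.map_comap_eq_of_surjective (LinearEquiv.surjective _)]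

/-- `barTor` is the homology of the bar complex with trivial coefficients. -/
def barTorEquivHomology :
    ∀ q, barTor k A ε q ≃ₗ[k] (barComplex ε (trivialAction ε)).homology q
  | 0 => homologyEquivOfMapEq (Z := ⊤) (f := bard k A ε 0)
      (S := (barComplex ε (trivialAction ε)).sc' 1 0 0) (barCEquiv A 0) (by
        change _ = LinearMap.ker ((barComplex ε (trivialAction ε)).d 0 0).hom
        rw [(barComplex ε (trivialAction ε)).shape 0 0 (by simp), ModuleCat.hom_zero,
          LinearMap.ker_zero]
        exact Submodule.map_id ⊤) (by
        change _ = LinearMap.range ((barComplex ε (trivialAction ε)).d 1 0).hom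
        rw [barComplex_d]
        exact map_range_bard ε 0) ≪≫ₗ
      (homologyIsoSc' _ 1 0 0 (by simp) (by simp)).toLinearEquiv.symm
  | q + 1 => homologyEquivOfMapEq (X := A ⊗[k] barC k A q) (Z := LinearMap.ker (bard k A ε q))
      (f := bard k A ε (q + 1))
      (S := (barComplex ε (trivialAction ε)).sc' (q + 2) (q + 1) q) (barCEquiv A (q + 1)) (by
        change _ = LinearMap.ker ((barComplex ε (trivialAction ε)).d (q + 1) q).hom
        rw [barComplex_d]
        exact map_ker_bard ε q) (by
        change _ = LinearMap.range ((barComplex ε (trivialAction ε)).d (q + 2) (q + 1)).hom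
        rw [barComplex_d]
        exact map_range_bard ε (q + 1)) ≪≫ₗ
      (homologyIsoSc' _ (q + 2) (q + 1) q (by simp) (by simp)).toLinearEquiv.symm

theorem nonempty_barTor_equiv {B : Type} [Ring B] [Algebra k B] [Module.Flat k A] [Module.Flat k B]
    {ε : A →ₐ[k] k} {ε' : B →ₐ[k] k} {π : A →ₐ[k] B} (hε : ε'.comp π = ε)
    (hπ : Function.Surjective π) (hI : TorAcyclic ε (RingHom.ker π)) (q : ℕ) :
    Nonempty (barTor k A ε q ≃ₗ[k] barTor k B ε' q) := by
  subst hε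
  let : Module B k := Module.compHom k ε'.toRingHom
  have : IsScalarTower k B k := ⟨fun c b x => by
    change ε' (c • b) * x = c * (ε' b * x)
    rw [map_smul, smul_eq_mul, mul_assoc]⟩
  have : IsIso (homologyMap (barRestrictMap rfl (trivialAction ε')) q) :=
    isIso_homologyMap_barRestrictMap rfl hπ hI q k
  exact ⟨barTorEquivHomology _ q ≪≫ₗ (asIso (homologyMap (barRestrictMap rfl
    (trivialAction ε')) q)).toLinearEquiv ≪≫ₗ (barTorEquivHomology ε' q).symm⟩

end BarTor

/-! ### Labelled matchings -/

/-- A perfect matching of a set `X` whose edges carry labels in `G`, not required to be planar: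
`partner x` is the other end of the edge at `x` and `label x` is the label of that edge. -/
@[ext] structure LabelledMatching (X G : Type) where
  partner : X → X
  label : X → G
  partner_partner : ∀ x, partner (partner x) = x
  partner_ne : ∀ x, partner x ≠ x
  label_partner : ∀ x, label (partner x) = label x

namespace LabelledMatching

section Generators

variable {X G : Type} [DecidableEq X] [CommGroup G]

/-- The diagram obtained by stacking the hook at `p, q` on top of `d`: the nodes `p` and `q` get
joined by an edge with trivial label, and so do their former partners, by the composite edge. If
`p` and `q` were joined in `d`, then the loop so formed is forgotten. -/
def hook (p q : X) (hpq : p ≠ q) (d : LabelledMatching X G) : LabelledMatching X G where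
  partner x := if x = p then q else if x = q then p else if x = d.partner p then d.partner q else
    if x = d.partner q then d.partner p else d.partner x
  label x := if x = p ∨ x = q then 1 else
    if x = d.partner p ∨ x = d.partner q then d.label p * d.label q else d.label x
  partner_partner x := by
    have := d.partner_partner; have := d.partner_ne
    grind
  partner_ne x := by
    have := d.partner_partner; have := d.partner_ne
    grind
  label_partner x := by
    have := d.partner_partner; have := d.partner_ne; have := d.label_partner
    grind

/-- Multiplies the label of the edge at `p` by `g`. -/
def twist (p : X) (g : G) (d : LabelledMatching X G) : LabelledMatching X G where
  partner := d.partner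
  label x := if x = p ∨ x = d.partner p then g * d.label x else d.label x
  partner_partner := d.partner_partner
  partner_ne := d.partner_ne
  label_partner x := by
    have := d.partner_partner; have := d.label_partner
    grind

variable (d : LabelledMatching X G)

lemma hook_swap (p q : X) (h : p ≠ q) : d.hook p q h = d.hook q p h.symm := by
  have := d.partner_partner; have := d.partner_ne; have := d.label_partner
  ext x <;> simp only [hook] <;> grind

lemma hook_eq_self (p q : X) (h : p ≠ q) (hp : d.partner p = q) (hl : d.label p = 1) :
    d.hook p q h = d := by
  have := d.partner_partner; have := d.partner_ne; have := d.label_partner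
  ext x <;> simp only [hook] <;> grind

lemma hook_hook_cancel (p q r : X) (hpq : p ≠ q) (hqr : q ≠ r) (hpr : p ≠ r)
    (hp : d.partner p = q) (hl : d.label p = 1) : (d.hook q r hqr).hook p q hpq = d := by
  have := d.partner_partner; have := d.partner_ne; have := d.label_partner
  ext x <;> simp only [hook] <;> grind

lemma hook_hook_comm (p q r t : X) (hpq : p ≠ q) (hrt : r ≠ t) (hpr : p ≠ r) (hpt : p ≠ t)
    (hqr : q ≠ r) (hqt : q ≠ t) :
    (d.hook r t hrt).hook p q hpq = (d.hook p q hpq).hook r t hrt := by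
  have := d.partner_partner; have := d.partner_ne; have := d.label_partner
  ext x <;>
  · simp only [hook, hpr, hpt, hqr, hqt, hpr.symm, hpt.symm, hqr.symm, hqt.symm, if_false, false_or]
    grind (splits := 30)

lemma twist_twist (p : X) (g h : G) : (d.twist p h).twist p g = d.twist p (g * h) := by
  have := d.partner_partner
  ext x
  · rfl
  · simp only [twist]; grind

lemma twist_one (p : X) : d.twist p 1 = d := by
  ext x <;> simp [twist]

lemma twist_comm (p q : X) (g h : G) : (d.twist p h).twist q g = (d.twist q g).twist p h := by
  have := d.partner_partner
  ext x
  · rfl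
  · simp only [twist]; grind

lemma hook_twist_comm (p q r : X) (h : p ≠ q) (hp : r ≠ p) (hq : r ≠ q) (g : G) :
    (d.twist r g).hook p q h = (d.hook p q h).twist r g := by
  have := d.partner_partner; have := d.partner_ne; have := d.label_partner
  ext x <;> simp only [hook, twist] <;> grind

lemma twist_hook_slide (p q : X) (h : p ≠ q) (g : G) :
    (d.hook p q h).twist p g = (d.hook p q h).twist q g := by
  have := d.partner_partner; have := d.partner_ne; have := d.label_partner
  ext x
  · rfl
  · simp only [hook, twist]; grind

lemma hook_twist_slide (p q : X) (h : p ≠ q) (g : G) :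
    (d.twist p g).hook p q h = (d.twist q g).hook p q h := by
  have := d.partner_partner; have := d.partner_ne; have := d.label_partner
  ext x <;> simp only [hook, twist] <;> grind

lemma hook_twist_hook (p q : X) (h : p ≠ q) (g : G) :
    ((d.hook p q h).twist p g).hook p q h = d.hook p q h := by
  have := d.partner_partner; have := d.partner_ne; have := d.label_partner
  ext x <;> simp only [hook, twist] <;> grind

end Generators

end LabelledMatching

/-! ### Generators and relations -/

/-- A family of elements of the algebra `X` satisfying the defining relations of `GTL_n(δ)`. The
families are indexed by `ℕ`, to keep `Fin` arithmetic out of the computations; the entries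
`e i` with `n ≤ i + 1` and `t g j` with `n ≤ j` are meaningless. -/
structure GTLSystem {k G : Type} [CommRing k] [CommGroup G] (ρ : G →* RingAut k) (δ : k) (n : ℕ)
    (X : Type) [Ring X] [Algebra k X] where
  e : ℕ → X
  t : G → ℕ → X
  e_sq : ∀ i, i + 1 < n → e i * e i = δ • e i
  e_hook_up : ∀ i, i + 2 < n → e i * e (i + 1) * e i = e i
  e_hook_down : ∀ i, i + 2 < n → e (i + 1) * e i * e (i + 1) = e (i + 1)
  e_comm : ∀ i j, i + 1 < j → j + 1 < n → e i * e j = e j * e i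
  t_mul : ∀ g h j, j < n → t g j * t h j = t (g * h) j
  t_one : ∀ j, j < n → t 1 j = 1
  t_comm : ∀ g h j l, j < n → l < n → j ≠ l → t g j * t h l = t h l * t g j
  e_t_comm : ∀ g i l, i + 1 < n → l < n → l ≠ i → l ≠ i + 1 → e i * t g l = t g l * e i
  t_e_slide : ∀ g i, i + 1 < n → t g i * e i = t g (i + 1) * e i
  e_t_slide : ∀ g i, i + 1 < n → e i * t g i = e i * t g (i + 1)
  loop : ∀ g i, i + 1 < n → e i * t g i * e i = (ρ g δ) • e i

section Presentation

variable {k G : Type} [CommRing k] [CommGroup G] {ρ : G →* RingAut k} {δ : k} {n : ℕ}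
variable {X : Type} [Ring X] [Algebra k X]

namespace GTLAlg

variable (ρ δ n) in
/-- The hook `e_i` of `GTL_n(δ)`, or `0` if there is no such hook. -/
def e (i : ℕ) : GTLAlg k G ρ n δ :=
  if h : i < n - 1 then RingQuot.mkAlgHom k (GTLRel k G ρ n δ) (GTLe k G n ⟨i, h⟩) else 0

variable (ρ δ n) in
/-- The identity diagram with the label `g` on the strand `j` of `GTL_n(δ)`, or `1` if there is
no such strand. -/
def t (g : G) (j : ℕ) : GTLAlg k G ρ n δ :=
  if h : j < n then RingQuot.mkAlgHom k (GTLRel k G ρ n δ) (GTLt k G n g ⟨j, h⟩) else 1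

lemma mkAlgHom_GTLe (i : Fin (n - 1)) :
    RingQuot.mkAlgHom k (GTLRel k G ρ n δ) (GTLe k G n i) = e ρ δ n i := by
  simp [e]

lemma mkAlgHom_GTLt (g : G) (i : Fin n) :
    RingQuot.mkAlgHom k (GTLRel k G ρ n δ) (GTLt k G n g i) = t ρ δ n g i := by
  simp [t]

lemma e_eq_zero {i : ℕ} (h : ¬ i + 1 < n) : e ρ δ n i = 0 := by
  rw [e, dif_neg (by omega)]

lemma t_eq_one (g : G) {j : ℕ} (h : ¬ j < n) : t ρ δ n g j = 1 := by
  rw [t, dif_neg h]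

/-- The generators of `GTL_n(δ)` as a system of elements satisfying the defining relations. -/
def generators (ρ : G →* RingAut k) (δ : k) (n : ℕ) : GTLSystem ρ δ n (GTLAlg k G ρ n δ) where
  e := e ρ δ n
  t := t ρ δ n
  e_sq i h := by
    simpa only [map_mul, map_smul, mkAlgHom_GTLe] using
      RingQuot.mkAlgHom_rel k (s := GTLRel k G ρ n δ) (.e_sq ⟨i, by omega⟩)
  e_hook_up i h := by
    simpa only [map_mul, mkAlgHom_GTLe] using RingQuot.mkAlgHom_rel k (s := GTLRel k G ρ n δ)
      (.e_hook ⟨i, by omega⟩ ⟨i + 1, by omega⟩ (.inl rfl))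
  e_hook_down i h := by
    simpa only [map_mul, mkAlgHom_GTLe] using RingQuot.mkAlgHom_rel k (s := GTLRel k G ρ n δ)
      (.e_hook ⟨i + 1, by omega⟩ ⟨i, by omega⟩ (.inr rfl))
  e_comm i j h hj := by
    simpa only [map_mul, mkAlgHom_GTLe] using RingQuot.mkAlgHom_rel k (s := GTLRel k G ρ n δ)
      (.ee_comm ⟨i, by omega⟩ ⟨j, by omega⟩ h)
  t_mul g h j hj := by
    simpa only [map_mul, mkAlgHom_GTLt] using
      RingQuot.mkAlgHom_rel k (s := GTLRel k G ρ n δ) (.t_mul g h ⟨j, hj⟩)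
  t_one j hj := by
    simpa only [map_one, mkAlgHom_GTLt] using
      RingQuot.mkAlgHom_rel k (s := GTLRel k G ρ n δ) (.t_one ⟨j, hj⟩)
  t_comm g h j l hj hl hne := by
    simpa only [map_mul, mkAlgHom_GTLt] using RingQuot.mkAlgHom_rel k (s := GTLRel k G ρ n δ)
      (.tt_comm g h ⟨j, hj⟩ ⟨l, hl⟩ (Fin.ne_of_val_ne hne))
  e_t_comm g i l hi hl h h' := by
    simpa only [map_mul, mkAlgHom_GTLe, mkAlgHom_GTLt] using
      RingQuot.mkAlgHom_rel k (s := GTLRel k G ρ n δ) (.et_comm g ⟨i, by omega⟩ ⟨l, hl⟩ ⟨h, h'⟩)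
  t_e_slide g i hi := by
    simpa only [map_mul, mkAlgHom_GTLe, mkAlgHom_GTLt] using
      RingQuot.mkAlgHom_rel k (s := GTLRel k G ρ n δ)
        (.cap_slide_l g ⟨i, by omega⟩ ⟨i, by omega⟩ ⟨i + 1, hi⟩ rfl rfl)
  e_t_slide g i hi := by
    simpa only [map_mul, mkAlgHom_GTLe, mkAlgHom_GTLt] using
      RingQuot.mkAlgHom_rel k (s := GTLRel k G ρ n δ)
        (.cap_slide_r g ⟨i, by omega⟩ ⟨i, by omega⟩ ⟨i + 1, hi⟩ rfl rfl)
  loop g i hi := by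
    simpa only [map_mul, map_smul, mkAlgHom_GTLe, mkAlgHom_GTLt] using
      RingQuot.mkAlgHom_rel k (s := GTLRel k G ρ n δ) (.loop g ⟨i, by omega⟩ ⟨i, by omega⟩ rfl)

lemma algHom_ext {f f' : GTLAlg k G ρ n δ →ₐ[k] X}
    (he : ∀ i, i + 1 < n → f (e ρ δ n i) = f' (e ρ δ n i))
    (ht : ∀ g j, j < n → f (t ρ δ n g j) = f' (t ρ δ n g j)) : f = f' := by
  refine RingQuot.ringQuot_ext' _ _ _ (FreeAlgebra.hom_ext (funext fun x => ?_))
  cases x with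
  | e i =>
    have h := he i (by omega)
    rw [← mkAlgHom_GTLe] at h
    exact h
  | t g j =>
    have h := ht g j j.2
    rw [← mkAlgHom_GTLt] at h
    exact h

lemma subalgebra_induction (M : Subalgebra k (GTLAlg k G ρ n δ))
    (he : ∀ i, i + 1 < n → e ρ δ n i ∈ M) (ht : ∀ g j, j < n → t ρ δ n g j ∈ M)
    (x : GTLAlg k G ρ n δ) : x ∈ M := by
  obtain ⟨y, rfl⟩ := RingQuot.mkAlgHom_surjective k (GTLRel k G ρ n δ) x
  induction y using FreeAlgebra.induction with
  | grade0 r => rw [AlgHom.commutes]; exact M.algebraMap_mem r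
  | grade1 x =>
    cases x with
    | e i => exact (mkAlgHom_GTLe (ρ := ρ) (δ := δ) i) ▸ he i (by omega)
    | t g j => exact (mkAlgHom_GTLt (ρ := ρ) (δ := δ) g j) ▸ ht g j j.2
  | mul a b ha hb => rw [map_mul]; exact M.mul_mem ha hb
  | add a b ha hb => rw [map_add]; exact M.add_mem ha hb

lemma commute_algHom {Y : Type} [Semiring Y] [Algebra k Y] (f : GTLAlg k G ρ n δ →ₐ[k] Y) {y : Y}
    (he : ∀ i, i + 1 < n → Commute y (f (e ρ δ n i)))
    (ht : ∀ g j, j < n → Commute y (f (t ρ δ n g j))) (a : GTLAlg k G ρ n δ) :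
    Commute y (f a) := by
  have ha : a ∈ (Subalgebra.centralizer k {y}).comap f := by
    refine subalgebra_induction _ (fun i hi => ?_) (fun g j hj => ?_) a <;>
      refine Subalgebra.mem_comap .. |>.2 ((Subalgebra.mem_centralizer_iff k).2 ?_) <;>
      rintro _ rfl
    exacts [he i hi, ht g j hj]
  exact (Subalgebra.mem_centralizer_iff k).1 ha y rfl

lemma comp_eq_comp_of_generators {V W : Type} [AddCommGroup V] [AddCommGroup W] [Module k V]
    [Module k W] (r : GTLAlg k G ρ n δ →ₐ[k] Module.End k V)
    (s : GTLAlg k G ρ n δ →ₐ[k] Module.End k W) (F : V →ₗ[k] W)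
    (he : ∀ i, i + 1 < n → F ∘ₗ r (e ρ δ n i) = s (e ρ δ n i) ∘ₗ F)
    (ht : ∀ g j, j < n → F ∘ₗ r (t ρ δ n g j) = s (t ρ δ n g j) ∘ₗ F) (a : GTLAlg k G ρ n δ) :
    F ∘ₗ r a = s a ∘ₗ F := by
  let S : Subalgebra k (GTLAlg k G ρ n δ) :=
    { carrier := {a | F ∘ₗ r a = s a ∘ₗ F}
      mul_mem' := fun {a b} (ha : _ = _) (hb : _ = _) => by
        rw [Set.mem_ofPred_eq, map_mul, map_mul, Module.End.mul_eq_comp, Module.End.mul_eq_comp,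
          ← LinearMap.comp_assoc, ha, LinearMap.comp_assoc, hb, LinearMap.comp_assoc]
      add_mem' := fun {a b} (ha : _ = _) (hb : _ = _) => by
        rw [Set.mem_ofPred_eq, map_add, map_add, LinearMap.comp_add, LinearMap.add_comp, ha, hb]
      algebraMap_mem' := fun c => by
        ext v
        simp [Module.algebraMap_end_apply] }
  exact subalgebra_induction S he ht a

lemma mul_mem_of_generators_mul_mem {M : Submodule k (GTLAlg k G ρ n δ)}
    (he : ∀ i, i + 1 < n → ∀ x ∈ M, e ρ δ n i * x ∈ M)
    (ht : ∀ g j, j < n → ∀ x ∈ M, t ρ δ n g j * x ∈ M)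
    (a : GTLAlg k G ρ n δ) {x : GTLAlg k G ρ n δ} (hx : x ∈ M) : a * x ∈ M := by
  let S : Subalgebra k (GTLAlg k G ρ n δ) :=
    { carrier := {a | ∀ x ∈ M, a * x ∈ M}
      mul_mem' := fun {a b} ha hb x hx => by rw [mul_assoc]; exact ha _ (hb _ hx)
      add_mem' := fun {a b} ha hb x hx => by rw [add_mul]; exact M.add_mem (ha _ hx) (hb _ hx)
      algebraMap_mem' := fun r x hx => by rw [← Algebra.smul_def]; exact M.smul_mem r hx }
  exact subalgebra_induction S he ht a x hx

end GTLAlg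

namespace GTLSystem

/-- The algebra homomorphism out of `GTL_n(δ)` determined by the images of the generators. -/
def lift (S : GTLSystem ρ δ n X) : GTLAlg k G ρ n δ →ₐ[k] X :=
  RingQuot.liftAlgHom k ⟨FreeAlgebra.lift k
      (fun x => match x with
        | GTLGen.e i => S.e i
        | GTLGen.t g j => S.t g j), by
    intro x y h
    induction h with
    | e_sq i => simpa using S.e_sq i (by omega)
    | e_hook i j h =>
      rcases h with h | h
      · simpa [h] using S.e_hook_up i (by omega)
      · simpa [h] using S.e_hook_down j (by omega)
    | ee_comm i j h => simpa using S.e_comm i j h (by omega)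
    | t_mul g h' j => simpa using S.t_mul g h' j j.2
    | t_one j => simpa using S.t_one j j.2
    | tt_comm g h' j l h => simpa using S.t_comm g h' j l j.2 l.2 (Fin.val_ne_of_ne h)
    | et_comm g i l h => simpa using S.e_t_comm g i l (by omega) l.2 h.1 h.2
    | cap_slide_l g i j j' h h' => simpa [h, h'] using S.t_e_slide g i (by omega)
    | cap_slide_r g i j j' h h' => simpa [h, h'] using S.e_t_slide g i (by omega)
    | loop g i j h => simpa [h] using S.loop g i (by omega)⟩

lemma lift_e (S : GTLSystem ρ δ n X) {i : ℕ} (h : i + 1 < n) :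
    S.lift (GTLAlg.e ρ δ n i) = S.e i := by
  rw [GTLAlg.e, dif_pos (by omega), lift]
  exact (RingQuot.liftAlgHom_mkAlgHom_apply ..).trans (FreeAlgebra.lift_ι_apply ..)

lemma lift_t (S : GTLSystem ρ δ n X) (g : G) {j : ℕ} (h : j < n) :
    S.lift (GTLAlg.t ρ δ n g j) = S.t g j := by
  rw [GTLAlg.t, dif_pos h, lift]
  exact (RingQuot.liftAlgHom_mkAlgHom_apply ..).trans (FreeAlgebra.lift_ι_apply ..)

open MulOpposite in
/-- The same elements in the opposite algebra, corresponding to reflecting diagrams in a vertical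
line. -/
def reverse (S : GTLSystem ρ δ n X) : GTLSystem ρ δ n Xᵐᵒᵖ where
  e i := op (S.e i)
  t g j := op (S.t g j)
  e_sq i h := by rw [← op_mul, S.e_sq i h, op_smul]
  e_hook_up i h := by rw [← op_mul, ← op_mul, ← mul_assoc, S.e_hook_up i h]
  e_hook_down i h := by rw [← op_mul, ← op_mul, ← mul_assoc, S.e_hook_down i h]
  e_comm i j h hj := by rw [← op_mul, ← op_mul, S.e_comm i j h hj]
  t_mul g h j hj := by rw [← op_mul, S.t_mul _ _ j hj, mul_comm]
  t_one j hj := by rw [S.t_one j hj, op_one]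
  t_comm g h j l hj hl hne := by rw [← op_mul, ← op_mul, S.t_comm _ _ _ _ hj hl hne]
  e_t_comm g i l hi hl h h' := by rw [← op_mul, ← op_mul, S.e_t_comm g i l hi hl h h']
  t_e_slide g i hi := by rw [← op_mul, ← op_mul, S.e_t_slide g i hi]
  e_t_slide g i hi := by rw [← op_mul, ← op_mul, S.t_e_slide g i hi]
  loop g i hi := by rw [← op_mul, ← op_mul, ← mul_assoc, S.loop g i hi, op_smul]

/-- The system of size `n` obtained from one of size `n + 2` by omitting the first two strands. -/
def shift (S : GTLSystem ρ δ (n + 2) X) : GTLSystem ρ δ n X where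
  e i := S.e (i + 2)
  t g j := S.t g (j + 2)
  e_sq _ _ := S.e_sq _ (by omega)
  e_hook_up _ _ := S.e_hook_up _ (by omega)
  e_hook_down _ _ := S.e_hook_down _ (by omega)
  e_comm _ _ _ _ := S.e_comm _ _ (by omega) (by omega)
  t_mul _ _ _ _ := S.t_mul _ _ _ (by omega)
  t_one _ _ := S.t_one _ (by omega)
  t_comm _ _ _ _ _ _ _ := S.t_comm _ _ _ _ (by omega) (by omega) (by omega)
  e_t_comm _ _ _ _ _ _ _ := S.e_t_comm _ _ _ (by omega) (by omega) (by omega) (by omega)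
  t_e_slide _ _ _ := S.t_e_slide _ _ (by omega)
  e_t_slide _ _ _ := S.e_t_slide _ _ (by omega)
  loop _ _ _ := S.loop _ _ (by omega)

/-- The system in `k[G^n]` whose labels are the generators of the group and whose hooks are `0`. -/
def ofPi (ρ : G →* RingAut k) (δ : k) (n : ℕ) :
    GTLSystem ρ δ n (MonoidAlgebra k (Fin n → G)) where
  e _ := 0
  t g j := if h : j < n then MonoidAlgebra.of k _ (Pi.mulSingle ⟨j, h⟩ g) else 1
  e_sq := by simp
  e_hook_up := by simp
  e_hook_down := by simp
  e_comm := by simp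
  t_mul g h j hj := by simp [hj, Pi.mulSingle_mul]
  t_one j hj := by simp only [hj, dif_pos, Pi.mulSingle_one, map_one]
  t_comm _ _ _ _ _ _ _ := mul_comm _ _
  e_t_comm := by simp
  t_e_slide := by simp
  e_t_slide := by simp
  loop := by simp

end GTLSystem

end Presentation

/-! ### Words in the generators and the corner algebra -/

namespace GTLSystem

section Words

variable {k G : Type} [CommRing k] [CommGroup G] {ρ : G →* RingAut k} {δ : k} {n : ℕ}
variable {X : Type} [Ring X] [Algebra k X]

/-- The word `e_m ⋯ e_1 e_0`, with left cup at `m, m + 1` and right cup at `0, 1`. -/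
def descent (S : GTLSystem ρ δ n X) : ℕ → X
  | 0 => S.e 0
  | m + 1 => S.e (m + 1) * S.descent m

variable (S : GTLSystem ρ δ n X)

lemma exists_descent_eq_e_mul (m : ℕ) : ∃ w, S.descent m = S.e m * w := by
  cases m with
  | zero => exact ⟨1, (mul_one _).symm⟩
  | succ m => exact ⟨S.descent m, rfl⟩

lemma e_mul_t_mul_descent {m : ℕ} (g : G) (h : m + 1 < n) :
    S.e m * (S.t g m * S.descent m) = (ρ g δ) • S.descent m := by
  obtain ⟨w, hw⟩ := S.exists_descent_eq_e_mul m
  rw [hw, ← mul_assoc, ← mul_assoc, S.loop g m h, smul_mul_assoc]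

lemma e_mul_descent_succ {m : ℕ} (h : m + 2 < n) : S.e m * S.descent (m + 1) = S.descent m := by
  obtain ⟨w, hw⟩ := S.exists_descent_eq_e_mul m
  rw [descent, hw, ← mul_assoc, ← mul_assoc, S.e_hook_up m h]

lemma t_mul_descent_slide {m : ℕ} (g : G) (h : m + 1 < n) :
    S.t g m * S.descent m = S.t g (m + 1) * S.descent m := by
  obtain ⟨w, hw⟩ := S.exists_descent_eq_e_mul m
  rw [hw, ← mul_assoc, S.t_e_slide g m h, mul_assoc]

lemma e_mul_descent_of_gt {i m : ℕ} (h : m + 1 < i) (hi : i + 1 < n) :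
    S.e i * S.descent m = S.descent m * S.e i := by
  induction m with
  | zero => exact (S.e_comm 0 i h hi).symm
  | succ m ih =>
    rw [descent, ← mul_assoc, ← S.e_comm (m + 1) i (by omega) hi, mul_assoc, ih (by omega),
      mul_assoc]

lemma t_mul_descent_of_gt {j m : ℕ} (g : G) (h : m + 1 < j) (hj : j < n) :
    S.t g j * S.descent m = S.descent m * S.t g j := by
  induction m with
  | zero => exact (S.e_t_comm g 0 j (by omega) hj (by omega) (by omega)).symm
  | succ m ih =>
    rw [descent, ← mul_assoc, ← S.e_t_comm g (m + 1) j (by omega) hj (by omega) (by omega),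
      mul_assoc, ih (by omega), mul_assoc]

lemma e_mul_descent_of_lt {i m : ℕ} (h : i + 1 < m) (hm : m + 1 < n) :
    S.e i * S.descent m = S.descent m * S.e (i + 2) := by
  induction m, (h : i + 2 ≤ m) using Nat.le_induction with
  | base =>
    calc S.e i * S.descent (i + 2) = S.e (i + 2) * S.descent i := by
          rw [descent, ← mul_assoc, S.e_comm i (i + 2) (by omega) hm, mul_assoc,
            S.e_mul_descent_succ (by omega)]
      _ = S.descent (i + 2) * S.e (i + 2) := by
          rw [descent, descent, mul_assoc, mul_assoc, ← S.e_mul_descent_of_gt (by omega) hm,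
            ← mul_assoc, ← mul_assoc, S.e_hook_down (i + 1) (by omega)]
  | succ m hm' ih =>
    rw [descent, ← mul_assoc, S.e_comm i _ (by omega) hm, mul_assoc, ih (by omega),
      mul_assoc]

lemma t_mul_descent_of_lt {j m : ℕ} (g : G) (h : j < m) (hm : m + 1 < n) :
    S.t g j * S.descent m = S.descent m * S.t g (j + 2) := by
  induction m, (h : j + 1 ≤ m) using Nat.le_induction with
  | base =>
    rw [descent, ← mul_assoc, ← S.e_t_comm g (j + 1) j hm (by omega) (by omega) (by omega),
      mul_assoc, S.t_mul_descent_slide g (by omega), ← mul_assoc, S.e_t_slide g (j + 1) hm,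
      mul_assoc, S.t_mul_descent_of_gt g (by omega) hm, mul_assoc]
  | succ m hm' ih =>
    rw [descent, ← mul_assoc, ← S.e_t_comm g (m + 1) j hm (by omega) (by omega) (by omega),
      mul_assoc, ih (by omega), mul_assoc]

end Words

section DescentForm

variable {k G : Type} [CommRing k] [CommGroup G] {ρ : G →* RingAut k} {δ : k} {n : ℕ}
variable {X : Type} [Ring X] [Algebra k X] (S : GTLSystem ρ δ (n + 2) X)

/-- The homomorphism from `GTL_n(δ)` which places a diagram below two horizontal strands. -/
def shiftHom : GTLAlg k G ρ n δ →ₐ[k] X := S.shift.lift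

lemma shiftHom_e {i : ℕ} (h : i + 1 < n) : S.shiftHom (GTLAlg.e ρ δ n i) = S.e (i + 2) :=
  S.shift.lift_e h

lemma shiftHom_t (g : G) {j : ℕ} (h : j < n) : S.shiftHom (GTLAlg.t ρ δ n g j) = S.t g (j + 2) :=
  S.shift.lift_t g h

/-- The elements of the left ideal generated by `e_0` which are a diagram with left cup at
`m, m + 1` and label `g` there, up to the factor `z` acting on the remaining strands. -/
def IsDescentForm (x : X) : Prop :=
  ∃ m g z, m ≤ n ∧ x = S.t g m * S.descent m * S.shiftHom z

variable {S}

lemma isDescentForm_descent_mul {m : ℕ} (z : GTLAlg k G ρ n δ) (h : m ≤ n) :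
    S.IsDescentForm (S.descent m * S.shiftHom z) :=
  ⟨m, 1, z, h, by rw [S.t_one m (by omega), one_mul]⟩

lemma isDescentForm_descent {m : ℕ} (h : m ≤ n) : S.IsDescentForm (S.descent m) := by
  simpa using isDescentForm_descent_mul (S := S) 1 h

lemma isDescentForm_t_mul_descent {m : ℕ} (g : G) (h : m ≤ n) :
    S.IsDescentForm (S.t g m * S.descent m) :=
  ⟨m, g, 1, h, by rw [map_one, mul_one]⟩

lemma IsDescentForm.smul {x : X} (h : S.IsDescentForm x) (c : k) : S.IsDescentForm (c • x) := by
  obtain ⟨m, g, z, hm, rfl⟩ := h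
  exact ⟨m, g, c • z, hm, by rw [map_smul, mul_smul_comm]⟩

lemma IsDescentForm.mul_shiftHom {x : X} (h : S.IsDescentForm x) (z : GTLAlg k G ρ n δ) :
    S.IsDescentForm (x * S.shiftHom z) := by
  obtain ⟨m, g, z', hm, rfl⟩ := h
  exact ⟨m, g, z' * z, hm, by rw [map_mul, ← mul_assoc]⟩

variable (S)

lemma e_mul_t_mul_descent_of_far {i m : ℕ} (g : G) (hi : i ≤ n) (hm : m ≤ n)
    (h : m + 1 < i ∨ i + 1 < m) :
    S.e i * (S.t g m * S.descent m) =
      S.t g m * S.descent m * S.shiftHom (GTLAlg.e ρ δ n (if i < m then i else i - 2)) := by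
  rw [← mul_assoc, S.e_t_comm g i m (by omega) (by omega) (by omega) (by omega), mul_assoc,
    mul_assoc]
  congr 1
  rcases h with h | h
  · rw [S.e_mul_descent_of_gt h (by omega), if_neg (by omega), S.shiftHom_e (by omega)]
    congr 2; omega
  · rw [S.e_mul_descent_of_lt h (by omega), if_pos (by omega), S.shiftHom_e (by omega)]

lemma t_mul_t_mul_descent_of_far {j m : ℕ} (g h : G) (hj : j < n + 2) (hm : m ≤ n)
    (hjm : m + 1 < j ∨ j < m) :
    S.t h j * (S.t g m * S.descent m) =
      S.t g m * S.descent m * S.shiftHom (GTLAlg.t ρ δ n h (if j < m then j else j - 2)) := by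
  rw [← mul_assoc, S.t_comm _ _ j m hj (by omega) (by omega), mul_assoc, mul_assoc]
  congr 1
  rcases hjm with hjm | hjm
  · rw [S.t_mul_descent_of_gt h hjm hj, if_neg (by omega), S.shiftHom_t _ (by omega)]
    congr 2; omega
  · rw [S.t_mul_descent_of_lt h hjm (by omega), if_pos (by omega), S.shiftHom_t _ (by omega)]

variable {S}

lemma IsDescentForm.e_mul {i : ℕ} (hi : i ≤ n) {x : X} (hx : S.IsDescentForm x) :
    S.IsDescentForm (S.e i * x) := by
  obtain ⟨m, g, z, hm, rfl⟩ := hx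
  rw [← mul_assoc]
  by_cases h : m + 1 < i ∨ i + 1 < m
  · rw [S.e_mul_t_mul_descent_of_far g hi hm h]
    exact ((isDescentForm_t_mul_descent g hm).mul_shiftHom _).mul_shiftHom z
  refine IsDescentForm.mul_shiftHom ?_ z
  obtain rfl | rfl | rfl : i = m ∨ i = m + 1 ∨ m = i + 1 := by omega
  · rw [S.e_mul_t_mul_descent g (by omega)]
    exact (isDescentForm_descent hm).smul _
  · rw [← mul_assoc, S.e_t_comm g (m + 1) m (by omega) (by omega) (by omega) (by omega), mul_assoc,
      ← descent, S.t_mul_descent_of_lt g (by omega) (by omega), ← S.shiftHom_t _ (by omega)]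
    exact isDescentForm_descent_mul _ (by omega)
  · rw [S.t_mul_descent_slide g (by omega), ← mul_assoc,
      S.e_t_comm g i (i + 2) (by omega) (by omega) (by omega) (by omega), mul_assoc,
      S.e_mul_descent_succ (by omega), S.t_mul_descent_of_gt g (by omega) (by omega),
      ← S.shiftHom_t _ (by omega)]
    exact isDescentForm_descent_mul _ (by omega)

lemma IsDescentForm.t_mul {j : ℕ} (h : G) (hj : j < n + 2) {x : X} (hx : S.IsDescentForm x) :
    S.IsDescentForm (S.t h j * x) := by
  obtain ⟨m, g, z, hm, rfl⟩ := hx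
  rw [← mul_assoc]
  refine IsDescentForm.mul_shiftHom ?_ z
  by_cases hjm : m + 1 < j ∨ j < m
  · rw [S.t_mul_t_mul_descent_of_far g h hj hm hjm]
    exact (isDescentForm_t_mul_descent g hm).mul_shiftHom _
  obtain rfl | rfl : j = m ∨ j = m + 1 := by omega
  · rw [← mul_assoc, S.t_mul _ _ j hj]
    exact isDescentForm_t_mul_descent _ hm
  · rw [S.t_mul_descent_slide g (by omega), ← mul_assoc, S.t_mul _ _ _ hj,
      ← S.t_mul_descent_slide _ (by omega)]
    exact isDescentForm_t_mul_descent _ hm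

variable (S)

lemma e_zero_mul_shiftHom (z : GTLAlg k G ρ n δ) :
    S.e 0 * S.shiftHom z = S.shiftHom z * S.e 0 := by
  refine GTLAlg.commute_algHom S.shiftHom (fun i hi => ?_) (fun g j hj => ?_) z
  · rw [S.shiftHom_e hi, Commute, SemiconjBy, S.e_comm 0 (i + 2) (by omega) (by omega)]
  · rw [S.shiftHom_t _ hj, Commute, SemiconjBy,
      S.e_t_comm g 0 (j + 2) (by omega) (by omega) (by omega) (by omega)]

lemma exists_e_zero_mul_descent_add_two {m : ℕ} (h : m + 2 ≤ n) :
    ∃ w, S.e 0 * S.descent (m + 2) = S.e 0 * S.shiftHom w := by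
  induction m with
  | zero =>
    refine ⟨GTLAlg.e ρ δ n 0, ?_⟩
    rw [S.shiftHom_e (by omega), descent, ← mul_assoc, S.e_comm 0 2 (by omega) (by omega),
      mul_assoc, S.e_mul_descent_succ (by omega)]
    rfl
  | succ m ih =>
    obtain ⟨w, hw⟩ := ih (by omega)
    refine ⟨GTLAlg.e ρ δ n (m + 1) * w, ?_⟩
    rw [descent, ← mul_assoc, S.e_comm 0 (m + 2 + 1) (by omega) (by omega), mul_assoc, hw,
      ← mul_assoc, ← S.e_comm 0 (m + 2 + 1) (by omega) (by omega), map_mul,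
      S.shiftHom_e (by omega), mul_assoc]

lemma exists_e_zero_mul_t_mul_descent {m : ℕ} (h : m ≤ n) (g : G) :
    ∃ w, S.e 0 * (S.t g m * S.descent m) = S.e 0 * S.shiftHom w := by
  match m, h with
  | 0, _ =>
    refine ⟨algebraMap k _ (ρ g δ), ?_⟩
    rw [S.e_mul_t_mul_descent g (by omega), AlgHom.commutes, Algebra.smul_def, Algebra.commutes]
    rfl
  | 1, h =>
    refine ⟨GTLAlg.t ρ δ n g 0, ?_⟩
    rw [S.t_mul_descent_slide g (by omega), ← mul_assoc,
      S.e_t_comm g 0 2 (by omega) (by omega) (by omega) (by omega), mul_assoc,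
      S.e_mul_descent_succ (by omega), S.t_mul_descent_of_gt g (by omega) (by omega),
      S.shiftHom_t _ (by omega)]
    rfl
  | m + 2, h =>
    obtain ⟨w, hw⟩ := S.exists_e_zero_mul_descent_add_two h
    refine ⟨GTLAlg.t ρ δ n g m * w, ?_⟩
    rw [← mul_assoc, S.e_t_comm g 0 (m + 2) (by omega) (by omega) (by omega) (by omega), mul_assoc,
      hw, ← mul_assoc, ← S.e_t_comm g 0 (m + 2) (by omega) (by omega) (by omega) (by omega),
      map_mul, S.shiftHom_t _ (by omega), mul_assoc]

end DescentForm

end GTLSystem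

namespace GTLAlg

section Corner

variable {k G : Type} [CommRing k] [CommGroup G] {ρ : G →* RingAut k} {δ : k} {n : ℕ}

lemma mul_e_zero_mem_span_isDescentForm (a : GTLAlg k G ρ (n + 2) δ) :
    a * e ρ δ (n + 2) 0 ∈ Submodule.span k {x | (generators ρ δ (n + 2)).IsDescentForm x} := by
  refine mul_mem_of_generators_mul_mem (fun i hi x hx => ?_) (fun g j hj x hx => ?_) a
    (Submodule.subset_span ?_)
  · exact Submodule.span_le (p := (Submodule.span k _).comap (LinearMap.mulLeft k _)).2
      (fun y hy => Submodule.subset_span (hy.e_mul (by omega : i ≤ n))) hx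
  · exact Submodule.span_le (p := (Submodule.span k _).comap (LinearMap.mulLeft k _)).2
      (fun y hy => Submodule.subset_span (hy.t_mul g hj)) hx
  · exact GTLSystem.isDescentForm_descent (S := generators ρ δ (n + 2)) n.zero_le

lemma exists_e_zero_mul_mul_e_zero (a : GTLAlg k G ρ (n + 2) δ) :
    ∃ w, e ρ δ (n + 2) 0 * a * e ρ δ (n + 2) 0 =
      e ρ δ (n + 2) 0 * (generators ρ δ (n + 2)).shiftHom w := by
  let S := generators ρ δ (n + 2)
  let P : Submodule k (GTLAlg k G ρ (n + 2) δ) :=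
    LinearMap.range (LinearMap.mulLeft k (S.e 0) ∘ₗ S.shiftHom.toLinearMap)
  have hP : Submodule.span k {x | S.IsDescentForm x} ≤ P.comap (LinearMap.mulLeft k (S.e 0)) := by
    refine Submodule.span_le.2 ?_
    rintro _ ⟨m, g, z, hm, rfl⟩
    obtain ⟨w, hw⟩ := S.exists_e_zero_mul_t_mul_descent hm g
    refine ⟨w * z, ?_⟩
    change S.e 0 * S.shiftHom (w * z) = S.e 0 * (S.t g m * S.descent m * S.shiftHom z)
    rw [← mul_assoc, hw, map_mul, mul_assoc]
  obtain ⟨w, hw⟩ := hP (mul_e_zero_mem_span_isDescentForm a)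
  exact ⟨w, (mul_assoc _ a _).trans hw.symm⟩

end Corner

end GTLAlg

/-! ### The action on diagrams -/

namespace LabelledMatching

section Operators

variable {X G : Type} {k : Type} [CommRing k]

/-- The linear operator sending each basis element `d` to `w d • f d`. -/
def weightedMap (f : LabelledMatching X G → LabelledMatching X G)
    (w : LabelledMatching X G → k) : Module.End k (LabelledMatching X G →₀ k) :=
  Finsupp.lsum k fun d => w d • Finsupp.lsingle (f d)

lemma weightedMap_single (f : LabelledMatching X G → LabelledMatching X G)
    (w : LabelledMatching X G → k) (d : LabelledMatching X G) (c : k) :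
    weightedMap f w (.single d c) = .single (f d) (w d * c) := by
  simp [weightedMap]

lemma weightedMap_mul (f f' : LabelledMatching X G → LabelledMatching X G)
    (w w' : LabelledMatching X G → k) :
    weightedMap f w * weightedMap f' w' =
      weightedMap (fun d => f (f' d)) (fun d => w' d * w (f' d)) := by
  refine Finsupp.lhom_ext fun d c => ?_
  rw [Module.End.mul_apply, weightedMap_single, weightedMap_single, weightedMap_single]
  congr 1
  ring

lemma weightedMap_congr {f f' : LabelledMatching X G → LabelledMatching X G}
    {w w' : LabelledMatching X G → k} (hf : ∀ d, f d = f' d) (hw : ∀ d, w d = w' d) :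
    weightedMap f w = weightedMap f' w' := by
  rw [funext hf, funext hw]

variable [CommGroup G] [DecidableEq X] (ρ : G →* RingAut k) (δ : k)

/-- The factor contributed by the loop that may arise in stacking the hook at `p, q` on top
of `d`. -/
def loopWeight (p q : X) (d : LabelledMatching X G) : k :=
  if d.partner p = q then ρ (d.label p) δ else 1

/-- Multiplication by the hook at `p, q`. -/
def hookOp (p q : X) (h : p ≠ q) : Module.End k (LabelledMatching X G →₀ k) :=
  weightedMap (hook p q h) (loopWeight ρ δ p q)

variable (k) in
/-- Multiplication by the label `g` at `p`. -/
def twistOp (p : X) (g : G) : Module.End k (LabelledMatching X G →₀ k) :=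
  weightedMap (twist p g) 1

lemma hookOp_single (p q : X) (h : p ≠ q) (d : LabelledMatching X G) (c : k) :
    hookOp ρ δ p q h (.single d c) = .single (d.hook p q h) (loopWeight ρ δ p q d * c) :=
  weightedMap_single ..

lemma twistOp_single (p : X) (g : G) (d : LabelledMatching X G) (c : k) :
    twistOp k p g (.single d c) = .single (d.twist p g) c := by
  rw [twistOp, weightedMap_single, Pi.one_apply, one_mul]

lemma hook_partner_left (p q : X) (h : p ≠ q) (d : LabelledMatching X G) :
    (d.hook p q h).partner p = q :=
  if_pos rfl

lemma hook_label_left (p q : X) (h : p ≠ q) (d : LabelledMatching X G) :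
    (d.hook p q h).label p = 1 :=
  if_pos (.inl rfl)

lemma hookOp_swap (p q : X) (h : p ≠ q) :
    hookOp ρ δ p q h = hookOp (G := G) ρ δ q p h.symm := by
  refine weightedMap_congr (fun d => hook_swap d _ _ _) fun d => ?_
  have := d.partner_partner; have := d.label_partner
  simp only [loopWeight]; grind

lemma hookOp_mul_self (p q : X) (h : p ≠ q) :
    hookOp ρ δ p q h * hookOp ρ δ p q h = δ • hookOp (G := G) ρ δ p q h := by
  refine Finsupp.lhom_ext fun d c => ?_
  rw [Module.End.mul_apply, LinearMap.smul_apply, hookOp_single, hookOp_single,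
    hook_eq_self _ _ _ _ (hook_partner_left ..) (hook_label_left ..), Finsupp.smul_single,
    loopWeight, if_pos (hook_partner_left ..), hook_label_left, map_one]
  rfl

lemma hookOp_mul_hookOp_mul_hookOp (p q r : X) (hpq : p ≠ q) (hqr : q ≠ r) (hpr : p ≠ r) :
    hookOp ρ δ p q hpq * hookOp ρ δ q r hqr * hookOp ρ δ p q hpq =
      hookOp (G := G) ρ δ p q hpq := by
  simp only [hookOp, weightedMap_mul]
  refine weightedMap_congr
    (fun d => hook_hook_cancel _ _ _ _ _ _ hpr (hook_partner_left ..) (hook_label_left ..))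
    fun d => ?_
  have := d.partner_partner; have := d.partner_ne
  have no_loop_qr : (d.hook p q hpq).partner q ≠ r := by simp only [hook]; grind
  have no_loop_pq : ((d.hook p q hpq).hook q r hqr).partner p ≠ q := by simp only [hook]; grind
  rw [loopWeight, loopWeight, if_neg no_loop_qr, loopWeight, if_neg no_loop_pq, mul_one, mul_one]

lemma loopWeight_mul_loopWeight_hook (p q r t : X) (hrt : r ≠ t) (hpr : p ≠ r) (hpt : p ≠ t)
    (hqr : q ≠ r) (hqt : q ≠ t) (d : LabelledMatching X G) :
    loopWeight ρ δ p q (d.hook r t hrt) =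
      if d.partner p = r ∧ d.partner q = t ∨ d.partner p = t ∧ d.partner q = r then
        ρ (d.label r * d.label t) δ
      else loopWeight ρ δ p q d := by
  have := d.partner_partner; have := d.partner_ne; have := d.label_partner
  simp only [loopWeight, hook]
  grind

lemma hookOp_comm (p q r t : X) (hpq : p ≠ q) (hrt : r ≠ t) (hpr : p ≠ r) (hpt : p ≠ t)
    (hqr : q ≠ r) (hqt : q ≠ t) :
    Commute (hookOp ρ δ p q hpq) (hookOp (G := G) ρ δ r t hrt) := by
  rw [Commute, SemiconjBy, hookOp, hookOp, weightedMap_mul, weightedMap_mul]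
  refine weightedMap_congr (fun d => hook_hook_comm _ _ _ _ _ _ _ hpr hpt hqr hqt) fun d => ?_
  rw [loopWeight_mul_loopWeight_hook ρ δ p q r t hrt hpr hpt hqr hqt,
    loopWeight_mul_loopWeight_hook ρ δ r t p q hpq hpr.symm hqr.symm hpt.symm hqt.symm]
  have := d.partner_partner; have := d.label_partner
  simp only [loopWeight]
  grind

lemma twistOp_mul_twistOp (p : X) (g h : G) :
    twistOp k p g * twistOp k p h = twistOp k p (g * h) := by
  simp only [twistOp, weightedMap_mul]
  exact weightedMap_congr (fun d => twist_twist _ _ _ _) fun _ => mul_one 1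

lemma twistOp_one (p : X) : twistOp k p (1 : G) = 1 := by
  refine Finsupp.lhom_ext fun d c => ?_
  rw [twistOp_single, twist_one]
  rfl

lemma twistOp_comm (p q : X) (g h : G) : Commute (twistOp k p g) (twistOp k q h) := by
  simp only [Commute, SemiconjBy, twistOp, weightedMap_mul]
  exact weightedMap_congr (fun d => twist_comm _ _ _ _ _) fun _ => rfl

lemma hookOp_twistOp_comm (p q r : X) (h : p ≠ q) (hp : r ≠ p) (hq : r ≠ q) (g : G) :
    Commute (hookOp ρ δ p q h) (twistOp k r g) := by
  rw [Commute, SemiconjBy, twistOp, hookOp, weightedMap_mul, weightedMap_mul]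
  refine weightedMap_congr (fun d => hook_twist_comm _ _ _ _ _ hp hq _) fun d => ?_
  have := d.partner_partner
  simp only [loopWeight, twist, Pi.one_apply]; grind

lemma twistOp_mul_hookOp (p q : X) (h : p ≠ q) (g : G) :
    twistOp k p g * hookOp ρ δ p q h = twistOp k q g * hookOp ρ δ p q h := by
  simp only [twistOp, hookOp, weightedMap_mul]
  exact weightedMap_congr (fun d => twist_hook_slide _ _ _ _ _) fun _ => rfl

lemma hookOp_mul_twistOp (p q : X) (h : p ≠ q) (g : G) :
    hookOp ρ δ p q h * twistOp k p g = hookOp ρ δ p q h * twistOp k q g := by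
  simp only [twistOp, hookOp, weightedMap_mul]
  refine weightedMap_congr (fun d => hook_twist_slide _ _ _ _ _) fun d => ?_
  have := d.partner_partner
  simp only [loopWeight, twist, Pi.one_apply]; grind

lemma hookOp_mul_twistOp_mul_hookOp (p q : X) (h : p ≠ q) (g : G) :
    hookOp ρ δ p q h * twistOp k p g * hookOp ρ δ p q h = ρ g δ • hookOp ρ δ p q h := by
  refine Finsupp.lhom_ext fun d c => ?_
  rw [Module.End.mul_apply, Module.End.mul_apply, LinearMap.smul_apply, hookOp_single,
    twistOp_single, hookOp_single, hook_twist_hook, Finsupp.smul_single]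
  simp [loopWeight, hook, twist]

end Operators

end LabelledMatching

section Representations

open LabelledMatching

variable {k G : Type} [CommRing k] [CommGroup G]

/-- The diagrams on which `GTL_n(δ)` acts for every `n`. They have infinitely many nodes
`Sum.inl i` on the left and infinitely many nodes `Sum.inr i` on the right; an `n`-diagram is
viewed as one of them by adding horizontal edges. -/
abbrev Diagram (G : Type) := LabelledMatching (ℕ ⊕ ℕ) G

/-- The system of operators on matchings of `X` given by hooks and labels at the nodes `c 0`,
…, `c (n - 1)`. -/
def GTLSystem.ofNodes {X : Type} [DecidableEq X] (ρ : G →* RingAut k) (δ : k) (n : ℕ) (c : ℕ → X)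
    (hc : c.Injective) : GTLSystem ρ δ n (Module.End k (LabelledMatching X G →₀ k)) where
  e i := hookOp ρ δ (c i) (c (i + 1)) (hc.ne (by omega))
  t g j := twistOp k (c j) g
  e_sq _ _ := hookOp_mul_self ..
  e_hook_up _ _ := hookOp_mul_hookOp_mul_hookOp _ _ _ _ _ _ _ (hc.ne (by omega))
  e_hook_down i _ := by
    rw [hookOp_swap ρ δ (c i), hookOp_swap ρ δ (c (i + 1))]
    exact hookOp_mul_hookOp_mul_hookOp _ _ _ _ _ _ _ (hc.ne (by omega))
  e_comm i j h _ := hookOp_comm _ _ _ _ _ _ _ _ (hc.ne (by omega)) (hc.ne (by omega))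
    (hc.ne (by omega)) (hc.ne (by omega))
  t_mul _ _ _ _ := twistOp_mul_twistOp ..
  t_one _ _ := twistOp_one _
  t_comm _ _ _ _ _ _ _ := twistOp_comm ..
  e_t_comm _ _ _ _ _ h h' := hookOp_twistOp_comm _ _ _ _ _ _ (hc.ne h) (hc.ne h') _
  t_e_slide _ _ _ := twistOp_mul_hookOp ..
  e_t_slide _ _ _ := hookOp_mul_twistOp ..
  loop _ _ _ := hookOp_mul_twistOp_mul_hookOp ..

namespace GTLAlg

variable (ρ : G →* RingAut k) (δ : k) (n : ℕ)

/-- The action of `GTL_n(δ)` on diagrams by stacking on the left. -/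
def leftAction : GTLAlg k G ρ n δ →ₐ[k] Module.End k (Diagram G →₀ k) :=
  (GTLSystem.ofNodes ρ δ n Sum.inl Sum.inl_injective).lift

/-- The action of `GTL_n(δ)` on diagrams by stacking mirror images on the right. -/
def rightAction : GTLAlg k G ρ n δ →ₐ[k] Module.End k (Diagram G →₀ k) :=
  (GTLSystem.ofNodes ρ δ n Sum.inr Sum.inr_injective).lift

variable {ρ δ n}

lemma leftAction_e {i : ℕ} (h : i + 1 < n) :
    leftAction ρ δ n (e ρ δ n i) = hookOp ρ δ (.inl i) (.inl (i + 1)) (by simp) :=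
  GTLSystem.lift_e _ h

lemma rightAction_e {i : ℕ} (h : i + 1 < n) :
    rightAction ρ δ n (e ρ δ n i) = hookOp ρ δ (.inr i) (.inr (i + 1)) (by simp) :=
  GTLSystem.lift_e _ h

lemma leftAction_t (g : G) {i : ℕ} (h : i < n) :
    leftAction ρ δ n (t ρ δ n g i) = twistOp k (.inl i) g :=
  GTLSystem.lift_t _ g h

lemma rightAction_t (g : G) {i : ℕ} (h : i < n) :
    rightAction ρ δ n (t ρ δ n g i) = twistOp k (.inr i) g :=
  GTLSystem.lift_t _ g h

lemma leftAction_commute_rightAction (a b : GTLAlg k G ρ n δ) :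
    Commute (leftAction ρ δ n a) (rightAction ρ δ n b) := by
  refine commute_algHom (rightAction ρ δ n) (fun i hi => ?_) (fun g i hi => ?_) b <;>
    refine (commute_algHom (leftAction ρ δ n) (fun j hj => ?_) (fun h j hj => ?_) a).symm
  · rw [leftAction_e hj, rightAction_e hi]
    apply hookOp_comm <;> simp
  · rw [leftAction_t _ hj, rightAction_e hi]
    apply hookOp_twistOp_comm <;> simp
  · rw [leftAction_e hj, rightAction_t _ hi]
    refine (hookOp_twistOp_comm _ _ _ _ _ _ ?_ ?_ _).symm <;> simp
  · rw [leftAction_t _ hj, rightAction_t _ hi]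
    exact twistOp_comm ..

variable (ρ δ n) in
/-- The anti-involution of `GTL_n(δ)` reflecting diagrams in a vertical line. -/
def reverse : GTLAlg k G ρ n δ →ₗ[k] GTLAlg k G ρ n δ :=
  (MulOpposite.opLinearEquiv k).symm.toLinearMap ∘ₗ (generators ρ δ n).reverse.lift.toLinearMap

lemma reverse_mul (a b : GTLAlg k G ρ n δ) :
    reverse ρ δ n (a * b) = reverse ρ δ n b * reverse ρ δ n a := by
  simp [reverse]

lemma reverse_one : reverse ρ δ n 1 = 1 := by
  simp [reverse]

lemma reverse_e (i : ℕ) : reverse ρ δ n (e ρ δ n i) = e ρ δ n i := by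
  by_cases h : i + 1 < n
  · simp [reverse, GTLSystem.lift_e _ h, GTLSystem.reverse, generators]
  · rw [e_eq_zero h, map_zero]

lemma reverse_t (g : G) (j : ℕ) : reverse ρ δ n (t ρ δ n g j) = t ρ δ n g j := by
  by_cases h : j < n
  · simp [reverse, GTLSystem.lift_t _ g h, GTLSystem.reverse, generators]
  · rw [t_eq_one g h, reverse_one]

lemma reverse_reverse (a : GTLAlg k G ρ n δ) : reverse ρ δ n (reverse ρ δ n a) = a := by
  let f : GTLAlg k G ρ n δ →ₐ[k] GTLAlg k G ρ n δ :=
    AlgHom.ofLinearMap (reverse ρ δ n ∘ₗ reverse ρ δ n)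
      (by rw [LinearMap.comp_apply, reverse_one, reverse_one])
      fun a b => by simp only [LinearMap.comp_apply, reverse_mul]
  have hf : f = AlgHom.id k _ := algHom_ext
    (fun i _ => (congrArg _ (reverse_e i)).trans (reverse_e i))
    (fun g j _ => (congrArg _ (reverse_t g j)).trans (reverse_t g j))
  exact DFunLike.congr_fun hf a

end GTLAlg

/-- The diagram with horizontal edges only, all with trivial label. -/
def Diagram.horizontal (G : Type) [One G] : Diagram G where
  partner := Sum.swap
  label _ := 1
  partner_partner := Sum.swap_swap
  partner_ne x := by cases x <;> simp
  label_partner _ := rfl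

namespace Diagram

lemma hook_inl_horizontal (i : ℕ) :
    (horizontal G).hook (.inl i) (.inl (i + 1)) (by simp) =
      (horizontal G).hook (.inr i) (.inr (i + 1)) (by simp) := by
  ext x <;> cases x <;> simp [hook, horizontal]

lemma twist_inl_horizontal (g : G) (i : ℕ) :
    (horizontal G).twist (.inl i) g = (horizontal G).twist (.inr i) g := by
  ext x <;> cases x <;> simp [twist, horizontal]

end Diagram

namespace GTLAlg

open Diagram

variable (ρ : G →* RingAut k) (δ : k) (n : ℕ)

/-- The linear map from `GTL_n(δ)`, defined by generators and relations, to the span of the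
diagrams. -/
def toDiagrams : GTLAlg k G ρ n δ →ₗ[k] (Diagram G →₀ k) :=
  LinearMap.applyₗ (.single (horizontal G) 1) ∘ₗ (leftAction ρ δ n).toLinearMap

variable {ρ δ n}

lemma toDiagrams_one : toDiagrams ρ δ n 1 = .single (horizontal G) 1 := by
  simp [toDiagrams]

lemma toDiagrams_mul (a b : GTLAlg k G ρ n δ) :
    toDiagrams ρ δ n (a * b) = leftAction ρ δ n a (toDiagrams ρ δ n b) := by
  simp [toDiagrams]

lemma induction_left {M : Submodule k (GTLAlg k G ρ n δ)} (one : 1 ∈ M)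
    (he : ∀ i, i + 1 < n → ∀ x ∈ M, e ρ δ n i * x ∈ M)
    (ht : ∀ g j, j < n → ∀ x ∈ M, t ρ δ n g j * x ∈ M) (a : GTLAlg k G ρ n δ) : a ∈ M :=
  mul_one a ▸ mul_mem_of_generators_mul_mem he ht a one

lemma rightAction_reverse_horizontal (a : GTLAlg k G ρ n δ) :
    rightAction ρ δ n (reverse ρ δ n a) (.single (horizontal G) 1) = toDiagrams ρ δ n a := by
  let R : GTLAlg k G ρ n δ →ₗ[k] (Diagram G →₀ k) :=
    LinearMap.applyₗ (.single (horizontal G) 1) ∘ₗ (rightAction ρ δ n).toLinearMap ∘ₗ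
      reverse ρ δ n
  have hR : ∀ a x, R x = toDiagrams ρ δ n x → leftAction ρ δ n a (.single (horizontal G) 1) =
      rightAction ρ δ n (reverse ρ δ n a) (.single (horizontal G) 1) →
      R (a * x) = toDiagrams ρ δ n (a * x) := by
    intro a x hx ha
    have hcomm := congr($(leftAction_commute_rightAction a (reverse ρ δ n x))
      (.single (horizontal G) 1))
    rw [toDiagrams_mul, ← hx]
    simp only [R, LinearMap.comp_apply, AlgHom.toLinearMap_apply, LinearMap.applyₗ_apply_apply,
      reverse_mul, map_mul, Module.End.mul_apply] at hcomm ⊢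
    rw [hcomm, ha]
  suffices a ∈ LinearMap.eqLocus R (toDiagrams ρ δ n) from this
  refine induction_left ?_ (fun i hi x hx => hR _ x hx ?_) (fun g i hi x hx => hR _ x hx ?_) a
  · rw [LinearMap.mem_eqLocus, toDiagrams_one]
    simp [R, reverse_one]
  · rw [reverse_e, leftAction_e hi, rightAction_e hi, hookOp_single, hookOp_single,
      hook_inl_horizontal]
    rfl
  · rw [reverse_t, leftAction_t _ hi, rightAction_t _ hi, twistOp_single, twistOp_single,
      twist_inl_horizontal]

lemma toDiagrams_mul_eq_rightAction (a b : GTLAlg k G ρ n δ) :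
    toDiagrams ρ δ n (a * b) = rightAction ρ δ n (reverse ρ δ n b) (toDiagrams ρ δ n a) := by
  rw [toDiagrams_mul, ← rightAction_reverse_horizontal b, ← Module.End.mul_apply,
    leftAction_commute_rightAction, Module.End.mul_apply]
  rfl

lemma toDiagrams_mul_mul_eq_zero (a b c : GTLAlg k G ρ n δ) (h : toDiagrams ρ δ n b = 0) :
    toDiagrams ρ δ n (a * b * c) = 0 := by
  rw [toDiagrams_mul_eq_rightAction, toDiagrams_mul, h, map_zero, map_zero]

end GTLAlg

end Representations

/-! ### Faithfulness on the corner -/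

namespace LabelledMatching

variable {k X Y G : Type} [CommRing k] {σ : X → Y} (hσ : σ.Injective) (d₀ : LabelledMatching Y G)
  (h₀ : ∀ x, d₀.partner (σ x) ∈ Set.range σ)

include d₀ h₀ in
lemma partner_notMem_range {y : Y} (hy : y ∉ Set.range σ) : d₀.partner y ∉ Set.range σ := by
  rintro ⟨x, hx⟩
  exact hy (d₀.partner_partner y ▸ hx ▸ h₀ x)

/-- The matching `d₀` of `Y`, with its restriction to `X ⊆ Y` replaced by `d`. -/
def extend (d : LabelledMatching X G) : LabelledMatching Y G where
  partner := Function.extend σ (σ ∘ d.partner) d₀.partner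
  label := Function.extend σ d.label d₀.label
  partner_partner y := by
    by_cases hy : y ∈ Set.range σ
    · obtain ⟨x, rfl⟩ := hy
      simp only [hσ.extend_apply, Function.comp_apply, d.partner_partner]
    · rw [Function.extend_apply' _ _ _ hy,
        Function.extend_apply' _ _ _ (partner_notMem_range d₀ h₀ hy), d₀.partner_partner]
  partner_ne y := by
    by_cases hy : y ∈ Set.range σ
    · obtain ⟨x, rfl⟩ := hy
      rw [hσ.extend_apply, Function.comp_apply]
      exact hσ.ne (d.partner_ne x)
    · rw [Function.extend_apply' _ _ _ hy]
      exact d₀.partner_ne y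
  label_partner y := by
    by_cases hy : y ∈ Set.range σ
    · obtain ⟨x, rfl⟩ := hy
      simp only [hσ.extend_apply, Function.comp_apply, d.label_partner]
    · rw [Function.extend_apply' _ _ _ hy, Function.extend_apply' _ _ _ hy,
        Function.extend_apply' _ _ _ (partner_notMem_range d₀ h₀ hy), d₀.label_partner]

lemma extend_partner_apply (d : LabelledMatching X G) (x : X) :
    (extend hσ d₀ h₀ d).partner (σ x) = σ (d.partner x) :=
  hσ.extend_apply ..

lemma extend_label_apply (d : LabelledMatching X G) (x : X) :
    (extend hσ d₀ h₀ d).label (σ x) = d.label x :=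
  hσ.extend_apply ..

lemma extend_eq_self (d : LabelledMatching X G) (hp : ∀ x, d₀.partner (σ x) = σ (d.partner x))
    (hl : ∀ x, d₀.label (σ x) = d.label x) : extend hσ d₀ h₀ d = d₀ := by
  ext y <;> by_cases hy : y ∈ Set.range σ
  · obtain ⟨x, rfl⟩ := hy
    rw [extend_partner_apply, hp]
  · exact Function.extend_apply' _ _ _ hy
  · obtain ⟨x, rfl⟩ := hy
    rw [extend_label_apply, hl]
  · exact Function.extend_apply' _ _ _ hy

lemma extend_injective : (extend hσ d₀ h₀).Injective := by
  intro d d' h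
  ext x
  · refine hσ ?_
    rw [← extend_partner_apply hσ d₀ h₀, ← extend_partner_apply hσ d₀ h₀, h]
  · rw [← extend_label_apply hσ d₀ h₀, ← extend_label_apply hσ d₀ h₀, h]

variable [DecidableEq X] [DecidableEq Y] [CommGroup G]

lemma hook_extend (p q : X) (h : p ≠ q) (d : LabelledMatching X G) :
    (extend hσ d₀ h₀ d).hook (σ p) (σ q) (hσ.ne h) = extend hσ d₀ h₀ (d.hook p q h) := by
  ext y <;> by_cases hy : y ∈ Set.range σ
  · obtain ⟨x, rfl⟩ := hy
    simp only [extend_partner_apply, hook, hσ.eq_iff, apply_ite σ]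
  · have := fun x => ne_of_mem_of_not_mem (Set.mem_range_self x) hy
    simp only [hook, extend_partner_apply, (this _).symm, if_false]
    simp only [extend, Function.extend_apply' _ _ _ hy]
  · obtain ⟨x, rfl⟩ := hy
    simp only [extend_partner_apply, extend_label_apply, hook, hσ.eq_iff]
  · have := fun x => ne_of_mem_of_not_mem (Set.mem_range_self x) hy
    simp only [hook, extend_partner_apply, (this _).symm, or_self, if_false]
    simp only [extend, Function.extend_apply' _ _ _ hy]

lemma twist_extend (p : X) (g : G) (d : LabelledMatching X G) :
    (extend hσ d₀ h₀ d).twist (σ p) g = extend hσ d₀ h₀ (d.twist p g) := by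
  ext y
  · rfl
  by_cases hy : y ∈ Set.range σ
  · obtain ⟨x, rfl⟩ := hy
    simp only [extend_partner_apply, extend_label_apply, twist, hσ.eq_iff]
  · have := fun x => ne_of_mem_of_not_mem (Set.mem_range_self x) hy
    simp only [twist, extend_partner_apply, (this _).symm, or_self, if_false]
    simp only [extend, Function.extend_apply' _ _ _ hy]

lemma lmapDomain_extend_comp_hookOp (ρ : G →* RingAut k) (δ : k) (p q : X) (h : p ≠ q) :
    Finsupp.lmapDomain k k (extend hσ d₀ h₀) ∘ₗ hookOp ρ δ p q h =
      hookOp ρ δ (σ p) (σ q) (hσ.ne h) ∘ₗ Finsupp.lmapDomain k k (extend hσ d₀ h₀) := by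
  refine Finsupp.lhom_ext fun d c => ?_
  simp only [LinearMap.comp_apply, hookOp_single, Finsupp.lmapDomain_apply,
    Finsupp.mapDomain_single, hook_extend hσ d₀ h₀ p q h, loopWeight, extend_partner_apply,
    extend_label_apply, hσ.eq_iff]

lemma lmapDomain_extend_comp_twistOp (p : X) (g : G) :
    Finsupp.lmapDomain k k (extend hσ d₀ h₀) ∘ₗ twistOp k p g =
      twistOp k (σ p) g ∘ₗ Finsupp.lmapDomain k k (extend hσ d₀ h₀) := by
  refine Finsupp.lhom_ext fun d c => ?_
  simp only [LinearMap.comp_apply, twistOp_single, Finsupp.lmapDomain_apply,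
    Finsupp.mapDomain_single, twist_extend]

end LabelledMatching

namespace Diagram

open LabelledMatching

variable {G : Type} [CommGroup G]

/-- Moves all nodes down by two places. -/
def shiftNode : ℕ ⊕ ℕ → ℕ ⊕ ℕ := Sum.map (· + 2) (· + 2)

lemma shiftNode_injective : shiftNode.Injective :=
  (add_left_injective 2).sumMap (add_left_injective 2)

lemma hook_horizontal_partner_shiftNode (x : ℕ ⊕ ℕ) :
    ((horizontal G).hook (.inl 0) (.inl 1) (by simp)).partner (shiftNode x) =
      shiftNode ((horizontal G).partner x) := by
  cases x <;> simp [hook, horizontal, shiftNode]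

/-- The diagram with a hook on its first two nodes on either side and `d` below. -/
def addHook : Diagram G → Diagram G :=
  extend shiftNode_injective ((horizontal G).hook (.inl 0) (.inl 1) (by simp))
    fun _ => ⟨_, (hook_horizontal_partner_shiftNode _).symm⟩

lemma addHook_injective : (addHook (G := G)).Injective :=
  extend_injective ..

lemma addHook_horizontal :
    addHook (horizontal G) = (horizontal G).hook (.inl 0) (.inl 1) (by simp) :=
  extend_eq_self _ _ _ _ hook_horizontal_partner_shiftNode fun x => by
    cases x <;> simp [hook, horizontal, shiftNode]

end Diagram

namespace GTLAlg

open LabelledMatching Diagram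

variable {k G : Type} [CommRing k] [CommGroup G] {ρ : G →* RingAut k} {δ : k} {n : ℕ}

lemma toDiagrams_e {i : ℕ} (h : i + 1 < n) : toDiagrams ρ δ n (e ρ δ n i) =
    .single ((horizontal G).hook (.inl i) (.inl (i + 1)) (by simp)) 1 := by
  rw [← mul_one (e ρ δ n i), toDiagrams_mul, toDiagrams_one, leftAction_e h, hookOp_single]
  simp [loopWeight, horizontal]

lemma lmapDomain_addHook_comp_leftAction (a : GTLAlg k G ρ n δ) :
    Finsupp.lmapDomain k k addHook ∘ₗ leftAction ρ δ n a =
      leftAction ρ δ (n + 2) ((generators ρ δ (n + 2)).shiftHom a) ∘ₗ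
        Finsupp.lmapDomain k k addHook := by
  refine comp_eq_comp_of_generators (leftAction ρ δ n)
    ((leftAction ρ δ (n + 2)).comp (generators ρ δ (n + 2)).shiftHom) _
    (fun i hi => ?_) (fun g j hj => ?_) a
  · rw [AlgHom.comp_apply, GTLSystem.shiftHom_e _ hi, leftAction_e hi]
    exact (lmapDomain_extend_comp_hookOp ..).trans
      congr($((leftAction_e (show i + 2 + 1 < n + 2 by omega)).symm) ∘ₗ _)
  · rw [AlgHom.comp_apply, GTLSystem.shiftHom_t _ g hj, leftAction_t g hj]
    exact (lmapDomain_extend_comp_twistOp ..).trans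
      congr($((leftAction_t g (show j + 2 < n + 2 by omega)).symm) ∘ₗ _)

lemma toDiagrams_e_zero_mul_shiftHom (z : GTLAlg k G ρ n δ) :
    toDiagrams ρ δ (n + 2) (e ρ δ (n + 2) 0 * (generators ρ δ (n + 2)).shiftHom z) =
      Finsupp.lmapDomain k k addHook (toDiagrams ρ δ n z) := by
  rw [show e ρ δ (n + 2) 0 * _ = _ from (generators ρ δ (n + 2)).e_zero_mul_shiftHom z,
    toDiagrams_mul, ← mul_one z, toDiagrams_mul, toDiagrams_one, mul_one,
    ← LinearMap.comp_apply (Finsupp.lmapDomain k k addHook), lmapDomain_addHook_comp_leftAction,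
    LinearMap.comp_apply, Finsupp.lmapDomain_apply, Finsupp.mapDomain_single, addHook_horizontal]
  congr 1
  exact toDiagrams_e (show 0 + 1 < n + 2 by omega)

lemma eq_zero_of_toDiagrams_e_zero_mul_shiftHom
    (hn : Function.Injective (toDiagrams ρ δ n)) {z : GTLAlg k G ρ n δ}
    (hz : toDiagrams ρ δ (n + 2) (e ρ δ (n + 2) 0 * (generators ρ δ (n + 2)).shiftHom z) = 0) :
    z = 0 := by
  rw [toDiagrams_e_zero_mul_shiftHom, Finsupp.lmapDomain_apply] at hz
  refine hn ((Finsupp.mapDomain_injective addHook_injective ?_).trans (map_zero _).symm)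
  exact hz.trans Finsupp.mapDomain_zero.symm

lemma e_zero_mul_mul_mul_mul_e_zero_eq_zero (hn : Function.Injective (toDiagrams ρ δ n))
    {x : GTLAlg k G ρ (n + 2) δ} (hx : toDiagrams ρ δ (n + 2) x = 0)
    (a b : GTLAlg k G ρ (n + 2) δ) :
    e ρ δ (n + 2) 0 * a * x * b * e ρ δ (n + 2) 0 = 0 := by
  obtain ⟨w, hw⟩ := exists_e_zero_mul_mul_e_zero (a * x * b)
  simp only [← mul_assoc] at hw
  have hw0 : w = 0 := by
    refine eq_zero_of_toDiagrams_e_zero_mul_shiftHom hn ?_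
    rw [← hw, mul_assoc _ b]
    exact toDiagrams_mul_mul_eq_zero _ _ _ hx
  rw [hw, hw0, map_zero, mul_zero]

end GTLAlg

/-! ### Monomials in the generators -/

namespace LabelledMatching

section LabelledHooks

variable {X G : Type} {k : Type} [CommRing k]

/-- The nodes `p` and `q` are joined in `d` by an edge with label `g`. -/
def HasEdge (d : LabelledMatching X G) (p q : X) (g : G) : Prop :=
  d.partner p = q ∧ d.label p = g

variable [CommGroup G] [DecidableEq X] {d : LabelledMatching X G} {p q : X} {g : G}

lemma HasEdge.hook_of_ne (hd : d.HasEdge p q g) {r s : X} (h : r ≠ s) (hp : r ≠ p ∧ r ≠ q)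
    (hq : s ≠ p ∧ s ≠ q) : (d.hook r s h).HasEdge p q g := by
  obtain ⟨rfl, rfl⟩ := hd
  have := d.partner_partner
  constructor <;> simp only [hook] <;> grind

lemma HasEdge.twist_of_ne (hd : d.HasEdge p q g) {r : X} (hp : r ≠ p) (hq : r ≠ q) (a : G) :
    (d.twist r a).HasEdge p q g := by
  obtain ⟨rfl, rfl⟩ := hd
  have := d.partner_partner
  exact ⟨rfl, by simp only [twist]; grind⟩

lemma HasEdge.twist_self (hd : d.HasEdge p q g) (a : G) : (d.twist p a).HasEdge p q (a * g) := by
  obtain ⟨rfl, rfl⟩ := hd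
  simp [HasEdge, twist]

lemma HasEdge.hook_self (d : LabelledMatching X G) (h : p ≠ q) : (d.hook p q h).HasEdge p q 1 :=
  ⟨hook_partner_left p q h d, hook_label_left p q h d⟩

variable (ρ : G →* RingAut k) (δ : k)

/-- Multiplication by the hook at `p, q` whose outer edge has label `g`, and whose inner edge has
label `g⁻¹`. -/
def labelledHookOp (p q : X) (h : p ≠ q) (g : G) : Module.End k (LabelledMatching X G →₀ k) :=
  twistOp k p g * hookOp ρ δ p q h * twistOp k p g⁻¹

lemma hookOp_single_of_hasEdge (h : p ≠ q) (hd : d.HasEdge p q 1) (c : k) :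
    hookOp ρ δ p q h (.single d c) = δ • .single d c := by
  rw [hookOp_single, hook_eq_self _ _ _ _ hd.1 hd.2, loopWeight, if_pos hd.1, hd.2, map_one,
    RingAut.one_apply, Finsupp.smul_single, smul_eq_mul]

lemma labelledHookOp_single_of_hasEdge (h : p ≠ q) (hd : d.HasEdge p q g) (c : k) :
    labelledHookOp ρ δ p q h g (.single d c) = δ • .single d c := by
  have untwisted : (d.twist p g⁻¹).HasEdge p q 1 := inv_mul_cancel g ▸ hd.twist_self g⁻¹
  rw [labelledHookOp, Module.End.mul_apply, Module.End.mul_apply, twistOp_single,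
    hookOp_single_of_hasEdge ρ δ h untwisted, map_smul, twistOp_single, twist_twist,
    mul_inv_cancel, twist_one]

lemma hasEdge_of_labelledHookOp_single (h : p ≠ q) {c c' : k} (hc : c' ≠ 0)
    (hd : labelledHookOp ρ δ p q h g (.single d c) = .single d c') : d.HasEdge p q g := by
  rw [labelledHookOp, Module.End.mul_apply, Module.End.mul_apply, twistOp_single, hookOp_single,
    twistOp_single] at hd
  obtain ⟨hd, -⟩ | ⟨-, hc'⟩ := (Finsupp.single_eq_single_iff ..).1 hd
  · have := (HasEdge.hook_self (d.twist p g⁻¹) h).twist_self g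
    rwa [mul_one, hd] at this
  · exact absurd hc' hc

end LabelledHooks

end LabelledMatching

/-- The diagram with horizontal edges only, the edge `i` having label `g i` for `i < n` and `1`
otherwise. -/
def Diagram.ofLabels {G : Type} [One G] {n : ℕ} (g : Fin n → G) : Diagram G where
  partner := Sum.swap
  label x := if h : x.elim id id < n then g ⟨x.elim id id, h⟩ else 1
  partner_partner := Sum.swap_swap
  partner_ne x := by cases x <;> simp
  label_partner x := by cases x <;> rfl

namespace Diagram

variable {G : Type} [CommGroup G] {n : ℕ}

lemma ofLabels_injective : (ofLabels : (Fin n → G) → Diagram G).Injective := by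
  intro g h hgh
  ext i
  simpa [ofLabels] using congr($hgh |>.label (.inl i))

lemma ofLabels_one : ofLabels (1 : Fin n → G) = horizontal G := by
  ext x <;> simp [ofLabels, horizontal]

lemma twist_ofLabels (g : Fin n → G) (i : Fin n) (a : G) :
    (ofLabels g).twist (.inl i) a = ofLabels (Pi.mulSingle i a * g) := by
  ext x
  · rfl
  cases x <;> simp [LabelledMatching.twist, ofLabels, Pi.mulSingle_apply, Fin.ext_iff] <;> grind

end Diagram

section Monomials

open LabelledMatching Diagram

variable {k G : Type} [CommRing k] [CommGroup G] {ρ : G →* RingAut k} {δ : k} {n : ℕ}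

namespace GTLAlg

variable (ρ δ n) in
/-- The diagrams with horizontal edges only, as elements of `GTL_n(δ)`. -/
def labelHom : (Fin n → G) →* GTLAlg k G ρ n δ :=
  MonoidHom.noncommPiCoprod
    (fun i =>
      { toFun := fun g => t ρ δ n g i
        map_one' := (generators ρ δ n).t_one i i.2
        map_mul' := fun g h => ((generators ρ δ n).t_mul g h i i.2).symm })
    fun i j hij g h => (generators ρ δ n).t_comm g h i j i.2 j.2 (Fin.val_ne_of_ne hij)

lemma labelHom_mulSingle (i : Fin n) (g : G) :
    labelHom ρ δ n (Pi.mulSingle i g) = t ρ δ n g i :=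
  MonoidHom.noncommPiCoprod_mulSingle ..

lemma toDiagrams_labelHom (g : Fin n → G) :
    toDiagrams ρ δ n (labelHom ρ δ n g) = .single (ofLabels g) 1 := by
  let M : Submonoid (Fin n → G) :=
    { carrier := {g | ∀ h : Fin n → G, leftAction ρ δ n (labelHom ρ δ n g)
        (.single (ofLabels h) 1) = .single (ofLabels (g * h)) 1}
      one_mem' := fun h => by simp
      mul_mem' := fun {a b} ha hb h => by
        rw [map_mul, map_mul, Module.End.mul_apply, hb, ha, mul_assoc] }
  have hM : g ∈ M := Submonoid.pi_mem_of_mulSingle_mem g fun i h => by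
    rw [labelHom_mulSingle, leftAction_t _ i.2, twistOp_single, twist_ofLabels]
  rw [← mul_one (labelHom ρ δ n g), toDiagrams_mul, toDiagrams_one, ← ofLabels_one (n := n), hM 1,
    mul_one]

lemma reverse_labelHom (g : Fin n → G) :
    reverse ρ δ n (labelHom ρ δ n g) = labelHom ρ δ n g := by
  let M : Submonoid (Fin n → G) :=
    { carrier := {g | reverse ρ δ n (labelHom ρ δ n g) = labelHom ρ δ n g}
      one_mem' := by simp [reverse_one]
      mul_mem' := fun {a b} ha hb => by
        rw [Set.mem_ofPred_eq] at ha hb ⊢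
        rw [map_mul, reverse_mul, ha, hb, ← map_mul, mul_comm, map_mul] }
  exact (Submonoid.pi_mem_of_mulSingle_mem g fun i => by
    simp [M, labelHom_mulSingle, reverse_t] : g ∈ M)

variable (ρ δ n) in
/-- The products of generators of `GTL_n(δ)`. -/
def monomials : Submonoid (GTLAlg k G ρ n δ) :=
  .closure ({x | ∃ i, i + 1 < n ∧ e ρ δ n i = x} ∪ {x | ∃ g j, j < n ∧ t ρ δ n g j = x})

lemma monomials_induction {P : GTLAlg k G ρ n δ → Prop} (one : P 1)
    (he : ∀ i, i + 1 < n → ∀ x, P x → P (e ρ δ n i * x))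
    (ht : ∀ g j, j < n → ∀ x, P x → P (t ρ δ n g j * x)) {x : GTLAlg k G ρ n δ}
    (hx : x ∈ monomials ρ δ n) : P x := by
  induction hx using Submonoid.closure_induction_left with
  | one => exact one
  | mul_left y hy x _ ih =>
    obtain ⟨i, hi, rfl⟩ | ⟨g, j, hj, rfl⟩ := hy
    exacts [he i hi x ih, ht g j hj x ih]

lemma e_mem_monomials {i : ℕ} (h : i + 1 < n) : e ρ δ n i ∈ monomials ρ δ n :=
  Submonoid.subset_closure (.inl ⟨i, h, rfl⟩)

lemma t_mem_monomials (g : G) {j : ℕ} (h : j < n) : t ρ δ n g j ∈ monomials ρ δ n :=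
  Submonoid.subset_closure (.inr ⟨g, j, h, rfl⟩)

lemma span_monomials :
    Submodule.span k (monomials ρ δ n : Set (GTLAlg k G ρ n δ)) = ⊤ := by
  rw [monomials, ← Algebra.adjoin_eq_span, eq_top_iff]
  exact fun x _ => subalgebra_induction _
    (fun i hi => Algebra.subset_adjoin (.inl ⟨i, hi, rfl⟩))
    (fun g j hj => Algebra.subset_adjoin (.inr ⟨g, j, hj, rfl⟩)) x

lemma reverse_mem_monomials {x : GTLAlg k G ρ n δ} (hx : x ∈ monomials ρ δ n) :
    reverse ρ δ n x ∈ monomials ρ δ n := by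
  refine monomials_induction (P := fun x => reverse ρ δ n x ∈ monomials ρ δ n)
    (by rw [reverse_one]; exact one_mem _) (fun i hi x hx => ?_) (fun g j hj x hx => ?_) hx
  · rw [reverse_mul, reverse_e]
    exact mul_mem hx (e_mem_monomials hi)
  · rw [reverse_mul, reverse_t]
    exact mul_mem hx (t_mem_monomials g hj)

lemma exists_toDiagrams_eq_single (hδ : IsUnit δ) {x : GTLAlg k G ρ n δ}
    (hx : x ∈ monomials ρ δ n) :
    ∃ d u, IsUnit u ∧ toDiagrams ρ δ n x = .single d u := by
  refine monomials_induction (P := fun x => ∃ d u, IsUnit u ∧ toDiagrams ρ δ n x = .single d u)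
    ⟨_, 1, isUnit_one, toDiagrams_one⟩ ?_ ?_ hx
  · rintro i hi x ⟨d, u, hu, hd⟩
    refine ⟨_, _, ?_, by rw [toDiagrams_mul, hd, leftAction_e hi, hookOp_single]⟩
    refine IsUnit.mul ?_ hu
    rw [loopWeight]
    split_ifs
    exacts [hδ.map (ρ _), isUnit_one]
  · rintro g j hj x ⟨d, u, hu, hd⟩
    exact ⟨_, _, hu, by rw [toDiagrams_mul, hd, leftAction_t g hj, twistOp_single]⟩

end GTLAlg

end Monomials

/-! ### Injectivity of the diagram map -/

section LabelledHooks

open LabelledMatching Diagram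

variable {k G : Type} [CommRing k] [CommGroup G] {ρ : G →* RingAut k} {δ : k} {n : ℕ}

namespace GTLAlg

variable (ρ δ n) in
/-- The hook at the strands `m` and `m + 1` whose left edge has label `g`, and whose right edge has
label `g⁻¹`. -/
def labelledHook (m : ℕ) (g : G) : GTLAlg k G ρ n δ :=
  t ρ δ n g m * e ρ δ n m * t ρ δ n g⁻¹ m

lemma leftAction_labelledHook {m : ℕ} (h : m + 1 < n) (g : G) :
    leftAction ρ δ n (labelledHook ρ δ n m g) =
      labelledHookOp ρ δ (.inl m) (.inl (m + 1)) (by simp) g := by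
  rw [labelledHook, map_mul, map_mul, leftAction_t _ (by omega), leftAction_e h,
    leftAction_t _ (by omega), labelledHookOp]

lemma rightAction_labelledHook {m : ℕ} (h : m + 1 < n) (g : G) :
    rightAction ρ δ n (labelledHook ρ δ n m g) =
      labelledHookOp ρ δ (.inr m) (.inr (m + 1)) (by simp) g := by
  rw [labelledHook, map_mul, map_mul, rightAction_t _ (by omega), rightAction_e h,
    rightAction_t _ (by omega), labelledHookOp]

lemma t_mul_t (g h : G) (j : ℕ) : t ρ δ n g j * t ρ δ n h j = t ρ δ n (g * h) j := by
  by_cases hj : j < n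
  · exact (generators ρ δ n).t_mul g h j hj
  · simp only [t_eq_one _ hj, mul_one]

lemma t_one (j : ℕ) : t ρ δ n 1 j = 1 := by
  by_cases hj : j < n
  · exact (generators ρ δ n).t_one j hj
  · exact t_eq_one 1 hj

lemma t_commute_t (g h : G) (i j : ℕ) : Commute (t ρ δ n g i) (t ρ δ n h j) := by
  obtain rfl | hij := eq_or_ne i j
  · rw [Commute, SemiconjBy, t_mul_t, t_mul_t, mul_comm]
  by_cases hi : i < n
  · by_cases hj : j < n
    · exact (generators ρ δ n).t_comm g h i j hi hj hij
    · exact by rw [t_eq_one h hj]; exact .one_right _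
  · exact by rw [t_eq_one g hi]; exact .one_left _

lemma t_mul_labelledHook (m : ℕ) (g a : G) :
    t ρ δ n a m * labelledHook ρ δ n m g = labelledHook ρ δ n m (a * g) * t ρ δ n a m := by
  simp only [labelledHook, mul_assoc, t_mul_t]
  simp only [← mul_assoc, t_mul_t, mul_inv_rev, inv_mul_cancel_right]

lemma t_succ_mul_labelledHook {m : ℕ} (h : m + 1 < n) (g a : G) :
    t ρ δ n a (m + 1) * labelledHook ρ δ n m g = t ρ δ n a m * labelledHook ρ δ n m g := by
  have slide : t ρ δ n a m * e ρ δ n m = t ρ δ n a (m + 1) * e ρ δ n m :=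
    (generators ρ δ n).t_e_slide a m h
  simp only [labelledHook, ← mul_assoc]
  rw [t_commute_t a g, t_commute_t a g, mul_assoc _ _ (e ρ δ n m), mul_assoc _ _ (e ρ δ n m),
    slide]

lemma t_commute_labelledHook {j m : ℕ} (hj : j < n) (h : m + 1 < n) (hjm : j ≠ m)
    (hjm' : j ≠ m + 1) (a g : G) : Commute (t ρ δ n a j) (labelledHook ρ δ n m g) :=
  .mul_right (.mul_right (t_commute_t ..) ((generators ρ δ n).e_t_comm a m j h hj hjm hjm').symm)
    (t_commute_t ..)

lemma labelledHook_mul_self {m : ℕ} (h : m + 1 < n) (g : G) :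
    labelledHook ρ δ n m g * labelledHook ρ δ n m g = δ • labelledHook ρ δ n m g := by
  have e_sq : e ρ δ n m * e ρ δ n m = δ • e ρ δ n m := (generators ρ δ n).e_sq m h
  calc t ρ δ n g m * e ρ δ n m * t ρ δ n g⁻¹ m * (t ρ δ n g m * e ρ δ n m * t ρ δ n g⁻¹ m)
      = t ρ δ n g m * (e ρ δ n m * (t ρ δ n g⁻¹ m * t ρ δ n g m) * e ρ δ n m) *
          t ρ δ n g⁻¹ m := by simp only [mul_assoc]
    _ = δ • (t ρ δ n g m * e ρ δ n m * t ρ δ n g⁻¹ m) := by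
        rw [t_mul_t, inv_mul_cancel, t_one, mul_one, e_sq, mul_smul_comm, smul_mul_assoc]

lemma labelledHook_one (m : ℕ) : labelledHook ρ δ n m 1 = e ρ δ n m := by
  rw [labelledHook, inv_one, t_one, one_mul, mul_one]

lemma labelledHook_commute {i j : ℕ} (h : i + 1 < j) (hj : j + 1 < n) (g a : G) :
    Commute (labelledHook ρ δ n i g) (labelledHook ρ δ n j a) :=
  have t_comm (b : G) := t_commute_labelledHook (ρ := ρ) (δ := δ) (show i < n by omega) hj
    (by omega) (by omega) b a
  have e_t_comm (b : G) : Commute (e ρ δ n i) (t ρ δ n b j) :=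
    (generators ρ δ n).e_t_comm b i j (by omega) (by omega) (by omega) (by omega)
  .mul_left (.mul_left (t_comm g)
    (.mul_right (.mul_right (e_t_comm a) ((generators ρ δ n).e_comm i j h hj)) (e_t_comm a⁻¹)))
    (t_comm g⁻¹)

lemma labelledHook_commute_of_hasEdge {d : Diagram G} {c : ℕ → ℕ ⊕ ℕ} (hc : c.Injective) {i j : ℕ}
    {g h : G} (hi : i + 1 < n) (hj : j + 1 < n) (hdi : d.HasEdge (c i) (c (i + 1)) g)
    (hdj : d.HasEdge (c j) (c (j + 1)) h) :
    Commute (labelledHook ρ δ n i g) (labelledHook ρ δ n j h) := by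
  have partner_succ {l : ℕ} {a : G} (hl : d.HasEdge (c l) (c (l + 1)) a) :
      d.partner (c (l + 1)) = c l := by rw [← hl.1, d.partner_partner]
  obtain hij | rfl | rfl | rfl | hij : i + 1 < j ∨ j = i + 1 ∨ i = j ∨ i = j + 1 ∨ j + 1 < i := by
    omega
  · exact GTLAlg.labelledHook_commute hij hj g h
  · exact absurd (hc ((partner_succ hdi).symm.trans hdj.1)) (by omega)
  · rw [← hdi.2, ← hdj.2]
  · exact absurd (hc ((partner_succ hdj).symm.trans hdi.1)) (by omega)
  · exact (GTLAlg.labelledHook_commute hij hi h g).symm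

/-- The element `x` is, up to the factor `δ` of a loop, unchanged by stacking some labelled hook on
its left; for a nonzero multiple of a diagram this says that the diagram has a cup on the left. -/
def HasLeftCup (x : GTLAlg k G ρ n δ) : Prop :=
  ∃ m g, m + 1 < n ∧ labelledHook ρ δ n m g * x = δ • x

/-- The mirror image of `GTLAlg.HasLeftCup`. -/
def HasRightCup (x : GTLAlg k G ρ n δ) : Prop :=
  ∃ m g, m + 1 < n ∧ x * reverse ρ δ n (labelledHook ρ δ n m g) = δ • x

lemma HasLeftCup.t_mul (hδ : IsUnit δ) {x : GTLAlg k G ρ n δ} (hx : HasLeftCup x) (a : G) {j : ℕ}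
    (hj : j < n) : HasLeftCup (t ρ δ n a j * x) := by
  obtain ⟨m, g, hm, hx⟩ := hx
  have t_mul_x : labelledHook ρ δ n m (a * g) * (t ρ δ n a m * x) = δ • (t ρ δ n a m * x) := by
    rw [← mul_assoc, ← t_mul_labelledHook, mul_assoc, hx, mul_smul_comm]
  obtain rfl | hjm := eq_or_ne j m
  · exact ⟨j, _, hm, t_mul_x⟩
  obtain rfl | hjm' := eq_or_ne j (m + 1)
  · have slide : t ρ δ n a (m + 1) * x = t ρ δ n a m * x := by
      rw [← hδ.smul_left_cancel, ← mul_smul_comm, ← mul_smul_comm, ← hx, ← mul_assoc,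
        t_succ_mul_labelledHook hm, mul_assoc]
    exact ⟨m, _, hm, slide ▸ t_mul_x⟩
  · refine ⟨m, g, hm, ?_⟩
    rw [← mul_assoc, ← t_commute_labelledHook hj hm hjm hjm', mul_assoc, hx, mul_smul_comm]

lemma mem_mrange_labelHom_or_hasLeftCup (hδ : IsUnit δ) {x : GTLAlg k G ρ n δ}
    (hx : x ∈ monomials ρ δ n) : x ∈ MonoidHom.mrange (labelHom ρ δ n) ∨ HasLeftCup x := by
  refine monomials_induction (P := fun x => x ∈ MonoidHom.mrange (labelHom ρ δ n) ∨ HasLeftCup x)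
    (.inl (one_mem _)) (fun i hi x _ => .inr ⟨i, 1, hi, ?_⟩) (fun a j hj x hx => ?_) hx
  · rw [← labelledHook_one, ← mul_assoc, labelledHook_mul_self hi, smul_mul_assoc]
  · exact hx.imp (mul_mem ⟨_, labelHom_mulSingle ⟨j, hj⟩ a⟩) fun hx => hx.t_mul hδ a hj

lemma mem_mrange_labelHom_or_hasRightCup (hδ : IsUnit δ) {x : GTLAlg k G ρ n δ}
    (hx : x ∈ monomials ρ δ n) : x ∈ MonoidHom.mrange (labelHom ρ δ n) ∨ HasRightCup x := by
  obtain ⟨g, hg⟩ | ⟨m, g, hm, h⟩ :=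
    mem_mrange_labelHom_or_hasLeftCup hδ (reverse_mem_monomials hx)
  · exact .inl ⟨g, by rw [← reverse_labelHom, hg, reverse_reverse]⟩
  · refine .inr ⟨m, g, hm, ?_⟩
    rw [← reverse_reverse x, ← reverse_mul, h, map_smul, reverse_reverse]

lemma mem_mrange_labelHom_or_hasCups (hδ : IsUnit δ) {x : GTLAlg k G ρ n δ}
    (hx : x ∈ monomials ρ δ n) :
    x ∈ MonoidHom.mrange (labelHom ρ δ n) ∨ HasLeftCup x ∧ HasRightCup x :=
  or_and_left.2 ⟨mem_mrange_labelHom_or_hasLeftCup hδ hx, mem_mrange_labelHom_or_hasRightCup hδ hx⟩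

lemma hasEdge_inl_of_labelledHook_mul [Nontrivial k] (hδ : IsUnit δ) {x : GTLAlg k G ρ n δ}
    {m : ℕ} (hm : m + 1 < n) {g : G} (hx : labelledHook ρ δ n m g * x = δ • x) {d : Diagram G}
    {u : k} (hu : IsUnit u) (hd : toDiagrams ρ δ n x = .single d u) :
    d.HasEdge (.inl m) (.inl (m + 1)) g := by
  refine hasEdge_of_labelledHookOp_single ρ δ (by simp) (c := u) (hδ.mul hu).ne_zero ?_
  rw [← leftAction_labelledHook hm, ← hd, ← toDiagrams_mul, hx, map_smul, hd, Finsupp.smul_single,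
    smul_eq_mul]

lemma hasEdge_inr_of_mul_reverse_labelledHook [Nontrivial k] (hδ : IsUnit δ)
    {x : GTLAlg k G ρ n δ} {m : ℕ} (hm : m + 1 < n) {g : G}
    (hx : x * reverse ρ δ n (labelledHook ρ δ n m g) = δ • x) {d : Diagram G}
    {u : k} (hu : IsUnit u) (hd : toDiagrams ρ δ n x = .single d u) :
    d.HasEdge (.inr m) (.inr (m + 1)) g := by
  refine hasEdge_of_labelledHookOp_single ρ δ (by simp) (c := u) (hδ.mul hu).ne_zero ?_
  rw [← rightAction_labelledHook hm, ← hd, ← reverse_reverse (labelledHook ρ δ n m g),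
    ← toDiagrams_mul_eq_rightAction, hx, map_smul, hd, Finsupp.smul_single, smul_eq_mul]

lemma toDiagrams_labelledHook_mul {x : GTLAlg k G ρ n δ} {m : ℕ} (hm : m + 1 < n) {g : G}
    {d : Diagram G} {u : k} (hd : toDiagrams ρ δ n x = .single d u)
    (hdm : d.HasEdge (.inl m) (.inl (m + 1)) g) :
    toDiagrams ρ δ n (labelledHook ρ δ n m g * x) = toDiagrams ρ δ n (δ • x) := by
  rw [toDiagrams_mul, leftAction_labelledHook hm, map_smul, hd,
    labelledHookOp_single_of_hasEdge ρ δ _ hdm]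

lemma toDiagrams_mul_reverse_labelledHook {x : GTLAlg k G ρ n δ} {m : ℕ} (hm : m + 1 < n) {g : G}
    {d : Diagram G} {u : k} (hd : toDiagrams ρ δ n x = .single d u)
    (hdm : d.HasEdge (.inr m) (.inr (m + 1)) g) :
    toDiagrams ρ δ n (x * reverse ρ δ n (labelledHook ρ δ n m g)) =
      toDiagrams ρ δ n (δ • x) := by
  rw [toDiagrams_mul_eq_rightAction, reverse_reverse, rightAction_labelledHook hm, map_smul, hd,
    labelledHookOp_single_of_hasEdge ρ δ _ hdm]

lemma exists_e_eq_mul_e_zero_mul {m : ℕ} (hm : m + 1 < n) :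
    ∃ a b, e ρ δ n m = a * e ρ δ n 0 * b := by
  induction m with
  | zero => exact ⟨1, 1, by rw [one_mul, mul_one]⟩
  | succ m ih =>
    obtain ⟨a, b, hab⟩ := ih (by omega)
    have hook : e ρ δ n (m + 1) * e ρ δ n m * e ρ δ n (m + 1) = e ρ δ n (m + 1) :=
      (generators ρ δ n).e_hook_down m hm
    refine ⟨e ρ δ n (m + 1) * a, b * e ρ δ n (m + 1), hook.symm.trans ?_⟩
    simp only [hab, mul_assoc]

lemma exists_labelledHook_eq_mul_e_zero_mul {m : ℕ} (hm : m + 1 < n) (g : G) :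
    ∃ a b, labelledHook ρ δ n m g = a * e ρ δ n 0 * b := by
  obtain ⟨a, b, hab⟩ := exists_e_eq_mul_e_zero_mul (ρ := ρ) (δ := δ) hm
  exact ⟨t ρ δ n g m * a, b * t ρ δ n g⁻¹ m, by simp only [labelledHook, hab, mul_assoc]⟩

lemma labelledHook_mul_mul_reverse_labelledHook_eq_zero
    (hn : Function.Injective (toDiagrams ρ δ n)) {x : GTLAlg k G ρ (n + 2) δ}
    (hx : toDiagrams ρ δ (n + 2) x = 0) {i j : ℕ} (hi : i + 1 < n + 2) (hj : j + 1 < n + 2)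
    (g h : G) : labelledHook ρ δ (n + 2) i g * x *
      reverse ρ δ (n + 2) (labelledHook ρ δ (n + 2) j h) = 0 := by
  obtain ⟨a, b, hab⟩ := exists_labelledHook_eq_mul_e_zero_mul (ρ := ρ) (δ := δ) hi g
  obtain ⟨c, d, hcd⟩ := exists_labelledHook_eq_mul_e_zero_mul (ρ := ρ) (δ := δ) hj h
  calc _ = a * (e ρ δ (n + 2) 0 * b * x * reverse ρ δ (n + 2) d * e ρ δ (n + 2) 0) *
        reverse ρ δ (n + 2) c := by
        simp only [hab, hcd, reverse_mul, reverse_e, mul_assoc]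
    _ = 0 := by rw [e_zero_mul_mul_mul_mul_e_zero_eq_zero hn hx, mul_zero, zero_mul]

lemma eq_zero_of_hasLeftCup_of_hasRightCup (hδ : IsUnit δ)
    (hn : Function.Injective (toDiagrams ρ δ n)) {x : GTLAlg k G ρ (n + 2) δ}
    (hx : toDiagrams ρ δ (n + 2) x = 0) (hl : HasLeftCup x) (hr : HasRightCup x) : x = 0 := by
  obtain ⟨i, g, hi, hl⟩ := hl
  obtain ⟨j, h, hj, hr⟩ := hr
  have squeeze := labelledHook_mul_mul_reverse_labelledHook_eq_zero hn hx hi hj g h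
  rwa [hl, smul_mul_assoc, hr, hδ.smul_eq_zero, hδ.smul_eq_zero] at squeeze

section Cups

variable [Nontrivial k] (hδ : IsUnit δ) (hn : Function.Injective (toDiagrams ρ δ n))
  {x y : GTLAlg k G ρ (n + 2) δ} {d : Diagram G} {u v : k}

include hδ hn

lemma labelledHook_mul_eq_smul_of_hasEdge (hl : HasLeftCup x) (hr : HasRightCup x) (hu : IsUnit u)
    (hx : toDiagrams ρ δ (n + 2) x = .single d u) {i : ℕ} (hi : i + 1 < n + 2) {g : G}
    (hd : d.HasEdge (.inl i) (.inl (i + 1)) g) : labelledHook ρ δ (n + 2) i g * x = δ • x := by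
  obtain ⟨m, a, hm, hl⟩ := hl
  have comm := labelledHook_commute_of_hasEdge (ρ := ρ) (δ := δ) Sum.inl_injective hi hm hd
    (hasEdge_inl_of_labelledHook_mul hδ hm hl hu hx)
  rw [← sub_eq_zero]
  refine eq_zero_of_hasLeftCup_of_hasRightCup hδ hn ?_ ⟨m, a, hm, ?_⟩ ?_
  · rw [map_sub, toDiagrams_labelledHook_mul hi hx hd, sub_self]
  · rw [mul_sub, ← mul_assoc, ← comm, mul_assoc, hl, mul_smul_comm, mul_smul_comm, hl, smul_sub]
  · obtain ⟨j, b, hj, hr⟩ := hr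
    refine ⟨j, b, hj, ?_⟩
    rw [sub_mul, mul_assoc, smul_mul_assoc, hr, mul_smul_comm, smul_sub]

lemma mul_reverse_labelledHook_eq_smul_of_hasEdge (hl : HasLeftCup x) (hr : HasRightCup x)
    (hu : IsUnit u) (hx : toDiagrams ρ δ (n + 2) x = .single d u) {i : ℕ} (hi : i + 1 < n + 2)
    {g : G} (hd : d.HasEdge (.inr i) (.inr (i + 1)) g) :
    x * reverse ρ δ (n + 2) (labelledHook ρ δ (n + 2) i g) = δ • x := by
  obtain ⟨m, a, hm, hr⟩ := hr
  have comm := labelledHook_commute_of_hasEdge (ρ := ρ) (δ := δ) Sum.inr_injective hi hm hd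
    (hasEdge_inr_of_mul_reverse_labelledHook hδ hm hr hu hx)
  rw [← sub_eq_zero]
  refine eq_zero_of_hasLeftCup_of_hasRightCup hδ hn ?_ ?_ ⟨m, a, hm, ?_⟩
  · rw [map_sub, toDiagrams_mul_reverse_labelledHook hi hx hd, sub_self]
  · obtain ⟨j, b, hj, hl⟩ := hl
    refine ⟨j, b, hj, ?_⟩
    rw [mul_sub, ← mul_assoc, mul_smul_comm, hl, smul_mul_assoc, smul_sub]
  · rw [sub_mul, mul_assoc, ← reverse_mul, ← comm.eq, reverse_mul, ← mul_assoc, hr, smul_mul_assoc,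
      smul_mul_assoc, hr, smul_sub]

lemma smul_eq_smul_of_toDiagrams_eq_single (hxl : HasLeftCup x) (hxr : HasRightCup x)
    (hyl : HasLeftCup y) (hyr : HasRightCup y) (hu : IsUnit u) (hv : IsUnit v)
    (hx : toDiagrams ρ δ (n + 2) x = .single d u) (hy : toDiagrams ρ δ (n + 2) y = .single d v) :
    v • x = u • y := by
  obtain ⟨i, g, hi, hxi⟩ := id hxl
  obtain ⟨j, h, hj, hxj⟩ := id hxr
  have hyi := labelledHook_mul_eq_smul_of_hasEdge hδ hn hyl hyr hv hy hi
    (hasEdge_inl_of_labelledHook_mul hδ hi hxi hu hx)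
  have hyj := mul_reverse_labelledHook_eq_smul_of_hasEdge hδ hn hyl hyr hv hy hj
    (hasEdge_inr_of_mul_reverse_labelledHook hδ hj hxj hu hx)
  rw [← sub_eq_zero]
  refine eq_zero_of_hasLeftCup_of_hasRightCup hδ hn ?_ ⟨i, g, hi, ?_⟩ ⟨j, h, hj, ?_⟩
  · rw [map_sub, map_smul, map_smul, hx, hy, Finsupp.smul_single, Finsupp.smul_single,
      smul_eq_mul, smul_eq_mul, mul_comm, sub_self]
  · rw [mul_sub, mul_smul_comm, mul_smul_comm, hxi, hyi, smul_sub, smul_comm v, smul_comm u]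
  · rw [sub_mul, smul_mul_assoc, smul_mul_assoc, hxj, hyj, smul_sub, smul_comm v, smul_comm u]

end Cups

lemma eq_of_toDiagrams_labelHom_eq_single [Nontrivial k] {g : Fin n → G} {d : Diagram G} {u : k}
    (h : toDiagrams ρ δ n (labelHom ρ δ n g) = .single d u) : ofLabels g = d ∧ 1 = u := by
  rw [toDiagrams_labelHom] at h
  exact ((Finsupp.single_eq_single_iff ..).1 h).resolve_right fun h => one_ne_zero h.1

lemma not_hasLeftCup_of_toDiagrams_eq_single_ofLabels [Nontrivial k] (hδ : IsUnit δ)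
    {x : GTLAlg k G ρ n δ} {g : Fin n → G} {u : k} (hu : IsUnit u)
    (hx : toDiagrams ρ δ n x = .single (ofLabels g) u) : ¬ HasLeftCup x := by
  rintro ⟨m, a, hm, h⟩
  have partner := (hasEdge_inl_of_labelledHook_mul hδ hm h hu hx).1
  simp [ofLabels] at partner

end GTLAlg

lemma injective_of_span_eq_top_of_single {D M : Type} [AddCommGroup M] [Module k M]
    (φ : M →ₗ[k] (D →₀ k)) {S : Set M} (hS : Submodule.span k S = ⊤)
    (hφ : ∀ x ∈ S, ∃ d u, IsUnit u ∧ φ x = .single d u)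
    (h : ∀ x ∈ S, ∀ y ∈ S, ∀ d u v, IsUnit u → IsUnit v → φ x = .single d u →
      φ y = .single d v → v • x = u • y) : Function.Injective φ := by
  classical
  have exists_section (d : D) : ∃ m, ∀ x ∈ S, ∀ u, IsUnit u → φ x = .single d u → u • m = x := by
    by_cases hd : ∃ x ∈ S, ∃ u, IsUnit u ∧ φ x = .single d u
    · obtain ⟨y, hy, v, hv, hyd⟩ := hd
      refine ⟨hv.unit⁻¹ • y, fun x hx u hu hxd => ?_⟩
      rw [smul_comm, inv_smul_eq_iff, ← h x hx y hy d u v hu hv hxd hyd]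
      rfl
    · exact ⟨0, fun x hx u hu hxd => (hd ⟨x, hx, u, hu, hxd⟩).elim⟩
  choose s hs using exists_section
  have leftInverse : Finsupp.linearCombination k s ∘ₗ φ = LinearMap.id :=
    LinearMap.ext_on hS fun x hx => by
      obtain ⟨d, u, hu, hxd⟩ := hφ x hx
      rw [LinearMap.comp_apply, hxd, Finsupp.linearCombination_single, hs d x hx u hu hxd,
        LinearMap.id_apply]
  exact Function.LeftInverse.injective (g := Finsupp.linearCombination k s)
    fun x => congr($leftInverse x)

namespace GTLAlg

theorem toDiagrams_injective (hδ : IsUnit δ) : Function.Injective (toDiagrams ρ δ n) := by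
  obtain _ | _ := subsingleton_or_nontrivial k
  · have := Module.subsingleton k (GTLAlg k G ρ n δ)
    exact Function.injective_of_subsingleton _
  induction n using Nat.strong_induction_on with | _ n ih
  refine injective_of_span_eq_top_of_single _ span_monomials
    (fun x => exists_toDiagrams_eq_single hδ) fun x hx y hy d u v hu hv hxd hyd => ?_
  obtain ⟨g, rfl⟩ | ⟨hxl, hxr⟩ := mem_mrange_labelHom_or_hasCups hδ hx <;>
    obtain ⟨h, rfl⟩ | ⟨hyl, hyr⟩ := mem_mrange_labelHom_or_hasCups hδ hy
  · obtain ⟨rfl, rfl⟩ := eq_of_toDiagrams_labelHom_eq_single hxd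
    obtain ⟨hgh, rfl⟩ := eq_of_toDiagrams_labelHom_eq_single hyd
    rw [ofLabels_injective hgh]
  · obtain ⟨rfl, rfl⟩ := eq_of_toDiagrams_labelHom_eq_single hxd
    exact absurd hyl (not_hasLeftCup_of_toDiagrams_eq_single_ofLabels hδ hv hyd)
  · obtain ⟨rfl, rfl⟩ := eq_of_toDiagrams_labelHom_eq_single hyd
    exact absurd hxl (not_hasLeftCup_of_toDiagrams_eq_single_ofLabels hδ hu hxd)
  · obtain ⟨m, rfl⟩ : ∃ m, n = m + 2 := by
      obtain ⟨i, -, hi, -⟩ := hxl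
      exact ⟨n - 2, by omega⟩
    exact smul_eq_smul_of_toDiagrams_eq_single hδ (ih m (by omega)) hxl hxr hyl hyr hu hv hxd hyd

end GTLAlg
end LabelledHooks

/-! ### Ideals spanned by diagrams -/

section PlanarDiagrams

open LabelledMatching Diagram GTLAlg

lemma LabelledMatching.weightedMap_mem_supported {X G : Type} {k : Type} [CommRing k]
    {f : LabelledMatching X G → LabelledMatching X G} {S T : Set (LabelledMatching X G)}
    (hf : ∀ d ∈ S, f d ∈ T) (w : LabelledMatching X G → k) {z : LabelledMatching X G →₀ k}
    (hz : z ∈ Finsupp.supported k k S) : weightedMap f w z ∈ Finsupp.supported k k T := by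
  suffices Finsupp.supported k k S ≤ (Finsupp.supported k k T).comap (weightedMap f w) from this hz
  rw [Finsupp.supported_eq_span_single, Submodule.span_le]
  rintro _ ⟨d, hd, rfl⟩
  simpa only [Submodule.comap_coe, Set.mem_preimage, SetLike.mem_coe, weightedMap_single] using
    Finsupp.single_mem_supported k _ (hf d hd)

variable {k G : Type} [CommRing k] [CommGroup G] {ρ : G →* RingAut k} {δ : k} {n : ℕ}

namespace GTLAlg

variable (ρ δ n) in
/-- The labelled diagrams of the elements of `GTL_n(δ)`: the planar ones, with edges labelled
arbitrarily. -/
def planarDiagrams : Set (Diagram G) :=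
  {d | .single d 1 ∈ LinearMap.range (toDiagrams ρ δ n)}

lemma range_toDiagrams (hδ : IsUnit δ) :
    LinearMap.range (toDiagrams ρ δ n) = Finsupp.supported k k (planarDiagrams ρ δ n) := by
  refine le_antisymm ?_ ?_
  · rw [LinearMap.range_eq_map, ← span_monomials, Submodule.map_span_le]
    intro x hx
    obtain ⟨d, u, hu, hd⟩ := exists_toDiagrams_eq_single hδ hx
    refine hd ▸ Finsupp.single_mem_supported k u ⟨Ring.inverse u • x, ?_⟩
    rw [map_smul, hd, Finsupp.smul_single, smul_eq_mul, Ring.inverse_mul_cancel u hu]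
  · rw [Finsupp.supported_eq_span_single, Submodule.span_le]
    exact Set.image_subset_iff.2 fun d hd => hd

lemma free (hδ : IsUnit δ) : Module.Free k (GTLAlg k G ρ n δ) :=
  .of_equiv (LinearEquiv.ofInjective _ (toDiagrams_injective hδ) ≪≫ₗ
    LinearEquiv.ofEq _ _ (range_toDiagrams hδ) ≪≫ₗ Finsupp.supportedEquivFinsupp _).symm

lemma mem_of_toDiagrams_mem_supported (hδ : IsUnit δ) {S : Set (Diagram G)}
    {M : Submodule k (GTLAlg k G ρ n δ)}
    (hM : ∀ d ∈ S, ∀ y, toDiagrams ρ δ n y = .single d 1 → y ∈ M) {x : GTLAlg k G ρ n δ}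
    (hx : toDiagrams ρ δ n x ∈ Finsupp.supported k k S) : x ∈ M := by
  have hS : toDiagrams ρ δ n x ∈ Finsupp.supported k k (planarDiagrams ρ δ n ∩ S) := by
    rw [Finsupp.supported_inter, ← range_toDiagrams hδ]
    exact ⟨⟨x, rfl⟩, hx⟩
  suffices Finsupp.supported k k (planarDiagrams ρ δ n ∩ S) ≤ M.map (toDiagrams ρ δ n) by
    obtain ⟨y, hy, hxy⟩ := this hS
    exact toDiagrams_injective hδ hxy ▸ hy
  rw [Finsupp.supported_eq_span_single, Submodule.span_le]
  rintro _ ⟨d, ⟨⟨y, hy⟩, hd⟩, rfl⟩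
  exact ⟨y, hM d hd y hy, hy⟩

end GTLAlg

/-- The sets of diagrams which are stable under stacking diagrams on the left. -/
structure Diagram.LeftStable (S : Set (Diagram G)) : Prop where
  hook_mem (i : ℕ) (d : Diagram G) (hd : d ∈ S) : d.hook (.inl i) (.inl (i + 1)) (by simp) ∈ S
  twist_mem (g : G) (i : ℕ) (d : Diagram G) (hd : d ∈ S) : d.twist (.inl i) g ∈ S

namespace Diagram.LeftStable

variable {S T : Set (Diagram G)}

lemma inter (hS : LeftStable S) (hT : LeftStable T) : LeftStable (S ∩ T) where
  hook_mem i d hd := ⟨hS.hook_mem i d hd.1, hT.hook_mem i d hd.2⟩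
  twist_mem g i d hd := ⟨hS.twist_mem g i d hd.1, hT.twist_mem g i d hd.2⟩

lemma toDiagrams_mul_mem_supported (hS : LeftStable S) (a : GTLAlg k G ρ n δ)
    {x : GTLAlg k G ρ n δ} (hx : toDiagrams ρ δ n x ∈ Finsupp.supported k k S) :
    toDiagrams ρ δ n (a * x) ∈ Finsupp.supported k k S := by
  refine mul_mem_of_generators_mul_mem
    (M := (Finsupp.supported k k S).comap (toDiagrams ρ δ n)) ?_ ?_ a hx
  · intro i hi y hy
    rw [Submodule.mem_comap, toDiagrams_mul, leftAction_e hi]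
    exact weightedMap_mem_supported (hS.hook_mem i) _ hy
  · intro g j hj y hy
    rw [Submodule.mem_comap, toDiagrams_mul, leftAction_t g hj]
    exact weightedMap_mem_supported (hS.twist_mem g j) _ hy

end Diagram.LeftStable

namespace GTLAlg

variable (ρ δ n) in
/-- The left ideal of linear combinations of planar diagrams in `S`, if `S` is stable under stacking
diagrams on the left; for arbitrary `S`, the largest left ideal all of whose elements are linear
combinations of diagrams in `S`. -/
def diagramIdeal (S : Set (Diagram G)) : Ideal (GTLAlg k G ρ n δ) where
  carrier := {x | ∀ a, toDiagrams ρ δ n (a * x) ∈ Finsupp.supported k k S}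
  zero_mem' a := by rw [mul_zero, map_zero]; exact zero_mem _
  add_mem' hx hy a := by rw [mul_add, map_add]; exact add_mem (hx a) (hy a)
  smul_mem' b x hx a := by rw [smul_eq_mul, ← mul_assoc]; exact hx (a * b)

variable {S T : Set (Diagram G)}

lemma mem_diagramIdeal (hS : LeftStable S) {x : GTLAlg k G ρ n δ} :
    x ∈ diagramIdeal ρ δ n S ↔ toDiagrams ρ δ n x ∈ Finsupp.supported k k S :=
  ⟨fun hx => one_mul x ▸ hx 1, fun hx a => hS.toDiagrams_mul_mem_supported a hx⟩

lemma diagramIdeal_mono (h : S ⊆ T) : diagramIdeal ρ δ n S ≤ diagramIdeal ρ δ n T :=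
  fun _ hx a => Finsupp.supported_mono h (hx a)

lemma diagramIdeal_inter :
    diagramIdeal ρ δ n (S ∩ T) = diagramIdeal ρ δ n S ⊓ diagramIdeal ρ δ n T := by
  refine le_antisymm (le_inf (diagramIdeal_mono Set.inter_subset_left)
    (diagramIdeal_mono Set.inter_subset_right)) fun x hx a => ?_
  rw [Finsupp.supported_inter]
  exact ⟨hx.1 a, hx.2 a⟩

lemma diagramIdeal_union (hδ : IsUnit δ) (hS : LeftStable S) (hT : LeftStable T) :
    diagramIdeal ρ δ n (S ∪ T) = diagramIdeal ρ δ n S ⊔ diagramIdeal ρ δ n T := by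
  refine le_antisymm (fun x hx => ?_) (sup_le (diagramIdeal_mono Set.subset_union_left)
    (diagramIdeal_mono Set.subset_union_right))
  refine mem_of_toDiagrams_mem_supported hδ
    (M := (diagramIdeal ρ δ n S ⊔ diagramIdeal ρ δ n T).restrictScalars k) ?_ (one_mul x ▸ hx 1)
  rintro d (hd | hd) y hy
  · exact Submodule.mem_sup_left
      ((mem_diagramIdeal hS).2 (hy ▸ Finsupp.single_mem_supported k 1 hd))
  · exact Submodule.mem_sup_right
      ((mem_diagramIdeal hT).2 (hy ▸ Finsupp.single_mem_supported k 1 hd))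

end GTLAlg

end PlanarDiagrams

section RightCups

open LabelledMatching Diagram GTLAlg

namespace Diagram

/-- The diagrams with an edge of label `g` between the nodes `m` and `m + 1` on the right. -/
def labelledRightCups {G : Type} (m : ℕ) (g : G) : Set (Diagram G) :=
  {d | d.HasEdge (.inr m) (.inr (m + 1)) g}

/-- The diagrams with an edge between the nodes `m` and `m + 1` on the right. -/
def rightCups (G : Type) (m : ℕ) : Set (Diagram G) := ⋃ g : G, labelledRightCups m g

/-- The diagrams with an edge between some nodes `j` and `j + 1` with `j < m` on the right. -/
def rightCupsBelow (G : Type) (m : ℕ) : Set (Diagram G) := ⋃ j < m, rightCups G j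

section

variable {G : Type}

lemma mem_rightCups {d : Diagram G} {m : ℕ} :
    d ∈ rightCups G m ↔ d.partner (.inr m) = .inr (m + 1) := by
  simp [rightCups, labelledRightCups, HasEdge]

lemma rightCupsBelow_zero : rightCupsBelow G 0 = ∅ := by
  simp [rightCupsBelow]

lemma rightCupsBelow_succ (m : ℕ) :
    rightCupsBelow G (m + 1) = rightCupsBelow G m ∪ rightCups G m :=
  Set.biUnion_lt_succ (rightCups G) m

lemma rightCupsBelow_inter_rightCups (m : ℕ) :
    rightCupsBelow G m ∩ rightCups G m = rightCupsBelow G (m - 1) ∩ rightCups G m := by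
  obtain _ | m := m
  · rfl
  have h : Disjoint (rightCups G m) (rightCups G (m + 1)) := Set.disjoint_left.2 fun d hd hd' => by
    have := d.partner_partner (.inr m)
    rw [mem_rightCups.1 hd, mem_rightCups.1 hd', Sum.inr.injEq] at this
    omega
  rw [rightCupsBelow_succ, Set.union_inter_distrib_right, h.inter_eq, Set.union_empty]
  rfl

end

variable {G : Type} [CommGroup G]

namespace LeftStable

lemma iUnion {ι : Sort*} {S : ι → Set (Diagram G)} (h : ∀ i, LeftStable (S i)) :
    LeftStable (⋃ i, S i) where
  hook_mem j d hd := by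
    obtain ⟨i, hi⟩ := Set.mem_iUnion.1 hd
    exact Set.mem_iUnion.2 ⟨i, (h i).hook_mem j d hi⟩
  twist_mem g j d hd := by
    obtain ⟨i, hi⟩ := Set.mem_iUnion.1 hd
    exact Set.mem_iUnion.2 ⟨i, (h i).twist_mem g j d hi⟩

lemma univ : LeftStable (Set.univ : Set (Diagram G)) :=
  ⟨fun _ _ _ => trivial, fun _ _ _ _ => trivial⟩

lemma labelledRightCups (m : ℕ) (g : G) : LeftStable (labelledRightCups m g) where
  hook_mem _ _ hd := HasEdge.hook_of_ne hd _ (by simp) (by simp)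
  twist_mem a _ _ hd := HasEdge.twist_of_ne hd (by simp) (by simp) a

lemma rightCups (m : ℕ) : LeftStable (rightCups G m) := iUnion (labelledRightCups m)

lemma rightCupsBelow (m : ℕ) : LeftStable (rightCupsBelow G m) :=
  iUnion fun j => iUnion fun _ => rightCups j

end LeftStable

lemma hook_mem_rightCupsBelow {m : ℕ} {d : Diagram G} (hd : d ∈ rightCupsBelow G (m - 1)) :
    d.hook (.inr m) (.inr (m + 1)) (by simp) ∈ rightCupsBelow G (m - 1) := by
  simp only [rightCupsBelow, rightCups, Set.mem_iUnion] at hd ⊢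
  obtain ⟨j, hj, g, hd⟩ := hd
  exact ⟨j, hj, g, hd.hook_of_ne _ (by grind) (by grind)⟩

lemma twist_mem_rightCupsBelow {m : ℕ} (a : G) {d : Diagram G}
    (hd : d ∈ rightCupsBelow G (m - 1)) : d.twist (.inr m) a ∈ rightCupsBelow G (m - 1) := by
  simp only [rightCupsBelow, rightCups, Set.mem_iUnion] at hd ⊢
  obtain ⟨j, hj, g, hd⟩ := hd
  exact ⟨j, hj, g, hd.twist_of_ne (by grind) (by grind) a⟩

end Diagram

variable {k G : Type} [CommRing k] [CommGroup G] {ρ : G →* RingAut k} {δ : k} {n : ℕ}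

namespace GTLAlg

lemma aug_e (i : ℕ) : GTLaug k G ρ n δ (e ρ δ n i) = 0 := by
  rw [e]
  split_ifs with h
  · exact (RingQuot.liftAlgHom_mkAlgHom_apply ..).trans (FreeAlgebra.lift_ι_apply ..)
  · exact map_zero _

lemma aug_t (g : G) (j : ℕ) : GTLaug k G ρ n δ (t ρ δ n g j) = 1 := by
  rw [t]
  split_ifs with h
  · exact (RingQuot.liftAlgHom_mkAlgHom_apply ..).trans (FreeAlgebra.lift_ι_apply ..)
  · exact map_one _

variable {S T Q : Set (Diagram G)} {m : ℕ} {x : GTLAlg k G ρ n δ}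

lemma mul_e_mem_diagramIdeal (hm : m + 1 < n)
    (h : ∀ d ∈ S, d.hook (.inr m) (.inr (m + 1)) (by simp) ∈ T)
    (hx : x ∈ diagramIdeal ρ δ n S) : x * e ρ δ n m ∈ diagramIdeal ρ δ n T := fun a => by
  rw [← mul_assoc, toDiagrams_mul_eq_rightAction, reverse_e, rightAction_e hm]
  exact weightedMap_mem_supported h _ (hx a)

lemma mul_t_mem_diagramIdeal (hm : m < n) {g : G} (h : ∀ d ∈ S, d.twist (.inr m) g ∈ T)
    (hx : x ∈ diagramIdeal ρ δ n S) : x * t ρ δ n g m ∈ diagramIdeal ρ δ n T := fun a => by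
  rw [← mul_assoc, toDiagrams_mul_eq_rightAction, reverse_t, rightAction_t g hm]
  exact weightedMap_mem_supported h _ (hx a)

lemma mul_e_of_mem_diagramIdeal (hδ : IsUnit δ) (hm : m + 1 < n)
    (hx : x ∈ diagramIdeal ρ δ n (labelledRightCups m 1)) : x * e ρ δ n m = δ • x := by
  refine mem_of_toDiagrams_mem_supported hδ (M := LinearMap.eqLocus
    (LinearMap.mulRight k (e ρ δ n m)) (LinearMap.lsmul k _ δ)) (fun d hd y hy => ?_)
    ((mem_diagramIdeal (.labelledRightCups m 1)).1 hx)
  refine toDiagrams_injective hδ (?_ : toDiagrams ρ δ n (y * e ρ δ n m) = _)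
  rw [toDiagrams_mul_eq_rightAction, reverse_e, rightAction_e hm, hy,
    hookOp_single_of_hasEdge ρ δ _ hd, LinearMap.lsmul_apply, map_smul, hy]

variable (hδ : IsUnit δ) (hm : m + 1 < n)
include hδ hm

lemma mul_inverse_smul_e_of_mem_diagramIdeal
    (hx : x ∈ diagramIdeal ρ δ n (labelledRightCups m 1)) :
    x * (Ring.inverse δ • e ρ δ n m) = x := by
  rw [mul_smul_comm, mul_e_of_mem_diagramIdeal hδ hm hx, smul_smul, Ring.inverse_mul_cancel δ hδ,
    one_smul]

lemma torAcyclic_labelledRightCups :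
    TorAcyclic (GTLaug k G ρ n δ) (diagramIdeal ρ δ n (labelledRightCups m (1 : G))) := by
  refine .of_right_unit (b := Ring.inverse δ • e ρ δ n m) ?_
    (fun _ => mul_inverse_smul_e_of_mem_diagramIdeal hδ hm) (by rw [map_smul, aug_e, smul_zero])
  have one_mem : (1 : GTLAlg k G ρ n δ) ∈ diagramIdeal ρ δ n Set.univ :=
    (mem_diagramIdeal .univ).2 (by rw [Finsupp.supported_univ]; exact Submodule.mem_top)
  have he := mul_e_mem_diagramIdeal (T := labelledRightCups m 1) hm
    (fun d _ => HasEdge.hook_self d _) one_mem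
  exact Submodule.smul_of_tower_mem _ _ (one_mul (e ρ δ n m) ▸ he)

lemma torAcyclic_inter_labelledRightCups
    (hS : ∀ d ∈ S, d.hook (.inr m) (.inr (m + 1)) (by simp) ∈ S)
    (h : TorAcyclic (GTLaug k G ρ n δ) (diagramIdeal ρ δ n S)) :
    TorAcyclic (GTLaug k G ρ n δ) (diagramIdeal ρ δ n (S ∩ labelledRightCups m (1 : G))) := by
  refine .of_mul_right (diagramIdeal_mono Set.inter_subset_left) (fun x hx => ?_)
    (fun x hx => mul_inverse_smul_e_of_mem_diagramIdeal hδ hm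
      (diagramIdeal_mono Set.inter_subset_right hx)) h
  rw [mul_smul_comm]
  exact Submodule.smul_of_tower_mem _ _
    (mul_e_mem_diagramIdeal hm (fun d hd => ⟨hS d hd, HasEdge.hook_self d _⟩) hx)

omit hδ hm

variable (ρ δ n) in
/-- The map `f ↦ ∑ g, f g * t g m` which decomposes the span of the diagrams in `S` with a cup at
`m` according to the label of that cup. -/
def cupSum (S : Set (Diagram G)) (m : ℕ) :
    (G →₀ diagramIdeal ρ δ n (S ∩ labelledRightCups m 1)) →ₗ[GTLAlg k G ρ n δ] GTLAlg k G ρ n δ :=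
  Finsupp.lsum ℕ fun g => LinearMap.toSpanSingleton _ _ (t ρ δ n g m) ∘ₗ Submodule.subtype _

lemma cupSum_apply (f : G →₀ diagramIdeal ρ δ n (S ∩ labelledRightCups m 1)) :
    cupSum ρ δ n S m f = f.sum fun g x => x * t ρ δ n g m := rfl

lemma mul_t_mem_labelledRightCups (hm : m < n)
    (hS : ∀ g, ∀ d ∈ S, d.twist (.inr m) g ∈ S) (a g : G)
    (hx : x ∈ diagramIdeal ρ δ n (S ∩ labelledRightCups m a)) :
    x * t ρ δ n g m ∈ diagramIdeal ρ δ n (S ∩ labelledRightCups m (g * a)) :=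
  mul_t_mem_diagramIdeal hm (fun d hd => ⟨hS g d hd.1, HasEdge.twist_self hd.2 g⟩) hx

lemma toDiagrams_cupSum_apply (hm : m < n) (hS : ∀ g, ∀ d ∈ S, d.twist (.inr m) g ∈ S)
    (f : G →₀ diagramIdeal ρ δ n (S ∩ labelledRightCups m 1)) {a : G} {d : Diagram G}
    (hd : d ∈ labelledRightCups m a) :
    toDiagrams ρ δ n (cupSum ρ δ n S m f) d = toDiagrams ρ δ n (f a * t ρ δ n a m) d := by
  have apply_of_ne (g : G) (hg : g ≠ a) : toDiagrams ρ δ n (f g * t ρ δ n g m) d = 0 := by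
    have mem := mul_t_mem_labelledRightCups hm hS 1 g (f g).2
    rw [mul_one] at mem
    exact (Finsupp.mem_supported' k _).1
      ((mem_diagramIdeal (.labelledRightCups m g)).1 (diagramIdeal_mono Set.inter_subset_right mem))
      d fun h => hg (h.2.symm.trans hd.2)
  rw [cupSum_apply, Finsupp.sum, map_sum, Finsupp.finsetSum_apply]
  refine Finset.sum_eq_single a (fun g _ => apply_of_ne g) fun ha => ?_
  rw [Finsupp.notMem_support_iff.1 ha, ZeroMemClass.coe_zero, zero_mul, map_zero,
    Finsupp.zero_apply]

lemma cupSum_injective (hδ : IsUnit δ) (hm : m < n)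
    (hS : ∀ g, ∀ d ∈ S, d.twist (.inr m) g ∈ S) : Function.Injective (cupSum ρ δ n S m) := by
  refine fun f f' hf => Finsupp.ext fun a => Subtype.ext ?_
  have supported (f : G →₀ diagramIdeal ρ δ n (S ∩ labelledRightCups m 1)) :
      toDiagrams ρ δ n (f a * t ρ δ n a m) ∈ Finsupp.supported k k (labelledRightCups m a) := by
    have := diagramIdeal_mono Set.inter_subset_right
      (mul_t_mem_labelledRightCups hm hS 1 a (f a).2)
    rwa [mul_one, mem_diagramIdeal (.labelledRightCups m a)] at this
  have mul_t_eq : f a * t ρ δ n a m = f' a * t ρ δ n a m := by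
    refine toDiagrams_injective hδ (Finsupp.ext fun d => ?_)
    by_cases hd : d ∈ labelledRightCups m a
    · rw [← toDiagrams_cupSum_apply hm hS f hd, hf, toDiagrams_cupSum_apply hm hS f' hd]
    · rw [(Finsupp.mem_supported' k _).1 (supported f) d hd,
        (Finsupp.mem_supported' k _).1 (supported f') d hd]
  have := congr($mul_t_eq * t ρ δ n a⁻¹ m)
  rwa [mul_assoc, mul_assoc, t_mul_t, mul_inv_cancel, t_one, mul_one, mul_one] at this

lemma range_cupSum (hδ : IsUnit δ) (hm : m < n) (hS : LeftStable S)
    (hS' : ∀ g, ∀ d ∈ S, d.twist (.inr m) g ∈ S) :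
    LinearMap.range (cupSum ρ δ n S m) = diagramIdeal ρ δ n (S ∩ rightCups G m) := by
  refine le_antisymm ?_ fun x hx => ?_
  · rintro _ ⟨f, rfl⟩
    refine sum_mem fun g _ => ?_
    exact diagramIdeal_mono (Set.inter_subset_inter_right _ (Set.subset_iUnion _ _))
      (mul_t_mem_labelledRightCups hm hS' 1 g (f g).2)
  · refine mem_of_toDiagrams_mem_supported hδ
      (M := (LinearMap.range (cupSum ρ δ n S m)).restrictScalars k) (fun d hd y hy => ?_)
      ((mem_diagramIdeal (hS.inter (.rightCups m))).1 hx)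
    obtain ⟨g, hg⟩ := Set.mem_iUnion.1 hd.2
    have hyg : y * t ρ δ n g⁻¹ m ∈ diagramIdeal ρ δ n (S ∩ labelledRightCups m 1) := by
      refine inv_mul_cancel g ▸ mul_t_mem_labelledRightCups hm hS' g g⁻¹ ?_
      refine (mem_diagramIdeal (hS.inter (.labelledRightCups m g))).2 ?_
      exact hy ▸ Finsupp.single_mem_supported k 1 ⟨hd.1, hg⟩
    refine ⟨.single g ⟨_, hyg⟩, ?_⟩
    rw [cupSum_apply, Finsupp.sum_single_index (by simp), mul_assoc, t_mul_t, inv_mul_cancel, t_one,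
      mul_one]

lemma torAcyclic_inter_rightCups (hδ : IsUnit δ) (hm : m < n) (hS : LeftStable S)
    (hS' : ∀ g, ∀ d ∈ S, d.twist (.inr m) g ∈ S)
    (h : TorAcyclic (GTLaug k G ρ n δ) (diagramIdeal ρ δ n (S ∩ labelledRightCups m (1 : G)))) :
    TorAcyclic (GTLaug k G ρ n δ) (diagramIdeal ρ δ n (S ∩ rightCups G m)) :=
  .of_finsuppEquiv (LinearEquiv.ofInjective _ (cupSum_injective hδ hm hS') ≪≫ₗ
    LinearEquiv.ofEq _ _ (range_cupSum hδ hm hS hS')) h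

lemma torAcyclic_rightCups (hδ : IsUnit δ) (hm : m + 1 < n) :
    TorAcyclic (GTLaug k G ρ n δ) (diagramIdeal ρ δ n (rightCups G m)) := by
  have h := torAcyclic_labelledRightCups (ρ := ρ) hδ hm
  rw [← Set.univ_inter (labelledRightCups m 1)] at h
  rw [← Set.univ_inter (rightCups G m)]
  exact torAcyclic_inter_rightCups hδ (by omega) .univ (fun _ _ _ => trivial) h

lemma torAcyclic_rightCupsBelow (hδ : IsUnit δ) :
    ∀ m ≤ n - 1, TorAcyclic (GTLaug k G ρ n δ) (diagramIdeal ρ δ n (rightCupsBelow G m)) := by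
  have := free (ρ := ρ) (n := n) hδ
  intro m
  induction m using Nat.strong_induction_on with
  | _ m ih =>
    intro hm
    obtain _ | m := m
    · rw [rightCupsBelow_zero]
      refine .of_right_unit (b := 0) (zero_mem _) (fun x hx => ?_) (map_zero _)
      have supported := hx 1
      rw [one_mul, Finsupp.supported_empty, Submodule.mem_bot] at supported
      rw [mul_zero, toDiagrams_injective hδ (supported.trans (map_zero _).symm)]
    · have inter : TorAcyclic (GTLaug k G ρ n δ)
          (diagramIdeal ρ δ n (rightCupsBelow G m ∩ rightCups G m)) := by
        rw [rightCupsBelow_inter_rightCups]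
        refine torAcyclic_inter_rightCups hδ (by omega) (.rightCupsBelow _)
          (fun a _ => twist_mem_rightCupsBelow a) ?_
        exact torAcyclic_inter_labelledRightCups hδ (by omega)
          (fun _ => hook_mem_rightCupsBelow) (ih (m - 1) (by omega) (by omega))
      rw [rightCupsBelow_succ, diagramIdeal_union hδ (.rightCupsBelow m) (.rightCups m)]
      rw [diagramIdeal_inter] at inter
      exact (ih m (by omega) (by omega)).sup (torAcyclic_rightCups hδ (by omega)) inter

end GTLAlg

end RightCups

/-! ### The projection onto the group algebra -/

section GroupAlgebra

open Diagram

variable {k G : Type} [CommRing k] [CommGroup G] {ρ : G →* RingAut k} {δ : k} {n : ℕ}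

namespace GTLAlg

variable (ρ δ n) in
/-- The projection of `GTL_n(δ)` onto `k[G^n]` which kills the hooks. -/
def toGroupAlgebra : GTLAlg k G ρ n δ →ₐ[k] MonoidAlgebra k (Fin n → G) :=
  (GTLSystem.ofPi ρ δ n).lift

variable (ρ δ n) in
/-- The section of `toGroupAlgebra` which identifies `k[G^n]` with the span of the diagrams with
horizontal edges only. -/
def ofGroupAlgebra : MonoidAlgebra k (Fin n → G) →ₐ[k] GTLAlg k G ρ n δ :=
  MonoidAlgebra.lift k _ _ (labelHom ρ δ n)

lemma toGroupAlgebra_e (i : ℕ) : toGroupAlgebra ρ δ n (e ρ δ n i) = 0 := by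
  by_cases hi : i + 1 < n
  · exact GTLSystem.lift_e _ hi
  · rw [e_eq_zero hi, map_zero]

lemma toGroupAlgebra_t (g : G) (j : Fin n) :
    toGroupAlgebra ρ δ n (t ρ δ n g j) = MonoidAlgebra.of k _ (Pi.mulSingle j g) :=
  (GTLSystem.lift_t _ g j.2).trans (dif_pos j.2)

lemma toGroupAlgebra_labelHom (g : Fin n → G) :
    toGroupAlgebra ρ δ n (labelHom ρ δ n g) = MonoidAlgebra.of k _ g := by
  have h : (toGroupAlgebra ρ δ n).toMonoidHom.comp (labelHom ρ δ n) = MonoidAlgebra.of k _ :=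
    MonoidHom.functions_ext _ _ _ fun j g =>
      (congrArg _ (labelHom_mulSingle j g)).trans (toGroupAlgebra_t g j)
  exact congr($h g)

lemma toGroupAlgebra_ofGroupAlgebra (b : MonoidAlgebra k (Fin n → G)) :
    toGroupAlgebra ρ δ n (ofGroupAlgebra ρ δ n b) = b := by
  have h : (toGroupAlgebra ρ δ n).comp (ofGroupAlgebra ρ δ n) = .id k _ :=
    MonoidAlgebra.algHom_ext (fun g => (congrArg _ (MonoidAlgebra.lift_of _ g)).trans
      (toGroupAlgebra_labelHom g)) (Subsingleton.elim _ _)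
  exact congr($h b)

lemma toGroupAlgebra_surjective : Function.Surjective (toGroupAlgebra ρ δ n) :=
  Function.LeftInverse.surjective toGroupAlgebra_ofGroupAlgebra

lemma groupAug_comp_toGroupAlgebra :
    (groupAug k (Fin n → G)).comp (toGroupAlgebra ρ δ n) = GTLaug k G ρ n δ := by
  refine algHom_ext (fun i _ => ?_) fun g j hj => ?_
  · rw [AlgHom.comp_apply, toGroupAlgebra_e, map_zero, aug_e]
  · rw [AlgHom.comp_apply, toGroupAlgebra_t g ⟨j, hj⟩, aug_t, groupAug, MonoidAlgebra.lift_of,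
      MonoidHom.one_apply]

lemma toGroupAlgebra_eq_zero_of_hasRightCup (hδ : IsUnit δ) {x : GTLAlg k G ρ n δ}
    (hx : HasRightCup x) : toGroupAlgebra ρ δ n x = 0 := by
  obtain ⟨m, g, -, hx⟩ := hx
  have h := congr(toGroupAlgebra ρ δ n $hx)
  simp only [labelledHook, reverse_mul, reverse_e, map_mul, toGroupAlgebra_e, zero_mul, mul_zero,
    map_smul] at h
  exact (hδ.smul_eq_zero).1 h.symm

lemma mem_diagramIdeal_of_hasRightCup [Nontrivial k] (hδ : IsUnit δ) {x : GTLAlg k G ρ n δ}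
    (hx : x ∈ monomials ρ δ n) (hx' : HasRightCup x) :
    x ∈ diagramIdeal ρ δ n (rightCupsBelow G (n - 1)) := by
  obtain ⟨d, u, hu, hd⟩ := exists_toDiagrams_eq_single hδ hx
  obtain ⟨m, g, hm, hmul⟩ := hx'
  rw [mem_diagramIdeal (.rightCupsBelow _), hd]
  refine Finsupp.single_mem_supported k u (Set.mem_biUnion (show m < n - 1 by omega) ?_)
  exact Set.mem_iUnion.2 ⟨g, hasEdge_inr_of_mul_reverse_labelledHook hδ hm hmul hu hd⟩

lemma sub_ofGroupAlgebra_mem_diagramIdeal [Nontrivial k] (hδ : IsUnit δ) (x : GTLAlg k G ρ n δ) :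
    x - ofGroupAlgebra ρ δ n (toGroupAlgebra ρ δ n x) ∈
      diagramIdeal ρ δ n (rightCupsBelow G (n - 1)) := by
  have hx : x ∈ Submodule.span k (monomials ρ δ n : Set (GTLAlg k G ρ n δ)) :=
    span_monomials.ge Submodule.mem_top
  induction hx using Submodule.span_induction with
  | mem y hy =>
    obtain ⟨g, rfl⟩ | hy' := mem_mrange_labelHom_or_hasRightCup hδ hy
    · rw [toGroupAlgebra_labelHom, ofGroupAlgebra, MonoidAlgebra.lift_of, sub_self]
      exact zero_mem _
    · rw [toGroupAlgebra_eq_zero_of_hasRightCup hδ hy', map_zero, sub_zero]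
      exact mem_diagramIdeal_of_hasRightCup hδ hy hy'
  | zero => simp only [map_zero, sub_zero, zero_mem]
  | add y z _ _ hy hz => simpa only [map_add, add_sub_add_comm] using add_mem hy hz
  | smul c y _ hy => simpa only [map_smul, smul_sub] using Submodule.smul_of_tower_mem _ c hy

lemma diagramIdeal_rightCupsBelow_le_ker_toGroupAlgebra (hδ : IsUnit δ) :
    diagramIdeal ρ δ n (rightCupsBelow G (n - 1)) ≤ RingHom.ker (toGroupAlgebra ρ δ n) := by
  intro x hx
  refine mem_of_toDiagrams_mem_supported hδ
    (M := LinearMap.ker (toGroupAlgebra ρ δ n).toLinearMap) (fun d hd y hy => ?_)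
    ((mem_diagramIdeal (.rightCupsBelow _)).1 hx)
  simp only [rightCupsBelow, rightCups, Set.mem_iUnion] at hd
  obtain ⟨m, hm, g, hd⟩ := hd
  exact toGroupAlgebra_eq_zero_of_hasRightCup hδ ⟨m, g, by omega,
    toDiagrams_injective hδ (toDiagrams_mul_reverse_labelledHook (by omega) hy hd)⟩

lemma ker_toGroupAlgebra (hδ : IsUnit δ) :
    RingHom.ker (toGroupAlgebra ρ δ n) = diagramIdeal ρ δ n (rightCupsBelow G (n - 1)) := by
  refine le_antisymm (fun x hx => ?_) (diagramIdeal_rightCupsBelow_le_ker_toGroupAlgebra hδ)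
  obtain _ | _ := subsingleton_or_nontrivial k
  · have := Module.subsingleton k (GTLAlg k G ρ n δ)
    exact Subsingleton.elim 0 x ▸ zero_mem _
  · simpa only [RingHom.mem_ker.1 hx, map_zero, sub_zero] using
      sub_ofGroupAlgebra_mem_diagramIdeal hδ x

end GTLAlg

end GroupAlgebra

/-- **Homology of `G`-equivariant Temperley-Lieb algebras** (invertible parameter).
Let `G` be an abelian group, `k` a commutative `G`-ring, `n` a natural number, and
`δ ∈ k` invertible.  Then there is an isomorphism of graded `k`-modules
`Tor_*^{GTL_n(δ)}(𝟙,𝟙) ≅ Tor_*^{k[G^n]}(k,k) = H_*(G^n; k)`. -/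
theorem equivariant_temperley_lieb_homology (k G : Type) [CommRing k] [CommGroup G]
    (ρ : G →* RingAut k) (n : ℕ) (δ : k) (hδ : IsUnit δ) (q : ℕ) :
    Nonempty ((barTor k (GTLAlg k G ρ n δ) (GTLaug k G ρ n δ) q) ≃ₗ[k]
      (groupTor k (Fin n → G) q)) := by
  have := GTLAlg.free (ρ := ρ) (n := n) hδ
  refine nonempty_barTor_equiv GTLAlg.groupAug_comp_toGroupAlgebra
    GTLAlg.toGroupAlgebra_surjective ?_ q
  rw [GTLAlg.ker_toGroupAlgebra hδ]
  exact GTLAlg.torAcyclic_rightCupsBelow hδ (n - 1) le_rfl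
end
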